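/- arXiv:1601.08248 — 2 statements merged into one kernel-verified Lean document; each statement's English description precedes it below -/
import Mathlib

section
/- (Abstract evolution estimate.) If F ∈ W_+^1(ℍ) and Ξ := (ξ,χ) ∈ W_+^2(𝕄₁×𝕄₂), then the problem: find U ∈ TD(ℍ) with U̇ = A_*U + Gξ + F and BU = χ, has a unique solution U ∈ C_+^1(ℍ) ∩ C_+(𝕍), and for all t ≥ 0: ‖U(t)‖_ℍ ≤ C_lift(∫₀^t ‖Ξ(τ)‖_{𝕄₁×𝕄₂} dτ + 2∫₀^t ‖Ξ̇(τ)‖_{𝕄₁×𝕄₂} dτ) + ∫₀^t ‖F(τ)‖_ℍ dτ, and ‖U̇(t)‖_ℍ ≤ C_lift(∫₀^t ‖Ξ̇(τ)‖_{𝕄₁×𝕄₂} dτ + 2∫₀^t ‖Ξ̈(τ)‖_{𝕄₁×𝕄₂} dτ) + ∫₀^t ‖Ḟ(τ)‖_ℍ dτ. -/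
open scoped RealInnerProductSpace

noncomputable section

/-- A function of time is causal when it vanishes for `t ≤ 0`. -/
def Causal {X : Type*} [AddCommGroup X] (f : ℝ → X) : Prop := ∀ t ≤ 0, f t = 0

/-- The Sobolev class `W_+^k(X)` of causal functions of class `C^{k-1}` whose `k`-th
distributional derivative is integrable. -/
def WP {X : Type*} [NormedAddCommGroup X] [NormedSpace ℝ X] (k : ℕ) (f : ℝ → X) : Prop :=
  ContDiff ℝ (k - 1 : ℕ) f ∧ Causal f ∧
    MeasureTheory.Integrable (iteratedDeriv k f) ∧
    ∀ s t : ℝ, iteratedDeriv (k - 1) f t - iteratedDeriv (k - 1) f s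
      = ∫ τ in s..t, iteratedDeriv k f τ

/-- The accumulated quantity `H_k(f,t|X) = ∑_{j=0}^k ∫_0^t ‖f^{(j)}(τ)‖_X dτ`. -/
noncomputable def Hfun {X : Type*} [NormedAddCommGroup X] [NormedSpace ℝ X]
    (k : ℕ) (f : ℝ → X) (t : ℝ) : ℝ :=
  ∑ j ∈ Finset.range (k + 1), ∫ τ in (0:ℝ)..t, ‖iteratedDeriv j f τ‖

/-- The antidifferentiation operator `∂⁻¹ f (t) = ∫_0^t f(τ) dτ` (for causal `f`). -/
noncomputable def aInt {X : Type*} [NormedAddCommGroup X] [NormedSpace ℝ X]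
    (f : ℝ → X) (t : ℝ) : X := ∫ τ in (0:ℝ)..t, f τ

/-- A (strong, causal) solution of the abstract evolution problem
$\dot U = A_⋆ U + Gξ + F$, $BU = χ$, where the Hilbert space $𝕍$ is embedded in $ℍ$
through $J$. -/
def SolvesACP
    {HH VV M1 M2 : Type*}
    [NormedAddCommGroup HH] [InnerProductSpace ℝ HH]
    [NormedAddCommGroup VV] [NormedSpace ℝ VV]
    [NormedAddCommGroup M1] [InnerProductSpace ℝ M1]
    [NormedAddCommGroup M2] [InnerProductSpace ℝ M2]
    (J : VV →L[ℝ] HH) (Astar : VV →L[ℝ] HH) (G : M1 →L[ℝ] HH) (B : VV →L[ℝ] M2)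
    (ξ : ℝ → M1) (χ : ℝ → M2) (F : ℝ → HH) (U : ℝ → VV) : Prop :=
  Causal U ∧ Continuous U ∧ (∀ t : ℝ, B (U t) = χ t) ∧
  ∀ t : ℝ, HasDerivAt (fun τ => J (U τ)) (Astar (U t) + G (ξ t) + F t) t

/-!
Let `L` be the solution operator of the steady-state problem. Then `W = U - LΞ` has homogeneous
boundary data and solves `W' = A W + f` with `f = F + J L (Ξ - Ξ')`, where `A` is the maximal
dissipative restriction of `A_⋆` to `ker B`. Since `⟪A W, J W⟫ ≤ 0`, one has
`d/dt ‖J W‖ ≤ ‖f‖`, which gives uniqueness and the bound for `U`; the same estimate for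
`V = W'`, a mild solution with forcing `f'`, gives the bound for `U'`.

The mild solution `V` is obtained first for `C¹` forcing, as the locally uniform limit of the
solutions with `A` replaced by its Yosida approximations, and then for locally integrable forcing
by density. Finally `W` is recovered from `(J W, A W) = (∫ V, V - f)` because the norm of `𝕍`
is controlled by the graph norm.
-/

open MeasureTheory Filter Set Topology

section Energy

variable {H : Type*} [NormedAddCommGroup H] [InnerProductSpace ℝ H]

theorem norm_le_of_inner_deriv_right_le {u u' : ℝ → H} {Φ φ : ℝ → ℝ} {a b : ℝ}
    (hu : ContinuousOn u (Icc a b)) (hu' : ∀ t ∈ Ico a b, HasDerivWithinAt u (u' t) (Ici t) t)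
    (ha : ‖u a‖ ≤ Φ a) (hΦ : ContinuousOn Φ (Icc a b))
    (hΦ' : ∀ t ∈ Ico a b, HasDerivWithinAt Φ (φ t) (Ici t) t) (hφ : ∀ t ∈ Ico a b, 0 ≤ φ t)
    (bound : ∀ t ∈ Ico a b, ⟪u t, u' t⟫ ≤ φ t * ‖u t‖) ⦃t : ℝ⦄ (ht : t ∈ Icc a b) :
    ‖u t‖ ≤ Φ t := by
  -- Unlike `‖u‖`, the function `√(‖u‖² + η²)` is differentiable where `u` vanishes.
  refine le_of_forall_pos_le_add fun η hη ↦ ?_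
  have hpos s : 0 < ‖u s‖ ^ 2 + η ^ 2 := by positivity
  have norm_le s : ‖u s‖ ≤ √(‖u s‖ ^ 2 + η ^ 2) := Real.le_sqrt_of_sq_le (by nlinarith)
  refine (norm_le t).trans ?_
  refine image_le_of_deriv_right_le_deriv_boundary
    (f := fun s ↦ √(‖u s‖ ^ 2 + η ^ 2)) (B := fun s ↦ Φ s + η)
    (((hu.norm.pow 2).add continuousOn_const).sqrt)
    (fun s hs ↦ ((hu' s hs).norm_sq.add_const (η ^ 2)).sqrt (hpos s).ne')
    ?_ (hΦ.add continuousOn_const) (fun s hs ↦ (hΦ' s hs).add_const η) (fun s hs ↦ ?_) ht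
  · calc √(‖u a‖ ^ 2 + η ^ 2) ≤ ‖u a‖ + η := by
          rw [Real.sqrt_le_left (by positivity)]
          nlinarith [norm_nonneg (u a)]
      _ ≤ Φ a + η := by gcongr
  · rw [mul_div_mul_left _ _ two_ne_zero, div_le_iff₀ (Real.sqrt_pos.2 (hpos s))]
    exact (bound s hs).trans (mul_le_mul_of_nonneg_left (norm_le s) (hφ s hs))

theorem norm_le_add_integral_of_inner_deriv_le {u u' : ℝ → H} {φ : ℝ → ℝ} (hφ : Continuous φ)
    (hφ0 : ∀ t, 0 ≤ φ t) (hu : ∀ t, HasDerivAt u (u' t) t)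
    (bound : ∀ t, ⟪u t, u' t⟫ ≤ φ t * ‖u t‖) {a t : ℝ} (hat : a ≤ t) :
    ‖u t‖ ≤ ‖u a‖ + ∫ τ in a..t, φ τ := by
  have hΦ s : HasDerivAt (fun s ↦ ‖u a‖ + ∫ τ in a..s, φ τ) (φ s) s :=
    (hφ.integral_hasStrictDerivAt a s).hasDerivAt.const_add _
  exact norm_le_of_inner_deriv_right_le
    (fun s _ ↦ (hu s).continuousAt.continuousWithinAt) (fun s _ ↦ (hu s).hasDerivWithinAt)
    (by simp) (fun s _ ↦ (hΦ s).continuousAt.continuousWithinAt)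
    (fun s _ ↦ (hΦ s).hasDerivWithinAt) (fun s _ ↦ hφ0 s) (fun s _ ↦ bound s)
    (right_mem_Icc.2 hat)

end Energy

section Limits

theorem uniformCauchySeqOn_of_dist_le_add {α X : Type*} [PseudoMetricSpace X] {V : ℕ → α → X}
    {s : Set α} {b : ℕ → ℝ} (hb : Tendsto b atTop (𝓝 0))
    (h : ∀ᶠ N in atTop, ∀ m ≥ N, ∀ n ≥ N, ∀ x ∈ s, dist (V m x) (V n x) ≤ b m + b n) :
    UniformCauchySeqOn V atTop s := by
  rw [Metric.uniformCauchySeqOn_iff]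
  intro η hη
  obtain ⟨N, hN, hbN⟩ :=
    (h.and (eventually_forall_ge_atTop.2 (hb.eventually_lt_const (half_pos hη)))).exists
  exact ⟨N, fun m hm n hn x hx ↦
    (hN m hm n hn x hx).trans_lt (by linarith [hbN m hm, hbN n hn])⟩

theorem exists_forall_tendstoUniformlyOn {ι α X : Type*} [UniformSpace X] [CompleteSpace X]
    {V : ℕ → α → X} {s : ι → Set α} (h : ∀ i, UniformCauchySeqOn V atTop (s i)) :
    ∃ W : α → X, ∀ i, TendstoUniformlyOn V W atTop (s i) := by
  have limit (x : α) : ∃ y, ∀ i, x ∈ s i → Tendsto (fun n ↦ V n x) atTop (𝓝 y) := by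
    by_cases hx : ∃ i, x ∈ s i
    · obtain ⟨i, hi⟩ := hx
      obtain ⟨y, hy⟩ := cauchySeq_tendsto_of_complete ((h i).cauchySeq hi)
      exact ⟨y, fun _ _ ↦ hy⟩
    · exact ⟨V 0 x, fun i hi ↦ (hx ⟨i, hi⟩).elim⟩
  choose W hW using limit
  exact ⟨W, fun i ↦ (h i).tendstoUniformlyOn_of_tendsto fun x hx ↦ hW x i hx⟩

end Limits

section Approximation

theorem integral_norm_sub_le_add {E : Type*} [NormedAddCommGroup E] {g h k : ℝ → E} {a b : ℝ}
    (hg : IntervalIntegrable g volume a b) (hh : IntervalIntegrable h volume a b)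
    (hk : IntervalIntegrable k volume a b) (hab : a ≤ b) :
    ∫ τ in a..b, ‖h τ - k τ‖ ≤ (∫ τ in a..b, ‖g τ - h τ‖) + ∫ τ in a..b, ‖g τ - k τ‖ := by
  rw [← intervalIntegral.integral_add (hg.sub hh).norm (hg.sub hk).norm]
  refine intervalIntegral.integral_mono_on hab (hh.sub hk).norm
    ((hg.sub hh).norm.add (hg.sub hk).norm) fun τ _ ↦ ?_
  rw [norm_sub_rev (g τ) (h τ)]
  exact norm_sub_le_norm_sub_add_norm_sub _ _ _

variable {E : Type*} [NormedAddCommGroup E] [NormedSpace ℝ E]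

theorem exists_contDiff_integral_norm_sub_le {g : ℝ → E} {a b : ℝ} (hab : a ≤ b)
    (hg : IntervalIntegrable g volume a b) {η : ℝ} (hη : 0 < η) :
    ∃ h : ℝ → E, ContDiff ℝ 1 h ∧ ∫ τ in a..b, ‖g τ - h τ‖ ≤ η := by
  have hgi : Integrable g (volume.restrict (Ioc a b)) := hg.1
  obtain ⟨h, -, hh, hle⟩ := (memLp_one_iff_integrable.2 hgi).exist_eLpNorm_sub_le
    ENNReal.one_ne_top le_rfl (ε := η) hη
  have hsub : Integrable (g - h) (volume.restrict (Ioc a b)) :=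
    hgi.sub (hh.continuous.intervalIntegrable (μ := volume) a b).1
  refine ⟨h, hh.of_le (by exact_mod_cast le_top), ?_⟩
  rwa [eLpNorm_one_eq_lintegral_enorm, ← ofReal_integral_norm_eq_lintegral_enorm hsub,
    ENNReal.ofReal_le_ofReal_iff hη.le, ← intervalIntegral.integral_of_le hab] at hle

theorem exists_contDiff_tendsto_integral_norm_sub {g : ℝ → E}
    (hg : ∀ a b, IntervalIntegrable g volume a b) :
    ∃ h : ℕ → ℝ → E, (∀ k, ContDiff ℝ 1 (h k)) ∧
      ∀ T, 0 ≤ T → Tendsto (fun k ↦ ∫ τ in (0 : ℝ)..T, ‖g τ - h k τ‖) atTop (𝓝 0) := by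
  choose h hh hle using fun k : ℕ ↦ exists_contDiff_integral_norm_sub_le k.cast_nonneg
    (hg 0 k) (Nat.one_div_pos_of_nat (α := ℝ) (n := k))
  refine ⟨h, hh, fun T hT ↦ squeeze_zero' (Eventually.of_forall fun k ↦
    intervalIntegral.integral_nonneg hT fun _ _ ↦ norm_nonneg _) ?_
    tendsto_one_div_add_atTop_nhds_zero_nat⟩
  filter_upwards [eventually_ge_atTop ⌈T⌉₊] with k hk
  refine (intervalIntegral.integral_mono_interval le_rfl hT (Nat.ceil_le.1 hk)
    (Eventually.of_forall fun _ ↦ norm_nonneg _) ?_).trans (hle k)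
  exact ((hg 0 k).sub ((hh k).continuous.intervalIntegrable 0 k)).norm

theorem tendsto_intervalIntegral_of_tendsto_integral_norm_sub {h : ℕ → ℝ → E} {g : ℝ → E}
    {a b : ℝ} (hab : a ≤ b) (hg : IntervalIntegrable g volume a b)
    (hh : ∀ k, IntervalIntegrable (h k) volume a b)
    (lim : Tendsto (fun k ↦ ∫ τ in a..b, ‖g τ - h k τ‖) atTop (𝓝 0)) :
    Tendsto (fun k ↦ ∫ τ in a..b, h k τ) atTop (𝓝 (∫ τ in a..b, g τ)) := by
  refine tendsto_iff_norm_sub_tendsto_zero.2 (squeeze_zero (fun _ ↦ norm_nonneg _) (fun k ↦ ?_) lim)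
  rw [norm_sub_rev, ← intervalIntegral.integral_sub hg (hh k)]
  exact intervalIntegral.norm_integral_le_integral_norm hab

end Approximation

section LinearODE

variable {E : Type*} [NormedAddCommGroup E] [NormedSpace ℝ E] [CompleteSpace E]

theorem exp_smul_mul_exp_neg_smul (T : E →L[ℝ] E) (t : ℝ) :
    NormedSpace.exp (t • T) * NormedSpace.exp ((-t) • T) = 1 := by
  let _ : NormedAlgebra ℚ (E →L[ℝ] E) := NormedAlgebra.restrictScalars ℚ ℝ _
  rw [← NormedSpace.exp_add_of_commute (((Commute.refl T).smul_left t).smul_right (-t)),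
    ← add_smul, add_neg_cancel, zero_smul, NormedSpace.exp_zero]

theorem exists_hasDerivAt_clm_apply_add (T : E →L[ℝ] E) {g : ℝ → E} (hg : Continuous g) (x₀ : E) :
    ∃ X : ℝ → E, X 0 = x₀ ∧ ∀ t, HasDerivAt X (T (X t) + g t) t := by
  have hexp (t : ℝ) : HasDerivAt (fun s : ℝ ↦ NormedSpace.exp (s • T))
      (T * NormedSpace.exp (t • T)) t := hasDerivAt_exp_smul_const' T t
  have hcont : Continuous fun s : ℝ ↦ NormedSpace.exp ((-s) • T) (g s) :=
    ((continuous_iff_continuousAt.2 fun t ↦ (hexp t).continuousAt).comp continuous_neg).clm_apply hg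
  refine ⟨fun t ↦ NormedSpace.exp (t • T)
    (x₀ + ∫ s in (0 : ℝ)..t, NormedSpace.exp ((-s) • T) (g s)), by simp, fun t ↦ ?_⟩
  refine ((hexp t).clm_apply
    ((hcont.integral_hasStrictDerivAt 0 t).hasDerivAt.const_add x₀)).congr_deriv ?_
  congr 1
  rw [← mul_apply_eq_comp, exp_smul_mul_exp_neg_smul, one_apply_eq_self]

end LinearODE

section DissipativeRelation

variable {H : Type*} [NormedAddCommGroup H] [InnerProductSpace ℝ H]

/-- Dissipativity of a linear operator in a Hilbert space, for an operator given by its graph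
`Γ = {(x, A x)}`; no single-valuedness is imposed. -/
def IsDissipative (Γ : Submodule ℝ (H × H)) : Prop := ∀ p ∈ Γ, ⟪p.2, p.1⟫ ≤ 0

/-- Maximal dissipativity of a linear operator `A` given by its graph `Γ`: it is dissipative and
`1 - A` is onto. -/
structure IsMaximalDissipative (Γ : Submodule ℝ (H × H)) : Prop where
  isDissipative : IsDissipative Γ
  exists_sub_eq : ∀ f, ∃ p ∈ Γ, p.1 - p.2 = f

/-- The bounded operator `T` is the Yosida approximation `A (1 - ε A)⁻¹` of the operator `A` with
graph `Γ`: writing `x = z - ε A z`, this says `T x = A z`. -/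
def IsYosidaApprox (Γ : Submodule ℝ (H × H)) (ε : ℝ) (T : H →L[ℝ] H) : Prop :=
  ∀ x, (x + ε • T x, T x) ∈ Γ

variable {Γ : Submodule ℝ (H × H)}

theorem IsDissipative.norm_fst_le (hΓ : IsDissipative Γ) {p : H × H} (hp : p ∈ Γ) :
    ‖p.1‖ ≤ ‖p.1 - p.2‖ := by
  have key : ‖p.1‖ * ‖p.1‖ ≤ ‖p.1 - p.2‖ * ‖p.1‖ :=
    calc ‖p.1‖ * ‖p.1‖ = ⟪p.1 - p.2, p.1⟫ + ⟪p.2, p.1⟫ := by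
          rw [inner_sub_left, real_inner_self_eq_norm_mul_norm]; ring
      _ ≤ ‖p.1 - p.2‖ * ‖p.1‖ := by linarith [hΓ p hp, real_inner_le_norm (p.1 - p.2) p.1]
  by_contra! h
  exact key.not_gt (mul_lt_mul_of_pos_right h ((norm_nonneg _).trans_lt h))

theorem IsDissipative.fst_eq_of_sub_eq (hΓ : IsDissipative Γ) {p q : H × H} (hp : p ∈ Γ)
    (hq : q ∈ Γ) (h : p.1 - p.2 = q.1 - q.2) : p.1 = q.1 := by
  have hle := hΓ.norm_fst_le (Γ.sub_mem hp hq)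
  rw [Prod.fst_sub, Prod.snd_sub, sub_sub_sub_comm, h, sub_self, norm_zero] at hle
  exact sub_eq_zero.1 (norm_le_zero_iff.1 hle)

theorem IsMaximalDissipative.exists_resolvent (hΓ : IsMaximalDissipative Γ) :
    ∃ R : H →L[ℝ] H, ∀ x, (R x, R x - x) ∈ Γ := by
  choose p hp hpx using hΓ.exists_sub_eq
  let R : H →ₗ[ℝ] H :=
    { toFun x := (p x).1
      map_add' x y := hΓ.isDissipative.fst_eq_of_sub_eq (hp _) (Γ.add_mem (hp x) (hp y)) <| by
        rw [hpx, Prod.fst_add, Prod.snd_add, add_sub_add_comm, hpx, hpx]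
      map_smul' c x := hΓ.isDissipative.fst_eq_of_sub_eq (hp _) (Γ.smul_mem c (hp x)) <| by
        rw [hpx, Prod.smul_fst, Prod.smul_snd, ← smul_sub, hpx] }
  refine ⟨R.mkContinuous 1 fun x ↦ ?_, fun x ↦ ?_⟩
  · have hle := hΓ.isDissipative.norm_fst_le (hp x)
    rwa [hpx, ← one_mul ‖x‖] at hle
  · have hsnd : (p x).1 - x = (p x).2 := by rw [sub_eq_iff_eq_add', ← sub_eq_iff_eq_add, hpx]
    change ((p x).1, (p x).1 - x) ∈ Γ
    rw [hsnd]
    exact hp x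

theorem IsMaximalDissipative.isClosed (hΓ : IsMaximalDissipative Γ) :
    IsClosed (Γ : Set (H × H)) := by
  obtain ⟨R, hR⟩ := hΓ.exists_resolvent
  have hΓR : (Γ : Set (H × H)) = {p | R (p.1 - p.2) = p.1} := by
    ext p
    refine ⟨fun hp ↦ hΓ.isDissipative.fst_eq_of_sub_eq (hR _) hp (sub_sub_cancel _ _),
      fun hp ↦ ?_⟩
    have hmem := hR (p.1 - p.2)
    rwa [show R (p.1 - p.2) = p.1 from hp, sub_sub_cancel] at hmem
  rw [hΓR]
  exact isClosed_eq (by fun_prop) continuous_fst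

theorem IsMaximalDissipative.exists_isYosidaApprox [CompleteSpace H]
    (hΓ : IsMaximalDissipative Γ) {ε : ℝ} (hε : 0 < ε) (hε1 : ε ≤ 1) :
    ∃ T : H →L[ℝ] H, IsYosidaApprox Γ ε T := by
  obtain ⟨R, hR⟩ := hΓ.exists_resolvent
  -- `S = (1 - ε A) R` is coercive, hence invertible, and `A (1 - ε A)⁻¹ = (A R) S⁻¹`.
  let S : H →L[ℝ] H := (1 - ε) • R + ε • ContinuousLinearMap.id ℝ H
  have inner_R_nonneg (y : H) : 0 ≤ ⟪R y, y⟫ := by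
    have h := hΓ.isDissipative _ (hR y)
    rw [inner_sub_left, real_inner_comm (R y) y] at h
    linarith [real_inner_self_nonneg (x := R y)]
  have hS : IsCoercive ((innerSL ℝ).comp S) := ⟨ε, hε, fun y ↦ by
    simp only [S, ContinuousLinearMap.comp_apply, add_apply, smul_apply,
      ContinuousLinearMap.id_apply, innerSL_apply_apply, inner_add_left, real_inner_smul_left,
      real_inner_self_eq_norm_mul_norm, mul_assoc]
    exact le_add_of_nonneg_left (mul_nonneg (sub_nonneg.2 hε1) (inner_R_nonneg y))⟩
  let e : H ≃L[ℝ] H := hS.continuousLinearEquivOfBilin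
  have he (y : H) : e y = S y := by
    refine ext_inner_right ℝ fun w ↦ ?_
    exact hS.continuousLinearEquivOfBilin_apply y w
  refine ⟨(R - ContinuousLinearMap.id ℝ H).comp (e.symm : H →L[ℝ] H), fun x ↦ ?_⟩
  obtain ⟨y, rfl⟩ := e.surjective x
  have hy : e y + ε • (R y - y) = R y := by
    rw [he]
    simp only [S, add_apply, smul_apply, ContinuousLinearMap.id_apply]
    module
  simpa [hy] using hR y

theorem IsYosidaApprox.inner_nonpos {ε : ℝ} {T : H →L[ℝ] H} (hT : IsYosidaApprox Γ ε T)
    (hΓ : IsDissipative Γ) (hε : 0 ≤ ε) (x : H) : ⟪T x, x⟫ ≤ 0 := by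
  have h := hΓ _ (hT x)
  simp only [inner_add_right, real_inner_smul_right] at h
  linarith [mul_nonneg hε (real_inner_self_nonneg (x := T x))]

theorem IsYosidaApprox.inner_sub_le {ε δ C : ℝ} {T S : H →L[ℝ] H} (hT : IsYosidaApprox Γ ε T)
    (hS : IsYosidaApprox Γ δ S) (hΓ : IsDissipative Γ) (hε : 0 ≤ ε) (hδ : 0 ≤ δ) {x y : H}
    (hx : ‖T x‖ ≤ C) (hy : ‖S y‖ ≤ C) : ⟪x - y, T x - S y⟫ ≤ (ε + δ) * C ^ 2 := by
  have h := hΓ _ (Γ.sub_mem (hT x) (hS y))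
  have hTS : ⟪T x, S y⟫ ≤ C ^ 2 := (real_inner_le_norm _ _).trans <| by
    rw [sq]; exact mul_le_mul hx hy (norm_nonneg _) ((norm_nonneg _).trans hx)
  have expand : ⟪x - y, T x - S y⟫ = ⟪T x - S y, (x + ε • T x) - (y + δ • S y)⟫
      - ε * ⟪T x, T x⟫ - δ * ⟪S y, S y⟫ + (ε + δ) * ⟪T x, S y⟫ := by
    rw [real_inner_comm]
    simp only [inner_sub_left, inner_sub_right, inner_add_right, real_inner_smul_right,
      real_inner_comm (T x) (S y)]
    ring
  calc ⟪x - y, T x - S y⟫ ≤ (ε + δ) * ⟪T x, S y⟫ := by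
        rw [expand]
        have : ⟪T x - S y, (x + ε • T x) - (y + δ • S y)⟫ ≤ 0 := h
        linarith [mul_nonneg hε (real_inner_self_nonneg (x := T x)),
          mul_nonneg hδ (real_inner_self_nonneg (x := S y))]
    _ ≤ (ε + δ) * C ^ 2 := by gcongr

end DissipativeRelation

section Regularized

variable {H : Type*} [NormedAddCommGroup H] [InnerProductSpace ℝ H] {T S : H →L[ℝ] H}
  {g u v : ℝ → H} {t : ℝ}

theorem norm_le_add_integral_norm_of_dissipative (hT : ∀ x, ⟪T x, x⟫ ≤ 0) (hg : Continuous g)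
    (hu : ∀ t, HasDerivAt u (T (u t) + g t) t) (ht : 0 ≤ t) :
    ‖u t‖ ≤ ‖u 0‖ + ∫ τ in (0 : ℝ)..t, ‖g τ‖ := by
  refine norm_le_add_integral_of_inner_deriv_le hg.norm (fun _ ↦ norm_nonneg _) hu (fun s ↦ ?_) ht
  rw [inner_add_right, real_inner_comm, mul_comm]
  linarith [hT (u s), real_inner_le_norm (u s) (g s)]

theorem norm_clm_apply_le_of_dissipative (hT : ∀ x, ⟪T x, x⟫ ≤ 0) (hg : ContDiff ℝ 1 g)
    (hu0 : u 0 = 0) (hu : ∀ t, HasDerivAt u (T (u t) + g t) t) (ht : 0 ≤ t) :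
    ‖T (u t)‖ ≤ ‖g 0‖ + (∫ τ in (0 : ℝ)..t, ‖deriv g τ‖) + ‖g t‖ := by
  -- The derivative `u' = T u + g` solves the equation with forcing `g'`.
  have hu' (s : ℝ) : HasDerivAt (fun s ↦ T (u s) + g s) (T (T (u s) + g s) + deriv g s) s :=
    (T.hasFDerivAt.comp_hasDerivAt s (hu s)).add (hg.differentiable one_ne_zero s).hasDerivAt
  have h := norm_le_add_integral_norm_of_dissipative hT (hg.continuous_deriv le_rfl) hu' ht
  rw [hu0, map_zero, zero_add] at h
  calc ‖T (u t)‖ = ‖(T (u t) + g t) - g t‖ := by rw [add_sub_cancel_right]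
    _ ≤ ‖T (u t) + g t‖ + ‖g t‖ := norm_sub_le _ _
    _ ≤ _ := by gcongr

theorem eq_clm_integral_add_integral [CompleteSpace H] (hg : Continuous g) (hu0 : u 0 = 0)
    (hu : ∀ t, HasDerivAt u (T (u t) + g t) t) (t : ℝ) :
    u t = T (∫ τ in (0 : ℝ)..t, u τ) + ∫ τ in (0 : ℝ)..t, g τ := by
  have huc : Continuous u := continuous_iff_continuousAt.2 fun s ↦ (hu s).continuousAt
  have hTu : Continuous fun s ↦ T (u s) := T.continuous.comp huc
  have ftc := intervalIntegral.integral_eq_sub_of_hasDerivAt (fun s _ ↦ hu s)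
    ((hTu.add hg).intervalIntegrable 0 t)
  rw [hu0, sub_zero] at ftc
  rw [← ftc, intervalIntegral.integral_add (hTu.intervalIntegrable 0 t) (hg.intervalIntegrable 0 t),
    T.intervalIntegral_comp_comm (huc.intervalIntegrable 0 t)]

variable {Γ : Submodule ℝ (H × H)}

theorem IsYosidaApprox.norm_sub_sq_le {ε δ C a : ℝ} (hT : IsYosidaApprox Γ ε T)
    (hS : IsYosidaApprox Γ δ S) (hΓ : IsDissipative Γ) (hε : 0 ≤ ε) (hδ : 0 ≤ δ)
    (hu0 : u 0 = 0) (hv0 : v 0 = 0) (hu : ∀ t, HasDerivAt u (T (u t) + g t) t)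
    (hv : ∀ t, HasDerivAt v (S (v t) + g t) t) (hTu : ∀ t ∈ Icc 0 a, ‖T (u t)‖ ≤ C)
    (hSv : ∀ t ∈ Icc 0 a, ‖S (v t)‖ ≤ C) (ht : t ∈ Icc 0 a) :
    ‖u t - v t‖ ^ 2 ≤ 2 * ((ε + δ) * C ^ 2) * t := by
  have hsub (s : ℝ) : HasDerivAt (fun s ↦ u s - v s) (T (u s) - S (v s)) s :=
    ((hu s).sub (hv s)).congr_deriv (add_sub_add_right_eq_sub _ _ _)
  refine image_le_of_deriv_right_le_deriv_boundary (f := fun s ↦ ‖u s - v s‖ ^ 2)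
    (fun s _ ↦ (hsub s).norm_sq.continuousAt.continuousWithinAt)
    (fun s _ ↦ (hsub s).norm_sq.hasDerivWithinAt) (by simp [hu0, hv0])
    (by fun_prop) (fun s _ ↦ ((hasDerivAt_id s).const_mul _).hasDerivWithinAt) (fun s hs ↦ ?_) ht
  have hs' := Ico_subset_Icc_self hs
  rw [mul_one]
  gcongr
  exact hT.inner_sub_le hS hΓ hε hδ (hTu s hs') (hSv s hs')

theorem uniformCauchySeqOn_of_isYosidaApprox (hΓ : IsDissipative Γ) {ε : ℕ → ℝ}
    (hε : Tendsto ε atTop (𝓝 0)) (hε0 : ∀ n, 0 ≤ ε n) {T : ℕ → H →L[ℝ] H}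
    (hT : ∀ n, IsYosidaApprox Γ (ε n) (T n)) (hg : ContDiff ℝ 1 g) {V : ℕ → ℝ → H}
    (hV0 : ∀ n, V n 0 = 0) (hV : ∀ n t, HasDerivAt (V n) (T n (V n t) + g t) t) (a : ℝ) :
    UniformCauchySeqOn V atTop (Icc 0 a) := by
  have hcont : Continuous fun t ↦ ‖g 0‖ + (∫ τ in (0 : ℝ)..t, ‖deriv g τ‖) + ‖g t‖ :=
    (continuous_const.add (intervalIntegral.continuous_primitive
      (fun _ _ ↦ (hg.continuous_deriv le_rfl).norm.intervalIntegrable _ _) 0)).add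
      hg.continuous.norm
  obtain ⟨C, hC⟩ := isCompact_Icc.exists_bound_of_continuousOn (s := Icc 0 a) hcont.continuousOn
  have hTV n t (ht : t ∈ Icc 0 a) : ‖T n (V n t)‖ ≤ C :=
    (norm_clm_apply_le_of_dissipative ((hT n).inner_nonpos hΓ (hε0 n)) hg (hV0 n) (hV n)
      ht.1).trans ((Real.le_norm_self _).trans (hC t ht))
  refine uniformCauchySeqOn_of_dist_le_add (b := fun n ↦ √(2 * C ^ 2 * a * ε n)) ?_
    (Eventually.of_forall fun _ m _ n _ t ht ↦ ?_)
  · simpa using (hε.const_mul (2 * C ^ 2 * a)).sqrt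
  · have ha : 0 ≤ a := ht.1.trans ht.2
    have hsq (k : ℕ) : √(2 * C ^ 2 * a * ε k) ^ 2 = 2 * C ^ 2 * a * ε k :=
      Real.sq_sqrt (mul_nonneg (by positivity) (hε0 k))
    rw [dist_eq_norm]
    refine (pow_le_pow_iff_left₀ (norm_nonneg _) (by positivity) two_ne_zero).1 ?_
    calc ‖V m t - V n t‖ ^ 2 ≤ 2 * ((ε m + ε n) * C ^ 2) * t :=
          (hT m).norm_sub_sq_le (hT n) hΓ (hε0 m) (hε0 n) (hV0 m) (hV0 n) (hV m) (hV n)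
            (hTV m) (hTV n) ht
      _ ≤ 2 * ((ε m + ε n) * C ^ 2) * a :=
          mul_le_mul_of_nonneg_left ht.2
            (mul_nonneg two_pos.le (mul_nonneg (add_nonneg (hε0 m) (hε0 n)) (sq_nonneg C)))
      _ = √(2 * C ^ 2 * a * ε m) ^ 2 + √(2 * C ^ 2 * a * ε n) ^ 2 := by rw [hsq, hsq]; ring
      _ ≤ (√(2 * C ^ 2 * a * ε m) + √(2 * C ^ 2 * a * ε n)) ^ 2 :=
          pow_add_pow_le (Real.sqrt_nonneg _) (Real.sqrt_nonneg _) two_ne_zero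

end Regularized

section MildSolution

variable {H : Type*} [NormedAddCommGroup H] [InnerProductSpace ℝ H] {Γ : Submodule ℝ (H × H)}

/-- Mild solutions on `[0, ∞)` of `V' = A V + f'`, `V 0 = f 0`, for the operator `A` with graph `Γ`:
the integrated equation `V = A (∫ V) + f` holds, which makes sense for any continuous `f`. -/
def IsMildSolution (Γ : Submodule ℝ (H × H)) (f V : ℝ → H) : Prop :=
  ContinuousOn V (Ici 0) ∧ ∀ t, 0 ≤ t → (∫ τ in (0 : ℝ)..t, V τ, V t - f t) ∈ Γ

theorem IsMildSolution.intervalIntegrable {f V : ℝ → H} (hV : IsMildSolution Γ f V) {t : ℝ}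
    (ht : 0 ≤ t) : IntervalIntegrable V volume 0 t :=
  (hV.1.mono Icc_subset_Ici_self).intervalIntegrable_of_Icc ht

theorem IsMildSolution.sub {f₁ f₂ V₁ V₂ : ℝ → H} (h₁ : IsMildSolution Γ f₁ V₁)
    (h₂ : IsMildSolution Γ f₂ V₂) : IsMildSolution Γ (f₁ - f₂) (V₁ - V₂) := by
  refine ⟨h₁.1.sub h₂.1, fun t ht ↦ ?_⟩
  have h := Γ.sub_mem (h₁.2 t ht) (h₂.2 t ht)
  rwa [Prod.mk_sub_mk, sub_sub_sub_comm, ← intervalIntegral.integral_sub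
    (h₁.intervalIntegrable ht) (h₂.intervalIntegrable ht)] at h

theorem IsMildSolution.eq_zero [CompleteSpace H] (hΓ : IsDissipative Γ) {f V : ℝ → H}
    (hV : IsMildSolution Γ f V) (hf : ∀ t, 0 ≤ t → f t = 0) {t : ℝ} (ht : 0 ≤ t) : V t = 0 := by
  have hcont s (hs : 0 ≤ s) : ContinuousOn (fun s ↦ ∫ τ in (0 : ℝ)..s, V τ) (Icc 0 s) := by
    rw [← uIcc_of_le hs]
    exact intervalIntegral.continuousOn_primitive_interval
      ((hV.1.mono ((uIcc_of_le hs).trans_subset Icc_subset_Ici_self)).integrableOn_uIcc)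
  have hderiv s (hs : 0 ≤ s) :
      HasDerivWithinAt (fun s ↦ ∫ τ in (0 : ℝ)..s, V τ) (V s) (Ici s) s :=
    intervalIntegral.integral_hasDerivWithinAt_right (hV.intervalIntegrable hs)
      (hV.1.stronglyMeasurableAtFilter_nhdsWithin measurableSet_Ici s
        |>.filter_mono (nhdsWithin_mono s (Ioi_subset_Ici hs)))
      ((hV.1 s hs).mono (Ioi_subset_Ici hs))
  -- `W = ∫ V` satisfies `W' = A W`, so dissipativity forces `W = 0`.
  have hzero s (hs : 0 ≤ s) : ∫ τ in (0 : ℝ)..s, V τ = 0 := by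
    refine norm_le_zero_iff.1 (norm_le_of_inner_deriv_right_le (Φ := 0) (φ := 0) (hcont s hs)
      (fun r hr ↦ hderiv r hr.1) (by simp) continuousOn_const
      (fun r _ ↦ hasDerivWithinAt_const r _ 0) (fun _ _ ↦ le_rfl) (fun r hr ↦ ?_)
      (right_mem_Icc.2 hs))
    have h := hΓ _ (hV.2 r hr.1)
    rw [hf r hr.1, sub_zero, real_inner_comm] at h
    simpa only [Pi.zero_apply, zero_mul] using h
  refine (uniqueDiffWithinAt_Ici t).eq_deriv _ (hderiv t ht) ?_
  exact (hasDerivWithinAt_const t (Ici t) (0 : H)).congr (fun s hs ↦ hzero s (ht.trans hs))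
    (hzero t ht)

theorem isMildSolution_of_tendstoUniformlyOn (hΓ : IsClosed (Γ : Set (H × H)))
    {V f e : ℕ → ℝ → H} {W φ : ℝ → H} (hV : ∀ n, ContinuousOn (V n) (Ici 0))
    (hVW : ∀ a, TendstoUniformlyOn V W atTop (Icc 0 a))
    (hf : ∀ t, 0 ≤ t → Tendsto (fun n ↦ f n t) atTop (𝓝 (φ t)))
    (he : ∀ t, 0 ≤ t → Tendsto (fun n ↦ e n t) atTop (𝓝 0))
    (mem : ∀ n t, 0 ≤ t → ((∫ τ in (0 : ℝ)..t, V n τ) + e n t, V n t - f n t) ∈ Γ) :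
    IsMildSolution Γ φ W := by
  refine ⟨fun t ht ↦ ?_, fun t ht ↦ ?_⟩
  · have hW : ContinuousOn W (Icc 0 (t + 1)) := (hVW (t + 1)).continuousOn
      (Frequently.of_forall fun n ↦ (hV n).mono Icc_subset_Ici_self)
    refine (hW t ⟨ht, by linarith⟩).mono_of_mem_nhdsWithin ?_
    rw [← Ici_inter_Iic]
    exact inter_mem self_mem_nhdsWithin (mem_nhdsWithin_of_mem_nhds (Iic_mem_nhds (lt_add_one t)))
  · have hVt : Tendsto (fun n ↦ V n t) atTop (𝓝 (W t)) :=
      (hVW t).tendsto_at (right_mem_Icc.2 ht)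
    have hint : Tendsto (fun n ↦ ∫ τ in (0 : ℝ)..t, V n τ) atTop (𝓝 (∫ τ in (0 : ℝ)..t, W τ)) := by
      refine TendstoUniformlyOn.tendsto_intervalIntegral_of_continuousOn ?_ ?_
      · exact Eventually.of_forall fun n ↦
          (hV n).mono ((uIcc_of_le ht).trans_subset Icc_subset_Ici_self)
      · rw [uIcc_of_le ht]
        exact hVW t
    rw [← add_zero (∫ τ in (0 : ℝ)..t, W τ)]
    exact hΓ.mem_of_tendsto ((hint.add (he t ht)).prodMk_nhds (hVt.sub (hf t ht)))
      (Eventually.of_forall fun n ↦ mem n t ht)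

theorem IsMaximalDissipative.exists_isMildSolution_of_contDiff [CompleteSpace H]
    (hΓ : IsMaximalDissipative Γ) {g : ℝ → H} (hg : ContDiff ℝ 1 g) :
    ∃ V, IsMildSolution Γ (fun t ↦ ∫ τ in (0 : ℝ)..t, g τ) V ∧
      ∀ t, 0 ≤ t → ‖V t‖ ≤ ∫ τ in (0 : ℝ)..t, ‖g τ‖ := by
  let ε : ℕ → ℝ := fun n ↦ 1 / (n + 1)
  have hε : Tendsto ε atTop (𝓝 0) := tendsto_one_div_add_atTop_nhds_zero_nat
  have hε0 n : 0 < ε n := Nat.one_div_pos_of_nat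
  have hε1 n : ε n ≤ 1 := (div_le_one₀ (by positivity)).2 (by simp)
  choose T hT using fun n ↦ hΓ.exists_isYosidaApprox (hε0 n) (hε1 n)
  choose V hV0 hV using fun n ↦ exists_hasDerivAt_clm_apply_add (T n) hg.continuous 0
  obtain ⟨W, hW⟩ := exists_forall_tendstoUniformlyOn (uniformCauchySeqOn_of_isYosidaApprox
    hΓ.isDissipative hε (fun n ↦ (hε0 n).le) hT hg hV0 hV)
  have hVW t (ht : 0 ≤ t) : Tendsto (fun n ↦ V n t) atTop (𝓝 (W t)) :=
    (hW t).tendsto_at (right_mem_Icc.2 ht)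
  refine ⟨W, isMildSolution_of_tendstoUniformlyOn hΓ.isClosed
    (f := fun _ t ↦ ∫ τ in (0 : ℝ)..t, g τ) (e := fun n t ↦ ε n • (V n t - ∫ τ in (0 : ℝ)..t, g τ))
    (fun n t _ ↦ (hV n t).continuousAt.continuousWithinAt) hW (fun _ _ ↦ tendsto_const_nhds)
    (fun t ht ↦ ?_) (fun n t _ ↦ ?_), fun t ht ↦ ?_⟩
  · simpa only [zero_smul] using hε.smul ((hVW t ht).sub_const _)
  · have hTn : T n (∫ τ in (0 : ℝ)..t, V n τ) = V n t - ∫ τ in (0 : ℝ)..t, g τ :=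
      eq_sub_of_add_eq (eq_clm_integral_add_integral hg.continuous (hV0 n) (hV n) t).symm
    simpa only [hTn] using hT n (∫ τ in (0 : ℝ)..t, V n τ)
  · refine le_of_tendsto (hVW t ht).norm (Eventually.of_forall fun n ↦ ?_)
    simpa only [hV0, norm_zero, zero_add] using norm_le_add_integral_norm_of_dissipative
      ((hT n).inner_nonpos hΓ.isDissipative (hε0 n).le) hg.continuous (hV n) ht

theorem IsMildSolution.norm_le_integral_norm [CompleteSpace H] (hΓ : IsMaximalDissipative Γ)
    {f g V : ℝ → H} (hV : IsMildSolution Γ f V) (hg : ContDiff ℝ 1 g)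
    (hf : ∀ t, 0 ≤ t → f t = ∫ τ in (0 : ℝ)..t, g τ) {t : ℝ} (ht : 0 ≤ t) :
    ‖V t‖ ≤ ∫ τ in (0 : ℝ)..t, ‖g τ‖ := by
  obtain ⟨W, hW, hWle⟩ := hΓ.exists_isMildSolution_of_contDiff hg
  have hVW : (V - W) t = 0 := (hV.sub hW).eq_zero hΓ.isDissipative
    (fun s hs ↦ sub_eq_zero.2 (hf s hs)) ht
  rw [sub_eq_zero.1 hVW]
  exact hWle t ht

theorem IsMaximalDissipative.exists_isMildSolution [CompleteSpace H]
    (hΓ : IsMaximalDissipative Γ) {g : ℝ → H} (hg : ∀ a b, IntervalIntegrable g volume a b) :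
    ∃ V, IsMildSolution Γ (fun t ↦ ∫ τ in (0 : ℝ)..t, g τ) V ∧
      ∀ t, 0 ≤ t → ‖V t‖ ≤ ∫ τ in (0 : ℝ)..t, ‖g τ‖ := by
  obtain ⟨h, hh, hgh⟩ := exists_contDiff_tendsto_integral_norm_sub hg
  have hhi k a b : IntervalIntegrable (h k) volume a b := (hh k).continuous.intervalIntegrable a b
  choose V hV hVle using fun k ↦ hΓ.exists_isMildSolution_of_contDiff (hh k)
  have hVV m n t (ht : 0 ≤ t) : ‖V m t - V n t‖ ≤
      (∫ τ in (0 : ℝ)..t, ‖g τ - h m τ‖) + ∫ τ in (0 : ℝ)..t, ‖g τ - h n τ‖ :=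
    (((hV m).sub (hV n)).norm_le_integral_norm hΓ ((hh m).sub (hh n)) (fun s _ ↦
      (intervalIntegral.integral_sub (hhi m 0 s) (hhi n 0 s)).symm) ht).trans
      (integral_norm_sub_le_add (hg 0 t) (hhi m 0 t) (hhi n 0 t) ht)
  have mono k t a (ht : 0 ≤ t) (hta : t ≤ a) :
      ∫ τ in (0 : ℝ)..t, ‖g τ - h k τ‖ ≤ ∫ τ in (0 : ℝ)..a, ‖g τ - h k τ‖ :=
    intervalIntegral.integral_mono_interval le_rfl ht hta
      (Eventually.of_forall fun _ ↦ norm_nonneg _) ((hg 0 a).sub (hhi k 0 a)).norm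
  have cauchy a : UniformCauchySeqOn V atTop (Icc 0 a) := by
    refine uniformCauchySeqOn_of_dist_le_add (hgh |a| (abs_nonneg a))
      (Eventually.of_forall fun _ m _ n _ t ht ↦ ?_)
    have hta : t ≤ |a| := ht.2.trans (le_abs_self a)
    rw [dist_eq_norm]
    exact (hVV m n t ht.1).trans (add_le_add (mono m t |a| ht.1 hta) (mono n t |a| ht.1 hta))
  obtain ⟨W, hW⟩ := exists_forall_tendstoUniformlyOn cauchy
  refine ⟨W, isMildSolution_of_tendstoUniformlyOn hΓ.isClosed (e := 0) (fun k ↦ (hV k).1) hW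
    (fun t ht ↦ tendsto_intervalIntegral_of_tendsto_integral_norm_sub ht (hg 0 t)
      (fun k ↦ hhi k 0 t) (hgh t ht))
    (fun _ _ ↦ tendsto_const_nhds) (fun k t ht ↦ by simpa using (hV k).2 t ht), fun t ht ↦ ?_⟩
  have hlim : Tendsto (fun k ↦ (∫ τ in (0 : ℝ)..t, ‖g τ - h k τ‖) + ∫ τ in (0 : ℝ)..t, ‖g τ‖)
      atTop (𝓝 (∫ τ in (0 : ℝ)..t, ‖g τ‖)) := by
    simpa only [zero_add] using (hgh t ht).add_const (∫ τ in (0 : ℝ)..t, ‖g τ‖)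
  refine le_of_tendsto_of_tendsto' ((hW t).tendsto_at (right_mem_Icc.2 ht)).norm hlim
    fun k ↦ (hVle k t ht).trans ?_
  simpa using integral_norm_sub_le_add (hg 0 t) (hhi k 0 t) (intervalIntegrable_const (c := 0)) ht

end MildSolution

section CausalData

variable {E E' : Type*} [NormedAddCommGroup E] [NormedSpace ℝ E] [NormedAddCommGroup E']
  [NormedSpace ℝ E'] {f g f₁ g₁ f₂ g₂ : ℝ → E}

protected theorem Causal.iteratedDeriv {k : ℕ} (hf : Causal f) (hfk : ContDiff ℝ k f) :
    Causal (iteratedDeriv k f) := by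
  have hneg : ∀ t ∈ Iio (0 : ℝ), iteratedDeriv k f t = 0 := fun t ht ↦ by
    have hft : f =ᶠ[𝓝 t] fun _ ↦ 0 := by
      filter_upwards [Iio_mem_nhds ht] with s hs using hf s (le_of_lt hs)
    rw [hft.iteratedDeriv_eq, iteratedDeriv_fun_const_zero]
  have hcl : IsClosed {t | iteratedDeriv k f t = 0} :=
    isClosed_eq (hfk.continuous_iteratedDeriv' k) continuous_const
  intro t ht
  exact closure_minimal hneg hcl (closure_Iio (0 : ℝ) ▸ ht)

/-- `f` is causal and absolutely continuous, with locally integrable derivative `g`. -/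
structure HasCausalWeakDeriv (f g : ℝ → E) : Prop where
  causal : Causal f
  intervalIntegrable : ∀ a b, IntervalIntegrable g volume a b
  eq_integral : ∀ t, f t = ∫ τ in (0 : ℝ)..t, g τ

namespace HasCausalWeakDeriv

theorem continuous (h : HasCausalWeakDeriv f g) : Continuous f := by
  rw [funext h.eq_integral]
  exact intervalIntegral.continuous_primitive h.intervalIntegrable 0

theorem norm_le (h : HasCausalWeakDeriv f g) {t : ℝ} (ht : 0 ≤ t) :
    ‖f t‖ ≤ ∫ τ in (0 : ℝ)..t, ‖g τ‖ := by
  rw [h.eq_integral]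
  exact intervalIntegral.norm_integral_le_integral_norm ht

theorem add (h₁ : HasCausalWeakDeriv f₁ g₁) (h₂ : HasCausalWeakDeriv f₂ g₂) :
    HasCausalWeakDeriv (f₁ + f₂) (g₁ + g₂) where
  causal t ht := by rw [Pi.add_apply, h₁.causal t ht, h₂.causal t ht, add_zero]
  intervalIntegrable a b := (h₁.intervalIntegrable a b).add (h₂.intervalIntegrable a b)
  eq_integral t := by
    rw [Pi.add_apply, h₁.eq_integral, h₂.eq_integral, ← intervalIntegral.integral_add
      (h₁.intervalIntegrable 0 t) (h₂.intervalIntegrable 0 t)]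
    rfl

theorem sub (h₁ : HasCausalWeakDeriv f₁ g₁) (h₂ : HasCausalWeakDeriv f₂ g₂) :
    HasCausalWeakDeriv (f₁ - f₂) (g₁ - g₂) where
  causal t ht := by rw [Pi.sub_apply, h₁.causal t ht, h₂.causal t ht, sub_zero]
  intervalIntegrable a b := (h₁.intervalIntegrable a b).sub (h₂.intervalIntegrable a b)
  eq_integral t := by
    rw [Pi.sub_apply, h₁.eq_integral, h₂.eq_integral, ← intervalIntegral.integral_sub
      (h₁.intervalIntegrable 0 t) (h₂.intervalIntegrable 0 t)]
    rfl

theorem clm_comp [CompleteSpace E] [CompleteSpace E'] (h : HasCausalWeakDeriv f g)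
    (K : E →L[ℝ] E') : HasCausalWeakDeriv (K ∘ f) (K ∘ g) where
  causal t ht := by rw [Function.comp_apply, h.causal t ht, map_zero]
  intervalIntegrable a b := ⟨K.integrable_comp (h.intervalIntegrable a b).1,
    K.integrable_comp (h.intervalIntegrable a b).2⟩
  eq_integral t := by
    rw [Function.comp_apply, h.eq_integral,
      ← K.intervalIntegral_comp_comm (h.intervalIntegrable 0 t)]
    rfl

end HasCausalWeakDeriv

theorem Causal.hasCausalWeakDeriv_deriv [CompleteSpace E] (hf : Causal f) (hf1 : ContDiff ℝ 1 f) :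
    HasCausalWeakDeriv f (deriv f) where
  causal := hf
  intervalIntegrable := (hf1.continuous_deriv le_rfl).intervalIntegrable
  eq_integral t := by
    rw [intervalIntegral.integral_deriv_eq_sub (fun s _ ↦ hf1.differentiable one_ne_zero s)
      ((hf1.continuous_deriv le_rfl).intervalIntegrable 0 t), hf 0 le_rfl, sub_zero]

theorem WP.hasCausalWeakDeriv_iteratedDeriv {k : ℕ} (hf : WP (k + 1) f) :
    HasCausalWeakDeriv (iteratedDeriv k f) (iteratedDeriv (k + 1) f) := by
  obtain ⟨hfk, hf0, hint, hftc⟩ := hf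
  have hcausal : Causal (iteratedDeriv k f) := hf0.iteratedDeriv hfk
  refine ⟨hcausal, fun a b ↦ hint.intervalIntegrable, fun t ↦ ?_⟩
  rw [← hftc, Nat.add_sub_cancel, hcausal 0 le_rfl, sub_zero]

theorem HasCausalWeakDeriv.integral_add_norm_le [CompleteSpace E] [CompleteSpace E']
    {φ : ℝ → E'} {C t : ℝ} (h : HasCausalWeakDeriv f g) {K : E →L[ℝ] E'} (hK : ∀ x, ‖K x‖ ≤ C * ‖x‖)
    (hφ : IntervalIntegrable φ volume 0 t) (ht : 0 ≤ t) :
    (∫ τ in (0 : ℝ)..t, ‖φ τ + K (f τ - g τ)‖) + ‖K (f t)‖ ≤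
      C * ((∫ τ in (0 : ℝ)..t, ‖f τ‖) + 2 * ∫ τ in (0 : ℝ)..t, ‖g τ‖)
        + ∫ τ in (0 : ℝ)..t, ‖φ τ‖ := by
  have hf : IntervalIntegrable (fun τ ↦ C * ‖f τ‖) volume 0 t :=
    (h.continuous.intervalIntegrable 0 t).norm.const_mul C
  have hg : IntervalIntegrable (fun τ ↦ C * ‖g τ‖) volume 0 t :=
    (h.intervalIntegrable 0 t).norm.const_mul C
  have hKfg : IntervalIntegrable (fun τ ↦ K (f τ - g τ)) volume 0 t := by
    have hfg := (h.continuous.intervalIntegrable 0 t).sub (h.intervalIntegrable 0 t)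
    exact ⟨K.integrable_comp hfg.1, K.integrable_comp hfg.2⟩
  have forcing_le : ∫ τ in (0 : ℝ)..t, ‖φ τ + K (f τ - g τ)‖ ≤
      ∫ τ in (0 : ℝ)..t, (‖φ τ‖ + (C * ‖f τ‖ + C * ‖g τ‖)) := by
    refine intervalIntegral.integral_mono_on ht (hφ.add hKfg).norm (hφ.norm.add (hf.add hg))
      fun τ _ ↦ (norm_add_le _ _).trans ?_
    rw [map_sub]
    gcongr
    exact (norm_sub_le _ _).trans (add_le_add (hK _) (hK _))
  have norm_le : ‖K (f t)‖ ≤ ∫ τ in (0 : ℝ)..t, C * ‖g τ‖ :=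
    ((h.clm_comp K).norm_le ht).trans (intervalIntegral.integral_mono_on ht
      ((h.clm_comp K).intervalIntegrable 0 t).norm hg fun τ _ ↦ hK _)
  rw [intervalIntegral.integral_add hφ.norm (hf.add hg), intervalIntegral.integral_add hf hg,
    intervalIntegral.integral_const_mul, intervalIntegral.integral_const_mul] at forcing_le
  rw [intervalIntegral.integral_const_mul] at norm_le
  linarith

end CausalData

section WholeLine

variable {H : Type*} [NormedAddCommGroup H] [InnerProductSpace ℝ H] [CompleteSpace H]

theorem IsMaximalDissipative.exists_causal_mild {Γ : Submodule ℝ (H × H)}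
    (hΓ : IsMaximalDissipative Γ) {f g : ℝ → H} (hfg : HasCausalWeakDeriv f g) :
    ∃ V, Continuous V ∧ (∀ t, (∫ τ in (0 : ℝ)..t, V τ, V t - f t) ∈ Γ) ∧ Causal V ∧
      ∀ t, 0 ≤ t → ‖V t‖ ≤ ∫ τ in (0 : ℝ)..t, ‖g τ‖ := by
  obtain ⟨V, hV, hVle⟩ := hΓ.exists_isMildSolution hfg.intervalIntegrable
  have hV0 : V 0 = 0 := norm_le_zero_iff.1 (by simpa using hVle 0 le_rfl)
  have hcausal : Causal fun t ↦ V (max t 0) := fun t ht ↦ by simp only [max_eq_right ht, hV0]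
  refine ⟨fun t ↦ V (max t 0), hV.1.comp_continuous (by fun_prop) fun t ↦ le_max_right t 0,
    fun t ↦ ?_, hcausal, fun t ht ↦ by simpa only [max_eq_left ht] using hVle t ht⟩
  rcases le_total t 0 with ht | ht
  · have hint : ∫ τ in (0 : ℝ)..t, V (max τ 0) = 0 :=
      intervalIntegral.integral_zero_ae (Eventually.of_forall fun τ hτ ↦
        hcausal τ (hτ.2.trans_eq (max_eq_left ht)))
    rw [hint, hcausal t ht, hfg.causal t ht, sub_zero]
    exact Γ.zero_mem
  · have hint : ∫ τ in (0 : ℝ)..t, V (max τ 0) = ∫ τ in (0 : ℝ)..t, V τ :=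
      intervalIntegral.integral_congr fun τ hτ ↦ by
        rw [uIcc_of_le ht] at hτ
        simp only [max_eq_left hτ.1]
    rw [hint, hfg.eq_integral]
    simpa only [max_eq_left ht] using hV.2 t ht

end WholeLine

section BoundaryProblem

variable {HH VV M1 M2 : Type*} [NormedAddCommGroup HH] [InnerProductSpace ℝ HH]
  [NormedAddCommGroup VV] [NormedSpace ℝ VV]

section Graph

variable [NormedAddCommGroup M2] [NormedSpace ℝ M2] {J A : VV →L[ℝ] HH} {B : VV →L[ℝ] M2}

/-- The graph of the restriction of `A` to `ker B`, as a subspace of `HH × HH`, where `VV` is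
mapped into `HH` by `J`. -/
def homogeneousGraph (J A : VV →L[ℝ] HH) (B : VV →L[ℝ] M2) : Submodule ℝ (HH × HH) :=
  (LinearMap.ker (B : VV →ₗ[ℝ] M2)).map (J.prod A : VV →ₗ[ℝ] HH × HH)

theorem mem_homogeneousGraph {x y : HH} :
    (x, y) ∈ homogeneousGraph J A B ↔ ∃ v, B v = 0 ∧ J v = x ∧ A v = y := by
  simp [homogeneousGraph]

theorem isDissipative_homogeneousGraph (hdiss : ∀ v, B v = 0 → ⟪A v, J v⟫ ≤ 0) :
    IsDissipative (homogeneousGraph J A B) := by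
  rintro ⟨x, y⟩ h
  obtain ⟨v, hv, rfl, rfl⟩ := mem_homogeneousGraph.1 h
  exact hdiss v hv

theorem isMaximalDissipative_homogeneousGraph (hdiss : ∀ v, B v = 0 → ⟪A v, J v⟫ ≤ 0)
    (hmax : ∀ f, ∃ v, B v = 0 ∧ J v - A v = f) :
    IsMaximalDissipative (homogeneousGraph J A B) where
  isDissipative := isDissipative_homogeneousGraph hdiss
  exists_sub_eq f := by
    obtain ⟨v, hv, hvf⟩ := hmax f
    exact ⟨(J v, A v), mem_homogeneousGraph.2 ⟨v, hv, rfl, rfl⟩, hvf⟩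

theorem exists_antilipschitzWith_prod {c : ℝ} (hc : 0 < c)
    (hgraph : ∀ v, c * ‖v‖ ≤ ‖J v‖ + ‖A v‖) : ∃ K, AntilipschitzWith K (J.prod A) := by
  refine ⟨(2 / c).toNNReal, AddMonoidHomClass.antilipschitz_of_bound _ fun v ↦ ?_⟩
  rw [Real.coe_toNNReal _ (by positivity), div_mul_eq_mul_div, le_div_iff₀ hc, mul_comm, two_mul]
  exact (hgraph v).trans (add_le_add (norm_fst_le (J.prod A v)) (norm_snd_le (J.prod A v)))

end Graph

variable [NormedAddCommGroup M1] [InnerProductSpace ℝ M1] [NormedAddCommGroup M2]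
  [InnerProductSpace ℝ M2] {J A : VV →L[ℝ] HH} {G : M1 →L[ℝ] HH} {B : VV →L[ℝ] M2}

theorem eq_of_steadyState (hdiss : ∀ v, B v = 0 → ⟪A v, J v⟫ ≤ 0)
    (hinj : Function.Injective (J.prod A)) {v w : VV} (hB : B v = B w)
    (h : J v - A v = J w - A w) : v = w := by
  have hmem : (J (v - w), A (v - w)) ∈ homogeneousGraph J A B :=
    mem_homogeneousGraph.2 ⟨v - w, by rw [map_sub, hB, sub_self], rfl, rfl⟩
  have hJA : J (v - w) = A (v - w) := by
    rw [← sub_eq_zero, map_sub, map_sub, sub_sub_sub_comm, h, sub_self]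
  have hle := (isDissipative_homogeneousGraph hdiss).norm_fst_le hmem
  rw [← hJA, sub_self, norm_zero, norm_le_zero_iff, map_sub, sub_eq_zero] at hle
  refine hinj (Prod.ext hle ?_)
  rw [map_sub, map_sub, hle, sub_self, eq_comm, sub_eq_zero] at hJA
  exact hJA

theorem exists_lifting {C : ℝ} {K : NNReal} (hdiss : ∀ v, B v = 0 → ⟪A v, J v⟫ ≤ 0)
    (hJA : AntilipschitzWith K (J.prod A))
    (hlift : ∀ (x : M1) (y : M2), ∃ v, J v - A v = G x ∧ B v = y ∧ ‖J v‖ ≤ C * ‖(x, y)‖) :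
    ∃ L : M1 × M2 →L[ℝ] VV,
      ∀ p, J (L p) - A (L p) = G p.1 ∧ B (L p) = p.2 ∧ ‖J (L p)‖ ≤ C * ‖p‖ := by
  choose ℓ hG hB hC using fun p : M1 × M2 ↦ hlift p.1 p.2
  let L : M1 × M2 →ₗ[ℝ] VV :=
    { toFun := ℓ
      map_add' p q := eq_of_steadyState hdiss hJA.injective
        (by simp only [map_add, hB, Prod.snd_add])
        (by rw [hG, map_add, map_add, add_sub_add_comm, hG, hG, Prod.fst_add, map_add])
      map_smul' r p := eq_of_steadyState hdiss hJA.injective (by simp [hB])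
        (by rw [hG, map_smul, map_smul, ← smul_sub, RingHom.id_apply, hG, Prod.smul_fst,
          map_smul]) }
  have bound p : ‖L p‖ ≤ K * (C + ‖G‖) * ‖p‖ := by
    have hA : A (ℓ p) = J (ℓ p) - G p.1 := by rw [← hG, sub_sub_cancel]
    have hGp : ‖G p.1‖ ≤ ‖G‖ * ‖p‖ := G.le_opNorm_of_le (norm_fst_le p)
    rw [mul_assoc, add_mul]
    refine ((J.prod A).bound_of_antilipschitz hJA (ℓ p)).trans ?_
    gcongr
    refine max_le ((hC p).trans (le_add_of_nonneg_right ((norm_nonneg _).trans hGp))) ?_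
    change ‖A (ℓ p)‖ ≤ _
    rw [hA]
    exact (norm_sub_le _ _).trans (add_le_add (hC p) hGp)
  exact ⟨L.mkContinuous _ bound, fun p ↦ ⟨hG p, hB p, hC p⟩⟩

namespace SolvesACP

variable {ξ ξ₁ ξ₂ : ℝ → M1} {χ χ₁ χ₂ : ℝ → M2} {F F₁ F₂ : ℝ → HH} {U U₁ U₂ : ℝ → VV}

theorem add (h₁ : SolvesACP J A G B ξ₁ χ₁ F₁ U₁) (h₂ : SolvesACP J A G B ξ₂ χ₂ F₂ U₂) :
    SolvesACP J A G B (ξ₁ + ξ₂) (χ₁ + χ₂) (F₁ + F₂) (U₁ + U₂) := by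
  obtain ⟨hc₁, hU₁, hB₁, hd₁⟩ := h₁
  obtain ⟨hc₂, hU₂, hB₂, hd₂⟩ := h₂
  refine ⟨fun t ht ↦ by rw [Pi.add_apply, hc₁ t ht, hc₂ t ht, add_zero], hU₁.add hU₂,
    fun t ↦ by simp only [Pi.add_apply, map_add, hB₁, hB₂], fun t ↦ ?_⟩
  convert (hd₁ t).add (hd₂ t) using 1
  · ext τ; simp only [Pi.add_apply, map_add]
  · simp only [Pi.add_apply, map_add]; abel

theorem sub (h₁ : SolvesACP J A G B ξ₁ χ₁ F₁ U₁) (h₂ : SolvesACP J A G B ξ₂ χ₂ F₂ U₂) :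
    SolvesACP J A G B (ξ₁ - ξ₂) (χ₁ - χ₂) (F₁ - F₂) (U₁ - U₂) := by
  obtain ⟨hc₁, hU₁, hB₁, hd₁⟩ := h₁
  obtain ⟨hc₂, hU₂, hB₂, hd₂⟩ := h₂
  refine ⟨fun t ht ↦ by rw [Pi.sub_apply, hc₁ t ht, hc₂ t ht, sub_zero], hU₁.sub hU₂,
    fun t ↦ by simp only [Pi.sub_apply, map_sub, hB₁, hB₂], fun t ↦ ?_⟩
  convert (hd₁ t).sub (hd₂ t) using 1
  · ext τ; simp only [Pi.sub_apply, map_sub]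
  · simp only [Pi.sub_apply, map_sub]; abel

theorem norm_le_integral_norm (hdiss : ∀ v, B v = 0 → ⟪A v, J v⟫ ≤ 0)
    (h : SolvesACP J A G B ξ 0 F U) (hF : Continuous fun t ↦ G (ξ t) + F t) {t : ℝ} (ht : 0 ≤ t) :
    ‖J (U t)‖ ≤ ∫ τ in (0 : ℝ)..t, ‖G (ξ τ) + F τ‖ := by
  obtain ⟨hc, -, hB, hd⟩ := h
  have energy := norm_le_add_integral_of_inner_deriv_le hF.norm (fun _ ↦ norm_nonneg _) hd
    (fun s ↦ ?_) ht
  · simpa only [hc 0 le_rfl, map_zero, norm_zero, zero_add] using energy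
  · rw [add_assoc, inner_add_right, real_inner_comm, mul_comm]
    linarith [hdiss (U s) (hB s), real_inner_le_norm (J (U s)) (G (ξ s) + F s)]

theorem unique (hdiss : ∀ v, B v = 0 → ⟪A v, J v⟫ ≤ 0) (hinj : Function.Injective (J.prod A))
    (h₁ : SolvesACP J A G B ξ χ F U₁) (h₂ : SolvesACP J A G B ξ χ F U₂) : U₁ = U₂ := by
  have hD := h₁.sub h₂
  rw [sub_self, sub_self, sub_self] at hD
  have hJ (t : ℝ) : J ((U₁ - U₂) t) = 0 := by
    rcases le_total t 0 with ht | ht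
    · rw [hD.1 t ht, map_zero]
    · refine norm_le_zero_iff.1 ((hD.norm_le_integral_norm hdiss ?_ ht).trans_eq ?_) <;>
        simp [continuous_const]
  have hA (t : ℝ) : A ((U₁ - U₂) t) = 0 := by
    have hderiv := hD.2.2.2 t
    simp only [hJ, Pi.zero_apply, map_zero, add_zero] at hderiv
    exact hderiv.unique (hasDerivAt_const t 0)
  funext t
  refine sub_eq_zero.1 (hinj (Prod.ext ?_ ?_))
  · simpa using hJ t
  · simpa using hA t

end SolvesACP

theorem solvesACP_lifting {L : M1 × M2 →L[ℝ] VV} {Ξ Ξ' : ℝ → M1 × M2}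
    (hG : ∀ p, J (L p) - A (L p) = G p.1) (hB : ∀ p, B (L p) = p.2) (hΞ : Causal Ξ)
    (hderiv : ∀ t, HasDerivAt Ξ (Ξ' t) t) :
    SolvesACP J A G B (fun t ↦ (Ξ t).1) (fun t ↦ (Ξ t).2) (fun t ↦ J (L (Ξ' t - Ξ t)))
      fun t ↦ L (Ξ t) := by
  have hΞc : Continuous Ξ := continuous_iff_continuousAt.2 fun t ↦ (hderiv t).continuousAt
  refine ⟨fun t ht ↦ by simp only [hΞ t ht, map_zero], L.continuous.comp hΞc, fun t ↦ hB _,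
    fun t ↦ ?_⟩
  refine ((J.comp L).hasFDerivAt.comp_hasDerivAt t (hderiv t)).congr_deriv ?_
  simp only [← hG, map_sub, add_sub_cancel, ContinuousLinearMap.comp_apply]

theorem SolvesACP.add_lifting {L : M1 × M2 →L[ℝ] VV} {Ξ Ξ' : ℝ → M1 × M2} {F : ℝ → HH}
    {W : ℝ → VV}
    (hW : SolvesACP J A G B 0 0 (F + J.comp L ∘ (Ξ - Ξ')) W)
    (hG : ∀ p, J (L p) - A (L p) = G p.1) (hB : ∀ p, B (L p) = p.2) (hΞ : Causal Ξ)
    (hderiv : ∀ t, HasDerivAt Ξ (Ξ' t) t) :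
    SolvesACP J A G B (fun t ↦ (Ξ t).1) (fun t ↦ (Ξ t).2) F (W + L ∘ Ξ) := by
  convert hW.add (solvesACP_lifting hG hB hΞ hderiv) using 1
  · exact (zero_add _).symm
  · exact (zero_add _).symm
  · ext t
    simp only [Pi.add_apply, Function.comp_apply, Pi.sub_apply, ContinuousLinearMap.comp_apply,
      map_sub]
    abel
  · rfl

theorem exists_solvesACP_homogeneous [CompleteSpace HH] {K : NNReal}
    (hΓ : IsMaximalDissipative (homogeneousGraph J A B)) (hJA : AntilipschitzWith K (J.prod A))
    {f g : ℝ → HH} (hfg : HasCausalWeakDeriv f g) :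
    ∃ W, SolvesACP J A G B 0 0 f W ∧ ∀ t, 0 ≤ t → ‖A (W t) + f t‖ ≤ ∫ τ in (0 : ℝ)..t, ‖g τ‖ := by
  obtain ⟨V, hVc, hV, hV0, hVle⟩ := hΓ.exists_causal_mild hfg
  choose W hBW hJW hAW using fun t ↦ mem_homogeneousGraph.1 (hV t)
  have hAf (t : ℝ) : A (W t) + f t = V t := by rw [hAW, sub_add_cancel]
  have hderiv (t : ℝ) : HasDerivAt (fun τ ↦ ∫ s in (0 : ℝ)..τ, V s) (V t) t :=
    (hVc.integral_hasStrictDerivAt 0 t).hasDerivAt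
  have hJAW : (J.prod A) ∘ W = fun t ↦ (∫ s in (0 : ℝ)..t, V s, V t - f t) :=
    funext fun t ↦ Prod.ext (hJW t) (hAW t)
  refine ⟨W, ⟨fun t ht ↦ hJA.injective ?_, ?_, hBW, fun t ↦ ?_⟩, fun t ht ↦ hAf t ▸ hVle t ht⟩
  · have hint : ∫ s in (0 : ℝ)..t, V s = 0 := intervalIntegral.integral_zero_ae
      (Eventually.of_forall fun s hs ↦ hV0 s (hs.2.trans_eq (max_eq_left ht)))
    rw [map_zero, ← Function.comp_apply (f := J.prod A), hJAW]
    simp only [hint, hV0 t ht, hfg.causal t ht, sub_zero, Prod.mk_zero_zero]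
  · rw [(hJA.isUniformInducing (J.prod A).uniformContinuous).isInducing.continuous_iff, hJAW]
    exact (continuous_iff_continuousAt.2 fun t ↦ (hderiv t).continuousAt).prodMk
      (hVc.sub hfg.continuous)
  · simp only [hJW, Pi.zero_apply, map_zero, add_zero, hAf]
    exact hderiv t

end BoundaryProblem

theorem abstract_evolution_estimate_general
    {HH VV M1 M2 : Type*}
    [NormedAddCommGroup HH] [InnerProductSpace ℝ HH] [CompleteSpace HH]
    [NormedAddCommGroup VV] [NormedSpace ℝ VV]
    [NormedAddCommGroup M1] [InnerProductSpace ℝ M1] [CompleteSpace M1]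
    [NormedAddCommGroup M2] [InnerProductSpace ℝ M2] [CompleteSpace M2]
    {J Astar : VV →L[ℝ] HH} {G : M1 →L[ℝ] HH} {B : VV →L[ℝ] M2}
    {c : ℝ} (hc : 0 < c) (hgraph : ∀ v, c * ‖v‖ ≤ ‖J v‖ + ‖Astar v‖)
    (hdiss : ∀ v, B v = 0 → ⟪Astar v, J v⟫ ≤ 0) (hmax : ∀ f, ∃ v, B v = 0 ∧ J v - Astar v = f)
    {C : ℝ} (hlift : ∀ (x : M1) (y : M2), ∃ v,
      J v - Astar v = G x ∧ B v = y ∧ ‖J v‖ ≤ C * ‖(x, y)‖)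
    {F : ℝ → HH} {ξ : ℝ → M1} {χ : ℝ → M2} (hF : WP 1 F) (hΞ : WP 2 fun t ↦ (ξ t, χ t)) :
    ∃ U : ℝ → VV, SolvesACP J Astar G B ξ χ F U ∧
      (∀ V : ℝ → VV, SolvesACP J Astar G B ξ χ F V → V = U) ∧
      ∀ t : ℝ, 0 ≤ t →
        ‖J (U t)‖
            ≤ C * ((∫ τ in (0 : ℝ)..t, ‖(ξ τ, χ τ)‖)
                + 2 * ∫ τ in (0 : ℝ)..t, ‖deriv (fun σ ↦ (ξ σ, χ σ)) τ‖)
              + ∫ τ in (0 : ℝ)..t, ‖F τ‖ ∧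
        ‖Astar (U t) + G (ξ t) + F t‖
            ≤ C * ((∫ τ in (0 : ℝ)..t, ‖deriv (fun σ ↦ (ξ σ, χ σ)) τ‖)
                + 2 * ∫ τ in (0 : ℝ)..t, ‖iteratedDeriv 2 (fun σ ↦ (ξ σ, χ σ)) τ‖)
              + ∫ τ in (0 : ℝ)..t, ‖deriv F τ‖ := by
  obtain ⟨K, hJA⟩ := exists_antilipschitzWith_prod hc hgraph
  obtain ⟨L, hL⟩ := exists_lifting hdiss hJA hlift
  set Ξ : ℝ → M1 × M2 := fun t ↦ (ξ t, χ t)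
  have hF' : HasCausalWeakDeriv F (deriv F) := by simpa using hF.hasCausalWeakDeriv_iteratedDeriv
  have hΞ₁ : ContDiff ℝ 1 Ξ := hΞ.1
  have hΞ' : HasCausalWeakDeriv Ξ (deriv Ξ) := hΞ.2.1.hasCausalWeakDeriv_deriv hΞ₁
  have hΞ'' : HasCausalWeakDeriv (deriv Ξ) (iteratedDeriv 2 Ξ) := by
    simpa using hΞ.hasCausalWeakDeriv_iteratedDeriv
  have hf := hF'.add ((hΞ'.sub hΞ'').clm_comp (J.comp L))
  obtain ⟨W, hW, hWle⟩ := exists_solvesACP_homogeneous (G := G)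
    (isMaximalDissipative_homogeneousGraph hdiss hmax) hJA hf
  have hU : SolvesACP J Astar G B ξ χ F (W + L ∘ Ξ) :=
    hW.add_lifting (fun p ↦ (hL p).1) (fun p ↦ (hL p).2.1) hΞ.2.1
      fun t ↦ (hΞ₁.differentiable one_ne_zero t).hasDerivAt
  refine ⟨_, hU, fun V hV ↦ hV.unique hdiss hJA.injective hU, fun t ht ↦ ⟨?_, ?_⟩⟩
  · have energy := hW.norm_le_integral_norm hdiss (t := t)
    simp only [Pi.zero_apply, map_zero, zero_add] at energy
    rw [Pi.add_apply, map_add]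
    exact (norm_add_le_of_le (energy hf.continuous ht) le_rfl).trans
      (hΞ'.integral_add_norm_le (K := J.comp L) (fun p ↦ (hL p).2.2)
        (hF'.continuous.intervalIntegrable 0 t) ht)
  · have hderiv : Astar (W t + L (Ξ t)) + G (ξ t) + F t =
        (Astar (W t) + (F + J.comp L ∘ (Ξ - deriv Ξ)) t) + J.comp L (deriv Ξ t) := by
      rw [← (hL (Ξ t)).1]
      simp only [map_add, Pi.add_apply, Function.comp_apply, Pi.sub_apply, map_sub,
        ContinuousLinearMap.comp_apply]
      abel
    rw [Pi.add_apply, Function.comp_apply, hderiv]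
    exact (norm_add_le_of_le (hWle t ht) le_rfl).trans
      (hΞ''.integral_add_norm_le (K := J.comp L) (fun p ↦ (hL p).2.2)
        (hF'.intervalIntegrable 0 t) ht)

/-- Abstract evolution estimate (Theorem 3.1 of the paper, following
Hassell–Qiu–Sánchez-Vizuet–Sayas): under maximal dissipativity and the lifting hypothesis,
the problem $\dot U = A_⋆ U + G ξ + F$, $BU = χ$ with data
$F ∈ W_+^1(ℍ)$ and $Ξ = (ξ,χ) ∈ W_+^2(𝕄_1×𝕄_2)$ has a unique solution
$U ∈ C_+^1(ℍ) ∩ C_+(𝕍)$, satisfying the two energy estimates. -/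
theorem abstract_evolution_estimate
    {HH VV M1 M2 : Type*}
    [NormedAddCommGroup HH] [InnerProductSpace ℝ HH] [CompleteSpace HH]
    [NormedAddCommGroup VV] [NormedSpace ℝ VV] [CompleteSpace VV]
    [NormedAddCommGroup M1] [InnerProductSpace ℝ M1] [CompleteSpace M1]
    [NormedAddCommGroup M2] [InnerProductSpace ℝ M2] [CompleteSpace M2]
    (J : VV →L[ℝ] HH) (Astar : VV →L[ℝ] HH) (G : M1 →L[ℝ] HH) (B : VV →L[ℝ] M2)
    -- 𝕍 ⊂ ℍ with continuous dense embedding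
    (hJinj : Function.Injective J) (hJdense : DenseRange J)
    -- the graph norm of A_⋆ is equivalent to the norm of 𝕍
    (cg1 cg2 : ℝ) (hcg1 : 0 < cg1) (hcg2 : 0 < cg2)
    (hgraph : ∀ v : VV, cg1 * ‖v‖ ≤ ‖J v‖ + ‖Astar v‖ ∧ ‖J v‖ + ‖Astar v‖ ≤ cg2 * ‖v‖)
    -- ±A (A = A_⋆ restricted to Ker B) are maximal dissipative
    (hdiss : ∀ v : VV, B v = 0 → ⟪Astar v, J v⟫ = 0)
    (hmax₁ : ∀ f : HH, ∃ v : VV, B v = 0 ∧ J v - Astar v = f)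
    (hmax₂ : ∀ f : HH, ∃ v : VV, B v = 0 ∧ J v + Astar v = f)
    -- lifting hypothesis for the steady-state problem, with constant C_lift
    (Clift : ℝ) (hClift : 0 < Clift)
    (hlift : ∀ (ξ0 : M1) (χ0 : M2), ∃ v : VV,
      (J v - Astar v = G ξ0 ∧ B v = χ0) ∧
      ∀ v' : VV, J v' - Astar v' = G ξ0 ∧ B v' = χ0 → v' = v)
    (hliftbound : ∀ (ξ0 : M1) (χ0 : M2) (v : VV),
      J v - Astar v = G ξ0 ∧ B v = χ0 → ‖J v‖ + ‖v‖ ≤ Clift * ‖(ξ0, χ0)‖)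
    -- data
    (F : ℝ → HH) (ξ : ℝ → M1) (χ : ℝ → M2)
    (hF : WP 1 F) (hΞ : WP 2 (fun t => (ξ t, χ t))) :
    ∃ U : ℝ → VV,
      SolvesACP J Astar G B ξ χ F U ∧
      (∀ V : ℝ → VV, SolvesACP J Astar G B ξ χ F V → V = U) ∧
      ∀ t : ℝ, 0 ≤ t →
        ‖J (U t)‖
            ≤ Clift * ((∫ τ in (0:ℝ)..t, ‖(ξ τ, χ τ)‖)
                + 2 * ∫ τ in (0:ℝ)..t, ‖deriv (fun σ => (ξ σ, χ σ)) τ‖)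
              + ∫ τ in (0:ℝ)..t, ‖F τ‖ ∧
        ‖Astar (U t) + G (ξ t) + F t‖
            ≤ Clift * ((∫ τ in (0:ℝ)..t, ‖deriv (fun σ => (ξ σ, χ σ)) τ‖)
                + 2 * ∫ τ in (0:ℝ)..t, ‖iteratedDeriv 2 (fun σ => (ξ σ, χ σ)) τ‖)
              + ∫ τ in (0:ℝ)..t, ‖deriv F τ‖ := by
  exact abstract_evolution_estimate_general hcg1 (fun v ↦ (hgraph v).1)
    (fun v hv ↦ (hdiss v hv).le) hmax₁ (fun ξ0 χ0 ↦ (hlift ξ0 χ0).imp fun v hv ↦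
      ⟨hv.1.1, hv.1.2, (le_add_of_nonneg_right (norm_nonneg v)).trans
        (hliftbound ξ0 χ0 v hv.1)⟩) hF hΞ
end
end

section
/- (Fully discrete energy-norm estimate.) Suppose β₀ ∈ W_+^6(H^{1/2}(Γ)) and β₁ ∈ W_+^5(H^{-1/2}(Γ)). Let (u^h,u^⋆) solve the semidiscrete problem (2.10) and (u_k^h,u_k^⋆) its trapezoidal-rule time discretization (4.3), with errors e_k^h := u^h − u_k^h, e_k^⋆ := u^⋆ − u_k^⋆ and hatted quantities ê_k^h := α_k e_k^h, f̂_k^h := ∂_k e_k^h, ê_k^⋆ := α_k e_k^⋆, f̂_k^⋆ := ∂_k e_k^⋆. Then for all t ≥ 0: ‖f̂_k^h(t)‖_{Ω_-} + ‖κ∇ê_k^h(t)‖_{Ω_-} + ‖f̂_k^⋆(t)‖_{ℝ^d∖Γ} + ‖∇ê_k^⋆(t)‖_{ℝ^d∖Γ} ≤ C k² t (H₃(β₀⁽³⁾,t|H^{1/2}(Γ)) + H₂(β₁⁽³⁾,t|H^{-1/2}(Γ))), with C independent of t, k, and the discrete spaces. -/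
open scoped RealInnerProductSpace

noncomputable section

/-- The averaging operator `α_k g (t) = (g t + g (t-k))/2`. -/
def amean {X : Type*} [AddCommGroup X] [Module ℝ X] (k : ℝ) (f : ℝ → X) (t : ℝ) : X :=
  (2⁻¹ : ℝ) • (f t + f (t - k))

/-- The differencing operator `∂_k g (t) = (g t - g (t-k))/k`. -/
def dquot {X : Type*} [AddCommGroup X] [Module ℝ X] (k : ℝ) (f : ℝ → X) (t : ℝ) : X :=
  (k⁻¹ : ℝ) • (f t - f (t - k))

/-- A (strong, causal) solution of the exotic transmission problem (2.10).  The exterior field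
`u^⋆` is represented together with the `H(div)` realization `wst` of its gradient, so that
`Δu^⋆(t) = ∇·wst t` and `∂_ν^± u^⋆(t) = γ_ν^± (wst t)`. -/
def Solves210
    {L2Ω L2Ωv L2s L2sv Hp Hm H1Ω H1s Hdiv : Type*}
    [NormedAddCommGroup L2Ω] [InnerProductSpace ℝ L2Ω]
    [NormedAddCommGroup L2Ωv] [InnerProductSpace ℝ L2Ωv]
    [NormedAddCommGroup L2s] [InnerProductSpace ℝ L2s]
    [NormedAddCommGroup L2sv] [InnerProductSpace ℝ L2sv]
    [NormedAddCommGroup Hp] [InnerProductSpace ℝ Hp]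
    [NormedAddCommGroup Hm] [InnerProductSpace ℝ Hm]
    [NormedAddCommGroup H1Ω] [NormedSpace ℝ H1Ω]
    [NormedAddCommGroup H1s] [NormedSpace ℝ H1s]
    [NormedAddCommGroup Hdiv] [NormedSpace ℝ Hdiv]
    (ι : H1Ω →L[ℝ] L2Ω) (grad : H1Ω →L[ℝ] L2Ωv) (γ : H1Ω →L[ℝ] Hp)
    (ιs : H1s →L[ℝ] L2s) (grads : H1s →L[ℝ] L2sv) (γm γp : H1s →L[ℝ] Hp)
    (ιdiv : Hdiv →L[ℝ] L2sv) (divs : Hdiv →L[ℝ] L2s) (γνm γνp : Hdiv →L[ℝ] Hm)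
    (dpair : Hm →L[ℝ] Hp →L[ℝ] ℝ)
    (cinv2 : L2Ω →L[ℝ] L2Ω) (kap : L2Ωv →L[ℝ] L2Ωv)
    (Uh : Submodule ℝ H1Ω) (Xh : Submodule ℝ Hm) (Yh : Submodule ℝ Hp)
    (β0 : ℝ → Hp) (β1 : ℝ → Hm)
    (uh : ℝ → H1Ω) (us : ℝ → H1s) (wst : ℝ → Hdiv) : Prop :=
  (∀ t : ℝ, uh t ∈ Uh) ∧ Causal uh ∧ Causal us ∧ Causal wst ∧
  ContDiff ℝ 2 (fun τ => ι (uh τ)) ∧ ContDiff ℝ 2 (fun τ => ιs (us τ)) ∧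
  Continuous uh ∧ Continuous us ∧
  (∀ t : ℝ, ιdiv (wst t) = grads (us t)) ∧
  (∀ t : ℝ, ∀ w ∈ Uh,
    ⟪cinv2 (iteratedDeriv 2 (fun τ => ι (uh τ)) t), ι w⟫
      + ⟪kap (grad (uh t)), grad w⟫
      + dpair (γνm (wst t) - γνp (wst t)) (γ w)
      = dpair (β1 t) (γ w)) ∧
  (∀ t : ℝ, iteratedDeriv 2 (fun τ => ιs (us τ)) t = divs (wst t)) ∧
  (∀ t : ℝ, γm (us t) - γp (us t) ∈ Yh) ∧
  (∀ t : ℝ, γνm (wst t) - γνp (wst t) ∈ Xh) ∧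
  (∀ t : ℝ, ∀ ψ ∈ Yh, dpair (γνm (wst t)) ψ = 0) ∧
  (∀ t : ℝ, ∀ μ ∈ Xh, dpair μ (γ (uh t) - γp (us t) - β0 t) = 0)

/-- A (causal) solution of the fully discrete problem (4.3): trapezoidal-rule time stepping
of the exotic transmission problem (2.10), extended to continuous time. -/
def Solves43
    {L2Ω L2Ωv L2s L2sv Hp Hm H1Ω H1s Hdiv : Type*}
    [NormedAddCommGroup L2Ω] [InnerProductSpace ℝ L2Ω]
    [NormedAddCommGroup L2Ωv] [InnerProductSpace ℝ L2Ωv]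
    [NormedAddCommGroup L2s] [InnerProductSpace ℝ L2s]
    [NormedAddCommGroup L2sv] [InnerProductSpace ℝ L2sv]
    [NormedAddCommGroup Hp] [InnerProductSpace ℝ Hp]
    [NormedAddCommGroup Hm] [InnerProductSpace ℝ Hm]
    [NormedAddCommGroup H1Ω] [NormedSpace ℝ H1Ω]
    [NormedAddCommGroup H1s] [NormedSpace ℝ H1s]
    [NormedAddCommGroup Hdiv] [NormedSpace ℝ Hdiv]
    (ι : H1Ω →L[ℝ] L2Ω) (grad : H1Ω →L[ℝ] L2Ωv) (γ : H1Ω →L[ℝ] Hp)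
    (ιs : H1s →L[ℝ] L2s) (grads : H1s →L[ℝ] L2sv) (γm γp : H1s →L[ℝ] Hp)
    (ιdiv : Hdiv →L[ℝ] L2sv) (divs : Hdiv →L[ℝ] L2s) (γνm γνp : Hdiv →L[ℝ] Hm)
    (dpair : Hm →L[ℝ] Hp →L[ℝ] ℝ)
    (cinv2 : L2Ω →L[ℝ] L2Ω) (kap : L2Ωv →L[ℝ] L2Ωv)
    (Uh : Submodule ℝ H1Ω) (Xh : Submodule ℝ Hm) (Yh : Submodule ℝ Hp)
    (k : ℝ) (β0 : ℝ → Hp) (β1 : ℝ → Hm)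
    (ukh : ℝ → H1Ω) (uks : ℝ → H1s) (wkst : ℝ → Hdiv) : Prop :=
  (∀ t : ℝ, ukh t ∈ Uh) ∧ Causal ukh ∧ Causal uks ∧ Causal wkst ∧
  (∀ t : ℝ, ιdiv (wkst t) = grads (uks t)) ∧
  (∀ t : ℝ, ∀ w ∈ Uh,
    ⟪cinv2 (dquot k (dquot k (fun τ => ι (ukh τ))) t), ι w⟫
      + ⟪kap (grad (amean k (amean k ukh) t)), grad w⟫
      + dpair (amean k (amean k (fun τ => γνm (wkst τ) - γνp (wkst τ))) t) (γ w)
      = dpair (amean k (amean k β1) t) (γ w)) ∧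
  (∀ t : ℝ, dquot k (dquot k (fun τ => ιs (uks τ))) t
      = amean k (amean k (fun τ => divs (wkst τ))) t) ∧
  (∀ t : ℝ, γm (uks t) - γp (uks t) ∈ Yh) ∧
  (∀ t : ℝ, γνm (wkst t) - γνp (wkst t) ∈ Xh) ∧
  (∀ t : ℝ, ∀ ψ ∈ Yh, dpair (γνm (wkst t)) ψ = 0) ∧
  (∀ t : ℝ, ∀ μ ∈ Xh, dpair μ (γ (ukh t) - γp (uks t) - β0 t) = 0)

/-! By Green's formula both problems become variational equations in one Hilbert space `M × S` of
weighted displacements and strains: `u - q ∈ V` and `(ü, strain u) - f ∈ Vᗮ`, with data `q`, `f`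
that are bounded linear images of `β₀`, `β₁`. Replacing both `q` and `f` by the function
`z = P_{Vᗮ} q + P_V f` changes neither condition, so a single data function is left.

The error of the trapezoidal rule satisfies the discrete energy identity, hence its energy norm at
time `t` is at most `t` times the consistency error `∂_k² u - α_k² ü`. By Taylor's formula that
error would be `O(k²)` times the fourth derivative of `u`, but `u` is only twice differentiable in
the pivot space. This derivative is therefore replaced by difference quotients of `ü`, which solve
the same equation with differenced data, so that the time-integrated energy estimate bounds them by
`∂_t³ z` and `∂_t⁵ z` uniformly in the increments. -/

open MeasureTheory Filter Topology Set

section DifferenceQuotients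

section Algebra

variable {X Y F : Type*} [AddCommGroup X] [AddCommGroup Y] {f g : ℝ → X} {k : ℝ}

theorem Causal.sub (hf : Causal f) (hg : Causal g) : Causal fun τ => f τ - g τ := fun t ht => by
  simp only [hf t ht, hg t ht, sub_zero]

theorem Causal.map [FunLike F X Y] [AddMonoidHomClass F X Y] (hf : Causal f) (L : F) :
    Causal fun τ => L (f τ) := fun t ht => by
  simp only [hf t ht, map_zero]

variable [Module ℝ X] [Module ℝ Y]

protected theorem Causal.dquot (hf : Causal f) (hk : 0 ≤ k) : Causal (dquot k f) := fun t ht => by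
  simp only [dquot, hf t ht, hf (t - k) (by linarith), sub_zero, smul_zero]

protected theorem Causal.amean (hf : Causal f) (hk : 0 ≤ k) : Causal (amean k f) := fun t ht => by
  simp only [amean, hf t ht, hf (t - k) (by linarith), add_zero, smul_zero]

theorem dquot_sub : dquot k (fun τ => f τ - g τ) = fun t => dquot k f t - dquot k g t := by
  funext t; simp only [dquot]; module

theorem amean_sub : amean k (fun τ => f τ - g τ) = fun t => amean k f t - amean k g t := by
  funext t; simp only [amean]; module

theorem dquot_map [FunLike F X Y] [LinearMapClass F ℝ X Y] (L : F) :
    dquot k (fun τ => L (f τ)) = fun t => L (dquot k f t) := by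
  funext t; simp only [dquot, map_smul, map_sub]

theorem amean_map [FunLike F X Y] [LinearMapClass F ℝ X Y] (L : F) :
    amean k (fun τ => L (f τ)) = fun t => L (amean k f t) := by
  funext t; simp only [amean, map_smul, map_add]

theorem dquot_mem {V : Submodule ℝ X} (hf : ∀ t, f t ∈ V) (t : ℝ) : dquot k f t ∈ V :=
  V.smul_mem _ (V.sub_mem (hf t) (hf _))

theorem amean_mem {V : Submodule ℝ X} (hf : ∀ t, f t ∈ V) (t : ℝ) : amean k f t ∈ V :=
  V.smul_mem _ (V.add_mem (hf t) (hf _))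

end Algebra

variable {X : Type*} [NormedAddCommGroup X] [NormedSpace ℝ X] {f f' : ℝ → X} {k t B : ℝ}

theorem Causal.of_hasDerivAt (hf : Causal f) (h : ∀ t, HasDerivAt f (f' t) t) : Causal f' := by
  intro t ht
  have hzero : HasDerivWithinAt f 0 (Iic t) t :=
    (hasDerivWithinAt_const t (Iic t) (0 : X)).congr (fun s hs => hf s (hs.trans ht)) (hf t ht)
  exact (uniqueDiffWithinAt_Iic t).eq_deriv _ (h t).hasDerivWithinAt hzero

theorem continuous_dquot (hf : Continuous f) : Continuous (dquot k f) :=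
  (hf.sub (hf.comp (continuous_id.sub continuous_const))).const_smul _

theorem hasDerivAt_dquot (hf : ∀ t, HasDerivAt f (f' t) t) (t : ℝ) :
    HasDerivAt (dquot k f) (dquot k f' t) t :=
  ((hf t).sub ((hf (t - k)).comp_sub_const t k)).const_smul k⁻¹

theorem tendsto_dquot_nhdsGT_zero {a : X} (hf : HasDerivAt f a t) :
    Tendsto (fun k => dquot k f t) (𝓝[>] 0) (𝓝 a) := by
  have hneg : Tendsto (fun k : ℝ => -k) (𝓝[>] 0) (𝓝[≠] 0) := by
    refine tendsto_nhdsWithin_iff.2 ⟨?_, ?_⟩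
    · simpa using (continuous_neg.tendsto (0 : ℝ)).mono_left nhdsWithin_le_nhds
    · filter_upwards [self_mem_nhdsWithin] with k hk using (neg_neg_of_pos hk).ne
  refine (hf.tendsto_slope_zero.comp hneg).congr fun k => ?_
  simp only [Function.comp_apply, dquot, inv_neg, ← sub_eq_add_neg, neg_smul, ← smul_neg, neg_sub]

theorem norm_le_of_forall_norm_dquot_le {a : X} (hf : HasDerivAt f a t)
    (hB : ∀ k > 0, ‖dquot k f t‖ ≤ B) : ‖a‖ ≤ B :=
  le_of_tendsto (tendsto_dquot_nhdsGT_zero hf).norm (by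
    filter_upwards [self_mem_nhdsWithin] with k hk using hB k hk)

end DifferenceQuotients

section CausalPrimitives

variable {X Y : Type*} [NormedAddCommGroup X] [NormedSpace ℝ X]
  [NormedAddCommGroup Y] [NormedSpace ℝ Y] {f f' g g' : ℝ → X} {k t : ℝ}

/-- `f` is the causal antiderivative `∂⁻¹ f'` of the locally integrable function `f'`, in integrated
form, so that `f'` may be discontinuous. -/
structure IsCausalPrimitive (f f' : ℝ → X) : Prop where
  causal : Causal f
  eq_zero_of_neg : ∀ t < 0, f' t = 0
  intervalIntegrable : ∀ a b, IntervalIntegrable f' volume a b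
  integral_eq : ∀ a b, ∫ τ in a..b, f' τ = f b - f a

theorem Causal.isCausalPrimitive [CompleteSpace X] (hf : Causal f) (h : ∀ t, HasDerivAt f (f' t) t)
    (hf' : Continuous f') : IsCausalPrimitive f f' where
  causal := hf
  eq_zero_of_neg t ht := hf.of_hasDerivAt h t ht.le
  intervalIntegrable := hf'.intervalIntegrable
  integral_eq a b := intervalIntegral.integral_eq_sub_of_hasDerivAt (fun t _ => h t)
    (hf'.intervalIntegrable a b)

theorem Causal.isCausalPrimitive_aInt [CompleteSpace X] (hf : Causal f) (hf' : Continuous f) :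
    IsCausalPrimitive (aInt f) f := by
  have hderiv (t : ℝ) : HasDerivAt (aInt f) (f t) t :=
    (hf'.integral_hasStrictDerivAt 0 t).hasDerivAt
  refine Causal.isCausalPrimitive (fun t ht => ?_) hderiv hf'
  rw [aInt, intervalIntegral.integral_symm, neg_eq_zero]
  refine (intervalIntegral.integral_congr fun τ hτ => ?_).trans intervalIntegral.integral_zero
  exact hf τ (by rw [uIcc_of_le ht] at hτ; exact hτ.2)

namespace IsCausalPrimitive

theorem norm_sub_le_integral (h : IsCausalPrimitive f f') {a b : ℝ} (hab : a ≤ b) :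
    ‖f b - f a‖ ≤ ∫ τ in a..b, ‖f' τ‖ :=
  h.integral_eq a b ▸ intervalIntegral.norm_integral_le_integral_norm hab

theorem norm_le_integral (h : IsCausalPrimitive f f') (ht : 0 ≤ t) :
    ‖f t‖ ≤ ∫ τ in 0..t, ‖f' τ‖ := by
  simpa [h.causal 0 le_rfl] using h.norm_sub_le_integral ht

theorem eq_integral (h : IsCausalPrimitive f f') (t : ℝ) : f t = ∫ τ in 0..t, f' τ := by
  rw [h.integral_eq, h.causal 0 le_rfl, sub_zero]

protected theorem continuous (h : IsCausalPrimitive f f') : Continuous f := by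
  rw [funext h.eq_integral]
  exact intervalIntegral.continuous_primitive h.intervalIntegrable 0

protected theorem hasDerivAt [CompleteSpace X] (h : IsCausalPrimitive f f') (hf' : Continuous f')
    (t : ℝ) : HasDerivAt f (f' t) t := by
  rw [funext h.eq_integral]
  exact (hf'.integral_hasStrictDerivAt 0 t).hasDerivAt

protected theorem norm (h : IsCausalPrimitive f f') :
    IsCausalPrimitive (fun t => ∫ τ in 0..t, ‖f' τ‖) (fun t => ‖f' t‖) where
  causal t ht := by
    have hzero : ∀ᵐ τ, τ ∈ Set.uIoc 0 t → ‖f' τ‖ = 0 := by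
      filter_upwards [Measure.ae_ne volume (0 : ℝ)] with τ hτ hmem
      rw [uIoc_of_ge ht] at hmem
      rw [h.eq_zero_of_neg τ (lt_of_le_of_ne hmem.2 hτ), norm_zero]
    simp only [intervalIntegral.integral_congr_ae hzero, intervalIntegral.integral_zero]
  eq_zero_of_neg t ht := by rw [h.eq_zero_of_neg t ht, norm_zero]
  intervalIntegrable a b := (h.intervalIntegrable a b).norm
  integral_eq a b := (intervalIntegral.integral_interval_sub_left
    (h.intervalIntegrable 0 b).norm (h.intervalIntegrable 0 a).norm).symm

protected theorem map [CompleteSpace X] [CompleteSpace Y] (h : IsCausalPrimitive f f')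
    (L : X →L[ℝ] Y) : IsCausalPrimitive (fun t => L (f t)) (fun t => L (f' t)) where
  causal := h.causal.map L
  eq_zero_of_neg t ht := by rw [h.eq_zero_of_neg t ht, map_zero]
  intervalIntegrable a b := ⟨L.integrable_comp (h.intervalIntegrable a b).1,
    L.integrable_comp (h.intervalIntegrable a b).2⟩
  integral_eq a b := by
    rw [L.intervalIntegral_comp_comm (h.intervalIntegrable a b), h.integral_eq, map_sub]

protected theorem add (hf : IsCausalPrimitive f f') (hg : IsCausalPrimitive g g') :
    IsCausalPrimitive (fun t => f t + g t) (fun t => f' t + g' t) where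
  causal t ht := by simp only [hf.causal t ht, hg.causal t ht, add_zero]
  eq_zero_of_neg t ht := by rw [hf.eq_zero_of_neg t ht, hg.eq_zero_of_neg t ht, add_zero]
  intervalIntegrable a b := (hf.intervalIntegrable a b).add (hg.intervalIntegrable a b)
  integral_eq a b := by
    rw [intervalIntegral.integral_add (hf.intervalIntegrable a b) (hg.intervalIntegrable a b),
      hf.integral_eq, hg.integral_eq]
    abel

protected theorem dquot (h : IsCausalPrimitive f f') (hk : 0 ≤ k) :
    IsCausalPrimitive (dquot k f) (dquot k f') := by
  have hshift (a b : ℝ) : IntervalIntegrable (fun τ => f' (τ - k)) volume a b := by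
    simpa using (h.intervalIntegrable (a - k) (b - k)).comp_sub_right k
  refine ⟨h.causal.dquot hk, fun t ht => ?_,
    fun a b => ((h.intervalIntegrable a b).sub (hshift a b)).smul k⁻¹, fun a b => ?_⟩
  · simp only [dquot, h.eq_zero_of_neg t ht, h.eq_zero_of_neg (t - k) (by linarith), sub_zero,
      smul_zero]
  · simp only [dquot]
    rw [intervalIntegral.integral_smul,
      intervalIntegral.integral_sub (h.intervalIntegrable a b) (hshift a b),
      intervalIntegral.integral_comp_sub_right, h.integral_eq, h.integral_eq]
    module

theorem integral_norm_mono (h : IsCausalPrimitive f f') {s t : ℝ} (hst : s ≤ t) :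
    ∫ τ in 0..s, ‖f' τ‖ ≤ ∫ τ in 0..t, ‖f' τ‖ := by
  rw [← sub_nonneg, ← h.norm.integral_eq]
  exact intervalIntegral.integral_nonneg hst fun τ _ => norm_nonneg _

theorem integral_norm_dquot_le (h : IsCausalPrimitive f f') (hk : 0 < k) (ht : 0 ≤ t) :
    ∫ τ in 0..t, ‖dquot k f τ‖ ≤ ∫ τ in 0..t, ‖f' τ‖ := by
  set F : ℝ → ℝ := fun s => ∫ τ in 0..s, ‖f' τ‖
  have hF : Continuous F := h.norm.continuous
  have hpointwise (τ : ℝ) : ‖dquot k f τ‖ ≤ dquot k F τ := by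
    rw [dquot, dquot, norm_smul, Real.norm_of_nonneg (inv_nonneg.2 hk.le), smul_eq_mul,
      ← h.norm.integral_eq]
    gcongr
    exact h.norm_sub_le_integral (by linarith)
  have hwindow : ∫ τ in (t - k)..t, F τ ≤ k * F t := by
    calc ∫ τ in (t - k)..t, F τ ≤ ∫ _ in (t - k)..t, F t :=
          intervalIntegral.integral_mono_on (by linarith) (hF.intervalIntegrable _ _)
            intervalIntegrable_const fun τ hτ => h.integral_norm_mono hτ.2
      _ = k * F t := by simp
  have hnonneg : 0 ≤ ∫ τ in (-k)..0, F τ :=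
    intervalIntegral.integral_nonneg (by linarith) fun τ hτ => (h.norm.causal τ hτ.2).ge
  calc ∫ τ in 0..t, ‖dquot k f τ‖
      ≤ ∫ τ in 0..t, dquot k F τ :=
        intervalIntegral.integral_mono_on ht
          ((continuous_dquot h.continuous).norm.intervalIntegrable _ _)
          ((continuous_dquot hF).intervalIntegrable _ _) fun τ _ => hpointwise τ
    _ = k⁻¹ * ((∫ τ in (t - k)..t, F τ) - ∫ τ in (-k)..0, F τ) := by
        simp only [dquot]
        have hshift : Continuous fun τ => F (τ - k) := hF.comp (continuous_id.sub continuous_const)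
        rw [intervalIntegral.integral_smul, intervalIntegral.integral_sub
            (hF.intervalIntegrable _ _) (hshift.intervalIntegrable _ _),
          intervalIntegral.integral_comp_sub_right, zero_sub, smul_eq_mul,
          intervalIntegral.integral_interval_sub_interval_comm' (hF.intervalIntegrable _ _)
            (hF.intervalIntegrable _ _) (hF.intervalIntegrable _ _)]
    _ ≤ k⁻¹ * (k * F t) := by gcongr; linarith
    _ = F t := inv_mul_cancel_left₀ hk.ne' _

theorem foldr_dquot (h : IsCausalPrimitive f f') {ks : List ℝ} (hks : ∀ k ∈ ks, 0 < k) :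
    IsCausalPrimitive (ks.foldr dquot f) (ks.foldr dquot f') := by
  induction ks with
  | nil => exact h
  | cons k ks ih =>
    rw [List.forall_mem_cons] at hks
    exact (ih hks.2).dquot hks.1.le

theorem integral_norm_foldr_dquot_le {ζ : ℕ → ℝ → X} {j : ℕ} {ks : List ℝ}
    (hζ : ∀ i < ks.length, IsCausalPrimitive (ζ (j + i)) (ζ (j + i + 1))) (hks : ∀ k ∈ ks, 0 < k)
    (ht : 0 ≤ t) :
    ∫ τ in 0..t, ‖ks.foldr dquot (ζ j) τ‖ ≤ ∫ τ in 0..t, ‖ζ (j + ks.length) τ‖ := by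
  induction ks generalizing j with
  | nil => exact le_rfl
  | cons k ks ih =>
    rw [List.forall_mem_cons] at hks
    calc ∫ τ in 0..t, ‖dquot k (ks.foldr dquot (ζ j)) τ‖
        ≤ ∫ τ in 0..t, ‖ks.foldr dquot (ζ (j + 1)) τ‖ :=
          ((hζ 0 (by simp)).foldr_dquot hks.2).integral_norm_dquot_le hks.1 ht
      _ ≤ ∫ τ in 0..t, ‖ζ (j + 1 + ks.length) τ‖ := by
          refine ih (fun i hi => ?_) hks.2
          simpa only [add_assoc, add_comm 1 i] using hζ (i + 1) (by simpa using hi)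
      _ = ∫ τ in 0..t, ‖ζ (j + (k :: ks).length) τ‖ := by
          rw [List.length_cons, add_assoc, add_comm 1]

end IsCausalPrimitive

end CausalPrimitives
section SobolevData

variable {X : Type*} [NormedAddCommGroup X] [NormedSpace ℝ X] {f : ℝ → X} {m n j : ℕ} {t : ℝ}

theorem iteratedDeriv_iteratedDeriv (i j : ℕ) (f : ℝ → X) :
    iteratedDeriv i (iteratedDeriv j f) = iteratedDeriv (i + j) f := by
  simp only [iteratedDeriv_eq_iterate, Function.iterate_add_apply]

theorem Hfun_nonneg (n : ℕ) (f : ℝ → X) (ht : 0 ≤ t) : 0 ≤ Hfun n f t :=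
  Finset.sum_nonneg fun _ _ => intervalIntegral.integral_nonneg ht fun _ _ => norm_nonneg _

theorem Hfun_mono (hmn : m ≤ n) (f : ℝ → X) (ht : 0 ≤ t) : Hfun m f t ≤ Hfun n f t :=
  Finset.sum_le_sum_of_subset_of_nonneg (Finset.range_mono (by omega)) fun _ _ _ =>
    intervalIntegral.integral_nonneg ht fun _ _ => norm_nonneg _

theorem integral_norm_add_integral_norm_le_Hfun (j : ℕ) (f : ℝ → X) (ht : 0 ≤ t) :
    (∫ τ in 0..t, ‖iteratedDeriv j f τ‖) + ∫ τ in 0..t, ‖iteratedDeriv (j + 2) f τ‖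
      ≤ Hfun 2 (iteratedDeriv j f) t := by
  have hnonneg : 0 ≤ ∫ τ in 0..t, ‖iteratedDeriv (j + 1) f τ‖ :=
    intervalIntegral.integral_nonneg ht fun τ _ => norm_nonneg _
  simp only [Hfun, Finset.sum_range_succ, Finset.sum_range_zero, iteratedDeriv_iteratedDeriv,
    zero_add, add_comm 1 j, add_comm 2 j]
  linarith

theorem hasDerivAt_iteratedDeriv (hf : ContDiff ℝ n f) (hj : j < n) (t : ℝ) :
    HasDerivAt (iteratedDeriv j f) (iteratedDeriv (j + 1) f t) t := by
  rw [iteratedDeriv_succ]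
  exact (hf.differentiable_iteratedDeriv j (by exact_mod_cast hj) t).hasDerivAt

namespace WP

theorem contDiff (h : WP (n + 1) f) : ContDiff ℝ n f := h.1

theorem causal_iteratedDeriv (h : WP (n + 1) f) (hj : j ≤ n) : Causal (iteratedDeriv j f) := by
  induction j with
  | zero => simpa only [iteratedDeriv_zero] using h.2.1
  | succ j ih => exact (ih (by omega)).of_hasDerivAt (hasDerivAt_iteratedDeriv h.contDiff hj)

theorem continuous_iteratedDeriv (h : WP (n + 1) f) (hj : j ≤ n) : Continuous (iteratedDeriv j f) :=
  h.contDiff.continuous_iteratedDeriv j (by exact_mod_cast hj)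

theorem isCausalPrimitive [CompleteSpace X] (h : WP (n + 1) f) (hj : j ≤ n) :
    IsCausalPrimitive (iteratedDeriv j f) (iteratedDeriv (j + 1) f) := by
  rcases hj.lt_or_eq with hlt | rfl
  · exact (h.causal_iteratedDeriv hj).isCausalPrimitive (hasDerivAt_iteratedDeriv h.contDiff hlt)
      (h.continuous_iteratedDeriv hlt)
  · refine ⟨h.causal_iteratedDeriv le_rfl, fun t ht => ?_,
      fun a b => h.2.2.1.intervalIntegrable, fun a b => (h.2.2.2 a b).symm⟩
    have hzero : iteratedDeriv j f =ᶠ[𝓝 t] fun _ => 0 := by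
      filter_upwards [Iio_mem_nhds ht] with s hs using h.causal_iteratedDeriv le_rfl s hs.le
    rw [iteratedDeriv_succ, hzero.deriv_eq, deriv_const]

end WP

end SobolevData

section EnergyInequality

/- The square root is regularised to `√(N + ε)` because `N` may vanish. -/
theorem sqrt_le_integral_of_deriv_le {N N' φ : ℝ → ℝ} (hN : ∀ t, HasDerivAt N (N' t) t)
    (hN_nonneg : ∀ t, 0 ≤ N t) (hN_zero : N 0 = 0) (hφ : Continuous φ) (hφ_nonneg : ∀ t, 0 ≤ φ t)
    (hN' : ∀ t, N' t ≤ 2 * φ t * √(N t)) {t : ℝ} (ht : 0 ≤ t) :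
    √(N t) ≤ ∫ τ in 0..t, φ τ := by
  refine le_of_forall_pos_le_add fun ε hε => ?_
  have hpos (s : ℝ) : 0 < N s + ε ^ 2 := by have := hN_nonneg s; positivity
  have hsqrt (s : ℝ) : HasDerivAt (fun s => √(N s + ε ^ 2)) (N' s / (2 * √(N s + ε ^ 2))) s :=
    ((hN s).add_const _).sqrt (hpos s).ne'
  have hslope (s : ℝ) : N' s / (2 * √(N s + ε ^ 2)) ≤ φ s := by
    have hroot : √(N s) ≤ √(N s + ε ^ 2) := Real.sqrt_le_sqrt (by linarith [sq_nonneg ε])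
    rw [div_le_iff₀ (by have := Real.sqrt_pos.2 (hpos s); positivity)]
    calc N' s ≤ 2 * φ s * √(N s) := hN' s
      _ ≤ 2 * φ s * √(N s + ε ^ 2) :=
        mul_le_mul_of_nonneg_left hroot (mul_nonneg zero_le_two (hφ_nonneg s))
      _ = φ s * (2 * √(N s + ε ^ 2)) := by ring
  have hprim (s : ℝ) : HasDerivAt (fun s => ∫ τ in 0..s, φ τ) (φ s) s :=
    (hφ.integral_hasStrictDerivAt 0 s).hasDerivAt
  have hmono : Monotone fun s => (∫ τ in 0..s, φ τ) - √(N s + ε ^ 2) :=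
    monotone_of_hasDerivAt_nonneg (fun s => (hprim s).sub (hsqrt s)) fun s =>
      sub_nonneg.2 (hslope s)
  have hle := hmono ht
  simp only [intervalIntegral.integral_same, hN_zero, zero_add, Real.sqrt_sq hε.le] at hle
  have hroot : √(N t) ≤ √(N t + ε ^ 2) := Real.sqrt_le_sqrt (by linarith [sq_nonneg ε])
  linarith

end EnergyInequality
section WaveEquation

variable {M S : Type*} [NormedAddCommGroup M] [InnerProductSpace ℝ M]
  [NormedAddCommGroup S] [InnerProductSpace ℝ S]

/-- An abstract causal wave field with velocity `u'` and acceleration `u''`: the components of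
`u : ℝ → M × S` are the displacement and the strain, and the graph of the strain operator together
with the homogeneous essential conditions form the subspace `V`. The function `q` lifts the
essential conditions and `f` represents the load. -/
structure IsWaveSolution (V : Submodule ℝ (WithLp 2 (M × S))) (q f u : ℝ → WithLp 2 (M × S))
    (u' u'' : ℝ → M) : Prop where
  causal : Causal u
  continuous : Continuous u
  hasDerivAt_fst : ∀ t, HasDerivAt (fun τ => (u τ).fst) (u' t) t
  hasDerivAt_velocity : ∀ t, HasDerivAt u' (u'' t) t
  sub_mem : ∀ t, u t - q t ∈ V
  residual_mem : ∀ t, WithLp.toLp 2 (u'' t, (u t).snd) - f t ∈ Vᗮ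

theorem mem_orthogonal_of_hasDerivAt {E : Type*} [NormedAddCommGroup E] [InnerProductSpace ℝ E]
    {V : Submodule ℝ E} {f f' : ℝ → E} (hf : ∀ t, HasDerivAt f (f' t) t) (hf' : ∀ t, f' t ∈ Vᗮ)
    (h0 : f 0 ∈ Vᗮ) (t : ℝ) : f t ∈ Vᗮ := by
  refine (V.mem_orthogonal _).2 fun w hw => ?_
  have hderiv (s : ℝ) : HasDerivAt (fun s => ⟪w, f s⟫) 0 s := by
    simpa [V.inner_right_of_mem_orthogonal hw (hf' s)] using (hasDerivAt_const s w).inner ℝ (hf s)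
  have hconst := is_const_of_deriv_eq_zero (fun s => (hderiv s).differentiableAt)
    (fun s => (hderiv s).deriv) t 0
  exact hconst.trans (V.inner_right_of_mem_orthogonal hw h0)

namespace IsWaveSolution

variable {V : Submodule ℝ (WithLp 2 (M × S))} {q f z z' Z u : ℝ → WithLp 2 (M × S)} {u' u'' : ℝ → M}
  {k t : ℝ}

theorem causal_fst (h : IsWaveSolution V q f u u' u'') : Causal fun τ => (u τ).fst :=
  h.causal.map (WithLp.fstL 2 ℝ M S)

theorem causal_velocity (h : IsWaveSolution V q f u u' u'') : Causal u' :=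
  h.causal_fst.of_hasDerivAt h.hasDerivAt_fst

theorem causal_acceleration (h : IsWaveSolution V q f u u' u'') : Causal u'' :=
  h.causal_velocity.of_hasDerivAt h.hasDerivAt_velocity

theorem hasDerivAt_aInt_snd [CompleteSpace S] (h : IsWaveSolution V q f u u' u'') (t : ℝ) :
    HasDerivAt (aInt fun τ => (u τ).snd) (u t).snd t :=
  (((WithLp.sndL 2 ℝ M S).continuous.comp h.continuous).integral_hasStrictDerivAt 0 t).hasDerivAt

protected theorem dquot (h : IsWaveSolution V q f u u' u'') (hk : 0 ≤ k) :
    IsWaveSolution V (dquot k q) (dquot k f) (dquot k u) (dquot k u') (dquot k u'') where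
  causal := h.causal.dquot hk
  continuous := continuous_dquot h.continuous
  hasDerivAt_fst := hasDerivAt_dquot h.hasDerivAt_fst
  hasDerivAt_velocity := hasDerivAt_dquot h.hasDerivAt_velocity
  sub_mem t := by simpa only [dquot_sub] using dquot_mem (k := k) h.sub_mem t
  residual_mem t := by
    have hmem := dquot_mem (k := k) h.residual_mem t
    rw [dquot_sub] at hmem
    exact hmem

theorem foldr_dquot (h : IsWaveSolution V q f u u' u'') {ks : List ℝ} (hks : ∀ k ∈ ks, 0 < k) :
    IsWaveSolution V (ks.foldr dquot q) (ks.foldr dquot f) (ks.foldr dquot u)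
      (ks.foldr dquot u') (ks.foldr dquot u'') := by
  induction ks with
  | nil => exact h
  | cons k ks ih =>
    rw [List.forall_mem_cons] at hks
    exact (ih hks.2).dquot hks.1.le

variable [CompleteSpace S]

theorem integrated_residual_mem (h : IsWaveSolution V z z u u' u'') (hZ : Causal Z)
    (hZ' : ∀ t, HasDerivAt Z (z t) t) (t : ℝ) :
    WithLp.toLp 2 (u' t, aInt (fun τ => (u τ).snd) t) - Z t ∈ Vᗮ := by
  have hderiv (t : ℝ) : HasDerivAt
      (fun t => WithLp.toLp 2 (u' t, aInt (fun τ => (u τ).snd) t) - Z t)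
      (WithLp.toLp 2 (u'' t, (u t).snd) - z t) t :=
    ((WithLp.prodContinuousLinearEquiv 2 ℝ M S).symm.hasFDerivAt.comp_hasDerivAt t
      ((h.hasDerivAt_velocity t).prodMk (h.hasDerivAt_aInt_snd t))).sub (hZ' t)
  have hzero : WithLp.toLp 2 (u' 0, aInt (fun τ => (u τ).snd) 0) - Z 0 = 0 := by
    rw [h.causal_velocity 0 le_rfl, hZ 0 le_rfl, aInt, intervalIntegral.integral_same, sub_zero]
    rfl
  exact mem_orthogonal_of_hasDerivAt hderiv h.residual_mem (hzero ▸ Vᗮ.zero_mem) t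

/- Testing the time-integrated equation with `u - z` never differentiates the strain of `u`, which
is only continuous. -/
theorem norm_fst_sub_le (h : IsWaveSolution V z z u u' u'') (hZ : Causal Z)
    (hZ' : ∀ t, HasDerivAt Z (z t) t) (hz : ∀ t, HasDerivAt z (z' t) t) (hz' : Continuous z')
    (ht : 0 ≤ t) : ‖(u t - z t).fst‖ ≤ ∫ τ in 0..t, ‖Z τ - z' τ‖ := by
  set D : ℝ → WithLp 2 (M × S) := fun t => u t - z t
  set G : ℝ → S := fun t => aInt (fun τ => (u τ).snd) t - (Z t).snd
  set N : ℝ → ℝ := fun t => ‖(D t).fst‖ ^ 2 + ‖G t‖ ^ 2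
  have hD (t : ℝ) : HasDerivAt (fun t => (D t).fst) (u' t - (z' t).fst) t :=
    (h.hasDerivAt_fst t).sub ((WithLp.fstL 2 ℝ M S).hasFDerivAt.comp_hasDerivAt t (hz t))
  have hG (t : ℝ) : HasDerivAt G (D t).snd t :=
    (h.hasDerivAt_aInt_snd t).sub ((WithLp.sndL 2 ℝ M S).hasFDerivAt.comp_hasDerivAt t (hZ' t))
  have hbalance (t : ℝ) : ⟪(D t).fst, u' t - (Z t).fst⟫ + ⟪(D t).snd, G t⟫ = 0 :=
    V.inner_right_of_mem_orthogonal (h.sub_mem t) (h.integrated_residual_mem hZ hZ' t)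
  have hrate (t : ℝ) : 2 * ⟪(D t).fst, u' t - (z' t).fst⟫ + 2 * ⟪G t, (D t).snd⟫
      ≤ 2 * ‖Z t - z' t‖ * √(N t) := by
    have hD_le : ‖(D t).fst‖ ≤ √(N t) :=
      Real.le_sqrt_of_sq_le (le_add_of_nonneg_right (sq_nonneg _))
    calc 2 * ⟪(D t).fst, u' t - (z' t).fst⟫ + 2 * ⟪G t, (D t).snd⟫
        = 2 * ⟪(D t).fst, (Z t - z' t).fst⟫ := by
          have hbal := hbalance t
          simp only [WithLp.sub_fst, inner_sub_right, real_inner_comm (D t).snd] at hbal ⊢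
          linarith
      _ ≤ 2 * (‖(D t).fst‖ * ‖(Z t - z' t).fst‖) := by gcongr; exact real_inner_le_norm _ _
      _ ≤ 2 * (√(N t) * ‖Z t - z' t‖) := by gcongr; exact WithLp.norm_fst_le _ _
      _ = 2 * ‖Z t - z' t‖ * √(N t) := by ring
  have hN_zero : N 0 = 0 := by
    have hz0 : z 0 = 0 := hZ.of_hasDerivAt hZ' 0 le_rfl
    simp [N, D, G, h.causal 0 le_rfl, hz0, hZ 0 le_rfl, aInt]
  have hZ_cont : Continuous Z := continuous_iff_continuousAt.2 fun t => (hZ' t).continuousAt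
  calc ‖(D t).fst‖ ≤ √(N t) := Real.le_sqrt_of_sq_le (le_add_of_nonneg_right (sq_nonneg _))
    _ ≤ ∫ τ in 0..t, ‖Z τ - z' τ‖ :=
      sqrt_le_integral_of_deriv_le (fun t => (hD t).norm_sq.add (hG t).norm_sq)
        (fun t => add_nonneg (sq_nonneg _) (sq_nonneg _)) hN_zero (hZ_cont.sub hz').norm
        (fun t => norm_nonneg _) hrate ht

variable [CompleteSpace M]

theorem norm_fst_le (h : IsWaveSolution V z z u u' u'') (hZ : IsCausalPrimitive Z z)
    (hz : IsCausalPrimitive z z') (hz' : Continuous z') (ht : 0 ≤ t) :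
    ‖(u t).fst‖ ≤ (∫ τ in 0..t, ‖Z τ‖) + 2 * ∫ τ in 0..t, ‖z' τ‖ := by
  have hsub := h.norm_fst_sub_le hZ.causal (hZ.hasDerivAt hz.continuous) (hz.hasDerivAt hz') hz' ht
  have hintZ : IntervalIntegrable (fun τ => ‖Z τ‖) volume 0 t :=
    hZ.continuous.norm.intervalIntegrable _ _
  have hintz' : IntervalIntegrable (fun τ => ‖z' τ‖) volume 0 t := hz'.norm.intervalIntegrable _ _
  calc ‖(u t).fst‖ = ‖(u t - z t).fst + (z t).fst‖ := by simp
    _ ≤ ‖(u t - z t).fst‖ + ‖z t‖ :=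
      (norm_add_le _ _).trans (by gcongr; exact WithLp.norm_fst_le _ _)
    _ ≤ (∫ τ in 0..t, (‖Z τ‖ + ‖z' τ‖)) + ∫ τ in 0..t, ‖z' τ‖ := by
      refine add_le_add (hsub.trans ?_) (hz.norm_le_integral ht)
      exact intervalIntegral.integral_mono_on ht ((hZ.continuous.sub hz').norm.intervalIntegrable
        _ _) (hintZ.add hintz') fun τ _ => norm_sub_le _ _
    _ = (∫ τ in 0..t, ‖Z τ‖) + 2 * ∫ τ in 0..t, ‖z' τ‖ := by
      rw [intervalIntegral.integral_add hintZ hintz']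
      ring

section Regularity

variable {ζ : ℕ → ℝ → WithLp 2 (M × S)}

theorem norm_foldr_dquot_fst_le (h : IsWaveSolution V (ζ 0) (ζ 0) u u' u'')
    (hZ : IsCausalPrimitive Z (ζ 0)) {ks : List ℝ}
    (hζ : ∀ j < ks.length + 2, IsCausalPrimitive (ζ j) (ζ (j + 1))) (hk : 0 < k)
    (hks : ∀ k ∈ ks, 0 < k) (ht : 0 ≤ t) :
    ‖((k :: ks).foldr dquot u t).fst‖
      ≤ (∫ τ in 0..t, ‖ζ ks.length τ‖) + 2 * ∫ τ in 0..t, ‖ζ (ks.length + 2) τ‖ := by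
  have hkks : ∀ r ∈ k :: ks, 0 < r := List.forall_mem_cons.2 ⟨hk, hks⟩
  have hζ' (j : ℕ) (hj : j < 2) := (hζ j (by omega)).foldr_dquot hkks
  refine ((h.foldr_dquot hkks).norm_fst_le (hZ.foldr_dquot hkks) (hζ' 0 (by simp))
    (hζ' 1 (by simp)).continuous ht).trans ?_
  gcongr
  · calc _ ≤ ∫ τ in 0..t, ‖ks.foldr dquot (ζ 0) τ‖ :=
          (hZ.foldr_dquot hks).integral_norm_dquot_le hk ht
      _ ≤ ∫ τ in 0..t, ‖ζ (0 + ks.length) τ‖ :=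
          IsCausalPrimitive.integral_norm_foldr_dquot_le (fun i hi => hζ _ (by omega)) hks ht
      _ = _ := by rw [zero_add]
  · calc _ ≤ ∫ τ in 0..t, ‖ζ (1 + (k :: ks).length) τ‖ :=
          IsCausalPrimitive.integral_norm_foldr_dquot_le
            (fun i hi => hζ _ (by rw [List.length_cons] at hi; omega)) hkks ht
      _ = _ := by rw [List.length_cons, add_comm 1]

theorem norm_dquot_dquot_acceleration_le (h : IsWaveSolution V (ζ 0) (ζ 0) u u' u'')
    (hZ : IsCausalPrimitive Z (ζ 0)) (hζ : ∀ j < 5, IsCausalPrimitive (ζ j) (ζ (j + 1)))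
    (hk : 0 < k) (ht : 0 ≤ t) :
    ‖dquot k (dquot k u'') t‖ ≤ (∫ τ in 0..t, ‖ζ 3 τ‖) + 2 * ∫ τ in 0..t, ‖ζ 5 τ‖ := by
  have hw := (h.dquot hk.le).dquot hk.le
  refine norm_le_of_forall_norm_dquot_le (hw.hasDerivAt_velocity t) fun h₂ h₂_pos => ?_
  refine norm_le_of_forall_norm_dquot_le ((hw.dquot h₂_pos.le).hasDerivAt_fst t)
    fun h₁ h₁_pos => ?_
  exact h.norm_foldr_dquot_fst_le hZ (ks := [h₂, k, k]) hζ h₁_pos (by simp [h₂_pos, hk]) ht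

end Regularity

end IsWaveSolution

end WaveEquation
section TrapezoidalConsistency

variable {X : Type*} [NormedAddCommGroup X] [NormedSpace ℝ X] {f g g' g'' : ℝ → X} {k t B : ℝ}

theorem sq_smul_dquot_dquot (hk : k ≠ 0) (t : ℝ) :
    k ^ 2 • dquot k (dquot k f) t = f t + f (t - 2 * k) - (2 : ℝ) • f (t - k) := by
  have h2k : t - k - k = t - 2 * k := by ring
  have hinv : k ^ 2 * (k⁻¹ * k⁻¹) = 1 := by field_simp
  simp only [dquot, h2k, ← smul_sub, smul_smul, hinv, one_smul]
  module

protected theorem Causal.sq_smul_dquot_dquot (hf : Causal f) (hk : 0 < k) (htk : t ≤ k) :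
    k ^ 2 • dquot k (dquot k f) t = f t := by
  rw [sq_smul_dquot_dquot hk.ne', hf (t - k) (by linarith), hf (t - 2 * k) (by linarith),
    smul_zero, add_zero, sub_zero]

protected theorem Causal.amean_amean (hf : Causal f) (hk : 0 ≤ k) (htk : t ≤ k) :
    amean k (amean k f) t = (4⁻¹ : ℝ) • f t := by
  simp only [amean, hf (t - k) (by linarith), hf (t - k - k) (by linarith), add_zero, smul_zero,
    smul_smul]
  norm_num

theorem amean_amean_sub (hk : k ≠ 0) (t : ℝ) :
    amean k (amean k f) t - f (t - k) = (k ^ 2 / 4) • dquot k (dquot k f) t := by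
  have h2k : t - k - k = t - 2 * k := by ring
  rw [div_eq_inv_mul, mul_smul, sq_smul_dquot_dquot hk]
  simp only [amean, h2k]
  module

theorem norm_le_mul_of_norm_deriv_le {φ φ' : ℝ → X} (hφ : ∀ r, HasDerivAt φ (φ' r) r)
    (h0 : φ 0 = 0) (hB : ∀ r ∈ Icc 0 k, ‖φ' r‖ ≤ B) {r : ℝ} (hr : r ∈ Icc 0 k) : ‖φ r‖ ≤ B * r := by
  simpa [h0] using norm_image_sub_le_of_norm_deriv_le_segment'
    (fun s _ => (hφ s).hasDerivWithinAt) (fun s hs => hB s (Ico_subset_Icc_self hs)) r hr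

theorem norm_le_mul_sq_of_norm_deriv_deriv_le {φ φ' φ'' : ℝ → X}
    (hφ : ∀ r, HasDerivAt φ (φ' r) r) (hφ' : ∀ r, HasDerivAt φ' (φ'' r) r) (h0 : φ 0 = 0)
    (h0' : φ' 0 = 0) (hk : 0 ≤ k) (hB : ∀ r ∈ Icc 0 k, ‖φ'' r‖ ≤ B) : ‖φ k‖ ≤ B * k ^ 2 := by
  have hB_nonneg : 0 ≤ B := (norm_nonneg _).trans (hB 0 (left_mem_Icc.2 hk))
  have hφ'_le (r : ℝ) (hr : r ∈ Icc 0 k) : ‖φ' r‖ ≤ B * k :=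
    (norm_le_mul_of_norm_deriv_le hφ' h0' hB hr).trans (by gcongr; exact hr.2)
  simpa only [sq, mul_assoc] using
    norm_le_mul_of_norm_deriv_le hφ h0 hφ'_le (right_mem_Icc.2 hk)

theorem norm_dquot_dquot_sub_le (hg : ∀ t, HasDerivAt g (g' t) t)
    (hg' : ∀ t, HasDerivAt g' (g'' t) t) (hk : 0 < k)
    (hB : ∀ r > 0, ∀ τ ≤ t, ‖dquot r (dquot r g'') τ‖ ≤ B) :
    ‖dquot k (dquot k g) t - g'' (t - k)‖ ≤ B * k ^ 2 := by
  set c := t - k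
  have hreflect {f f' : ℝ → X} (hf : ∀ t, HasDerivAt f (f' t) t) (r : ℝ) :
      HasDerivAt (fun r => f (c - r)) (-f' (c - r)) r := (hf (c - r)).comp_const_sub c r
  have hshift {f f' : ℝ → X} (hf : ∀ t, HasDerivAt f (f' t) t) (r : ℝ) :
      HasDerivAt (fun r => f (c + r)) (f' (c + r)) r := (hf (c + r)).comp_const_add c r
  set φ : ℝ → X := fun r => g (c + r) + g (c - r) - (2 : ℝ) • g c - r ^ 2 • g'' c
  set φ' : ℝ → X := fun r => g' (c + r) - g' (c - r) - (2 * r) • g'' c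
  set φ'' : ℝ → X := fun r => g'' (c + r) + g'' (c - r) - (2 : ℝ) • g'' c
  have hφ (r : ℝ) : HasDerivAt φ (φ' r) r := by
    refine ((((hshift hg r).add (hreflect hg r)).sub_const _).sub
      ((hasDerivAt_pow 2 r).smul_const (g'' c))).congr_deriv ?_
    simp [φ', sub_eq_add_neg]
  have hφ' (r : ℝ) : HasDerivAt φ' (φ'' r) r := by
    refine (((hshift hg' r).sub (hreflect hg' r)).sub
      (((hasDerivAt_id r).const_mul 2).smul_const (g'' c))).congr_deriv ?_
    simp [φ'']
  have hφ''_le (r : ℝ) (hr : r ∈ Icc 0 k) : ‖φ'' r‖ ≤ B * k ^ 2 := by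
    rcases hr.1.eq_or_lt with rfl | hr_pos
    · have hzero : φ'' 0 = 0 := by simp [φ'', two_smul]
      rw [hzero, norm_zero]
      exact mul_nonneg ((norm_nonneg _).trans (hB k hk t le_rfl)) (sq_nonneg k)
    · have hsecond : φ'' r = r ^ 2 • dquot r (dquot r g'') (c + r) := by
        rw [sq_smul_dquot_dquot hr_pos.ne', add_sub_cancel_right, two_mul, add_sub_add_right_eq_sub]
      have hB_r := hB r hr_pos (c + r) (by linarith [hr.2])
      rw [hsecond, norm_smul, Real.norm_of_nonneg (sq_nonneg r), mul_comm]
      exact mul_le_mul hB_r (pow_le_pow_left₀ hr.1 hr.2 2) (sq_nonneg r)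
        ((norm_nonneg _).trans hB_r)
  have hφ_eq : φ k = k ^ 2 • (dquot k (dquot k g) t - g'' c) := by
    simp only [φ, smul_sub, sq_smul_dquot_dquot hk.ne', c, sub_add_cancel, sub_sub, two_mul]
  have hφ_le : ‖φ k‖ ≤ B * k ^ 2 * k ^ 2 :=
    norm_le_mul_sq_of_norm_deriv_deriv_le hφ hφ' (by simp [φ, two_smul]) (by simp [φ'])
      hk.le hφ''_le
  rw [hφ_eq, norm_smul, Real.norm_of_nonneg (sq_nonneg k), mul_comm] at hφ_le
  exact le_of_mul_le_mul_right hφ_le (by positivity)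

theorem norm_amean_amean_sub_le (hk : 0 < k) (hB : ‖dquot k (dquot k f) t‖ ≤ B) :
    ‖amean k (amean k f) t - f (t - k)‖ ≤ B * k ^ 2 := by
  rw [amean_amean_sub hk.ne', norm_smul, Real.norm_of_nonneg (by positivity)]
  nlinarith [sq_nonneg k, (norm_nonneg _).trans hB]

theorem norm_dquot_dquot_sub_amean_amean_le (hg : ∀ t, HasDerivAt g (g' t) t)
    (hg' : ∀ t, HasDerivAt g' (g'' t) t) (hk : 0 < k)
    (hB : ∀ r > 0, ∀ τ ≤ t, ‖dquot r (dquot r g'') τ‖ ≤ B) :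
    ‖dquot k (dquot k g) t - amean k (amean k g'') t‖ ≤ 2 * B * k ^ 2 := by
  calc ‖dquot k (dquot k g) t - amean k (amean k g'') t‖
      ≤ ‖dquot k (dquot k g) t - g'' (t - k)‖ + ‖amean k (amean k g'') t - g'' (t - k)‖ := by
        rw [← sub_sub_sub_cancel_right _ _ (g'' (t - k))]
        exact norm_sub_le _ _
    _ ≤ B * k ^ 2 + B * k ^ 2 :=
        add_le_add (norm_dquot_dquot_sub_le hg hg' hk hB)
          (norm_amean_amean_sub_le hk (hB k hk t le_rfl))
    _ = 2 * B * k ^ 2 := by ring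

/- During the first time step the stencil only sees the sample at `t`, so that `k` may be traded for
the shorter step `t`. -/
theorem norm_dquot_dquot_sub_amean_amean_le_of_le (hg_causal : Causal g)
    (hg : ∀ t, HasDerivAt g (g' t) t) (hg' : ∀ t, HasDerivAt g' (g'' t) t) (ht : 0 < t)
    (htk : t ≤ k) (hB : ∀ r > 0, ∀ τ ≤ t, ‖dquot r (dquot r g'') τ‖ ≤ B) :
    ‖dquot k (dquot k g) t - amean k (amean k g'') t‖ ≤ 2 * B * t ^ 2 := by
  have hk : 0 < k := ht.trans_le htk
  have hg''_causal : Causal g'' := (hg_causal.of_hasDerivAt hg).of_hasDerivAt hg'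
  have hg''_zero : g'' (t - t) = 0 := hg''_causal _ (sub_self t).le
  have hdquot : ‖dquot k (dquot k g) t‖ ≤ B * t ^ 2 := by
    have hrescale : k ^ 2 * ‖dquot k (dquot k g) t‖ = t ^ 2 * ‖dquot t (dquot t g) t‖ := by
      rw [← norm_smul_of_nonneg (sq_nonneg k), ← norm_smul_of_nonneg (sq_nonneg t),
        hg_causal.sq_smul_dquot_dquot hk htk, hg_causal.sq_smul_dquot_dquot ht le_rfl]
    have hle := norm_dquot_dquot_sub_le hg hg' ht hB
    rw [hg''_zero, sub_zero] at hle
    refine le_trans (le_of_mul_le_mul_left (hrescale.trans_le ?_) (pow_pos hk 2)) hle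
    gcongr
  have hamean : ‖amean k (amean k g'') t‖ ≤ B * t ^ 2 := by
    have hle := norm_amean_amean_sub_le ht (hB t ht t le_rfl)
    rwa [hg''_zero, sub_zero, hg''_causal.amean_amean ht.le le_rfl,
      ← hg''_causal.amean_amean hk.le htk] at hle
  calc ‖dquot k (dquot k g) t - amean k (amean k g'') t‖
      ≤ ‖dquot k (dquot k g) t‖ + ‖amean k (amean k g'') t‖ := norm_sub_le _ _
    _ ≤ B * t ^ 2 + B * t ^ 2 := add_le_add hdquot hamean
    _ = 2 * B * t ^ 2 := by ring

theorem norm_dquot_dquot_sub_amean_amean_le_mul_min_sq (hg_causal : Causal g)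
    (hg : ∀ t, HasDerivAt g (g' t) t) (hg' : ∀ t, HasDerivAt g' (g'' t) t) (ht : 0 < t)
    (hk : 0 < k) (hB : ∀ r > 0, ∀ τ ≤ t, ‖dquot r (dquot r g'') τ‖ ≤ B) :
    ‖dquot k (dquot k g) t - amean k (amean k g'') t‖ ≤ 2 * B * min k t ^ 2 := by
  rcases le_total k t with hkt | htk
  · simpa only [min_eq_left hkt] using norm_dquot_dquot_sub_amean_amean_le hg hg' hk hB
  · simpa only [min_eq_right htk] using
      norm_dquot_dquot_sub_amean_amean_le_of_le hg_causal hg hg' ht htk hB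

end TrapezoidalConsistency

section DiscreteEnergy

theorem norm_le_norm_add_of_norm_sq_sub_norm_sq_le {E : Type*} [NormedAddCommGroup E] {p q : E}
    {c : ℝ} (hc : 0 ≤ c) (h : ‖p‖ ^ 2 - ‖q‖ ^ 2 ≤ c * (‖p‖ + ‖q‖)) : ‖p‖ ≤ ‖q‖ + c := by
  by_contra! hlt
  nlinarith [norm_nonneg p, norm_nonneg q]

variable {M S : Type*} [NormedAddCommGroup M] [InnerProductSpace ℝ M]
  [NormedAddCommGroup S] [InnerProductSpace ℝ S] {V : Submodule ℝ (WithLp 2 (M × S))}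
  {e u v : ℝ → WithLp 2 (M × S)} {R u' u'' : ℝ → M} {k t B : ℝ}

/-- The discrete energy state of `e`: the difference quotient of the displacement together with the
average of the strain. Its squared norm is twice the energy which the trapezoidal rule conserves. -/
def energyState (k : ℝ) (e : ℝ → WithLp 2 (M × S)) (t : ℝ) : WithLp 2 (M × S) :=
  WithLp.toLp 2 ((dquot k e t).fst, (amean k e t).snd)

theorem Causal.energyState_eq_zero (he : Causal e) (hk : 0 ≤ k) (ht : t ≤ 0) :
    energyState k e t = 0 := by
  rw [energyState, he.dquot hk t ht, he.amean hk t ht]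
  rfl

theorem norm_sq_energyState_sub (hk : k ≠ 0) (t : ℝ) :
    ‖energyState k e t‖ ^ 2 - ‖energyState k e (t - k)‖ ^ 2
      = k * ⟪dquot k e t + dquot k e (t - k),
          WithLp.toLp 2 ((dquot k (dquot k e) t).fst, (amean k (amean k e) t).snd)⟫ := by
  set p := energyState k e t
  set q := energyState k e (t - k)
  set w := dquot k e t + dquot k e (t - k)
  have hfst_add : p.fst + q.fst = w.fst := rfl
  have hfst_sub : p.fst - q.fst = k • (dquot k (dquot k e) t).fst := by
    simp [p, q, energyState, dquot, smul_smul, hk]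
  have hsnd_sub : p.snd - q.snd = (k / 2) • w.snd := by
    have hcancel : k / 2 * k⁻¹ = 2⁻¹ := by field_simp
    change (amean k e t).snd - (amean k e (t - k)).snd = (k / 2) • w.snd
    simp only [w, dquot, amean, WithLp.smul_snd, WithLp.add_snd, WithLp.sub_snd, ← smul_add,
      smul_smul, hcancel]
    module
  have hsnd_add : p.snd + q.snd = (2 : ℝ) • (amean k (amean k e) t).snd := by
    simp [p, q, energyState, amean, smul_smul]
  calc ‖p‖ ^ 2 - ‖q‖ ^ 2
      = ⟪p.fst + q.fst, p.fst - q.fst⟫ + ⟪p.snd - q.snd, p.snd + q.snd⟫ := by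
        simp only [WithLp.prod_norm_sq_eq_of_L2, inner_add_left, inner_sub_left, inner_add_right,
          inner_sub_right, real_inner_self_eq_norm_sq, real_inner_comm p.fst, real_inner_comm p.snd]
        ring
    _ = k * (⟪w.fst, (dquot k (dquot k e) t).fst⟫ + ⟪w.snd, (amean k (amean k e) t).snd⟫) := by
        rw [hfst_add, hfst_sub, hsnd_sub, hsnd_add]
        simp only [real_inner_smul_left, real_inner_smul_right]
        ring

theorem norm_energyState_le (hk : 0 < k) (he : ∀ t, e t ∈ V)
    (hR : WithLp.toLp 2 ((dquot k (dquot k e) t).fst - R t, (amean k (amean k e) t).snd) ∈ Vᗮ) :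
    ‖energyState k e t‖ ≤ ‖energyState k e (t - k)‖ + k * ‖R t‖ := by
  set w := dquot k e t + dquot k e (t - k)
  have hw : w ∈ V := V.add_mem (dquot_mem he t) (dquot_mem he (t - k))
  have hw_le : ‖w.fst‖ ≤ ‖energyState k e t‖ + ‖energyState k e (t - k)‖ :=
    (norm_add_le _ _).trans (add_le_add (WithLp.norm_fst_le _ (energyState k e t))
      (WithLp.norm_fst_le _ (energyState k e (t - k))))
  have hbalance : ⟪w, WithLp.toLp 2 ((dquot k (dquot k e) t).fst, (amean k (amean k e) t).snd)⟫
      = ⟪w.fst, R t⟫ := by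
    have horth : ⟪w.fst, (dquot k (dquot k e) t).fst - R t⟫ + ⟪w.snd, (amean k (amean k e) t).snd⟫
        = 0 := V.inner_right_of_mem_orthogonal hw hR
    change ⟪w.fst, (dquot k (dquot k e) t).fst⟫ + ⟪w.snd, (amean k (amean k e) t).snd⟫ = _
    rw [inner_sub_right] at horth
    linarith
  refine norm_le_norm_add_of_norm_sq_sub_norm_sq_le (by positivity) ?_
  calc ‖energyState k e t‖ ^ 2 - ‖energyState k e (t - k)‖ ^ 2
      = k * ⟪w.fst, R t⟫ := by rw [norm_sq_energyState_sub hk.ne', hbalance]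
    _ ≤ k * (‖w.fst‖ * ‖R t‖) := by gcongr; exact real_inner_le_norm _ _
    _ ≤ k * ((‖energyState k e t‖ + ‖energyState k e (t - k)‖) * ‖R t‖) := by gcongr
    _ = _ := by ring

/- The sharper bound on the first time step is what makes the estimate linear in `t` down to
`t = 0`. -/
theorem norm_energyState_le_mul_sq_mul (hk : 0 < k) (he : Causal e) (heV : ∀ t, e t ∈ V)
    (hR : ∀ t, WithLp.toLp 2 ((dquot k (dquot k e) t).fst - R t, (amean k (amean k e) t).snd) ∈ Vᗮ)
    (hR_le : ∀ τ ∈ Ioc 0 t, ‖R τ‖ ≤ B * min k τ ^ 2) (ht : 0 ≤ t) :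
    ‖energyState k e t‖ ≤ B * k ^ 2 * t := by
  have hstep (n : ℕ) : ∀ τ ∈ Icc 0 t, τ ≤ n * k → ‖energyState k e τ‖ ≤ B * k ^ 2 * τ := by
    have hzero {τ : ℝ} (hτ : τ ≤ 0) : ‖energyState k e τ‖ = 0 := by
      rw [he.energyState_eq_zero hk.le hτ, norm_zero]
    induction n with
    | zero =>
      intro τ hτ hτn
      obtain rfl : τ = 0 := le_antisymm (by simpa using hτn) hτ.1
      simp [hzero le_rfl]
    | succ n ih =>
      intro τ hτ hτn
      rcases hτ.1.eq_or_lt with rfl | hτ_pos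
      · simp [hzero le_rfl]
      refine (norm_energyState_le hk heV (hR τ)).trans ?_
      have hR_τ := hR_le τ ⟨hτ_pos, hτ.2⟩
      rcases le_total τ k with hτk | hkτ
      · rw [min_eq_right hτk] at hR_τ
        rw [hzero (by linarith), zero_add]
        calc k * ‖R τ‖ ≤ k * (B * τ ^ 2) := by gcongr
          _ = B * τ ^ 2 * k := mul_comm _ _
          _ ≤ B * τ ^ 2 * k * (k / τ) := by
            refine le_mul_of_one_le_right ?_ ((one_le_div hτ_pos).2 hτk)
            exact mul_nonneg ((norm_nonneg _).trans hR_τ) hk.le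
          _ = B * k ^ 2 * τ := by field_simp
      · rw [min_eq_left hkτ] at hR_τ
        push_cast at hτn
        calc ‖energyState k e (τ - k)‖ + k * ‖R τ‖
            ≤ B * k ^ 2 * (τ - k) + k * (B * k ^ 2) := by
              gcongr
              exact ih (τ - k) ⟨sub_nonneg.2 hkτ, by linarith [hτ.2]⟩ (by linarith)
          _ = B * k ^ 2 * τ := by ring
  obtain ⟨n, hn⟩ := exists_nat_ge (t / k)
  exact hstep n t ⟨ht, le_rfl⟩ ((div_le_iff₀ hk).1 hn)

/-- The trapezoidal-rule time stepping, with step `k`, of the equations in `IsWaveSolution`. -/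
structure IsTrapezoidalSolution (k : ℝ) (V : Submodule ℝ (WithLp 2 (M × S)))
    (q f u : ℝ → WithLp 2 (M × S)) : Prop where
  causal : Causal u
  sub_mem : ∀ t, u t - q t ∈ V
  residual_mem : ∀ t, WithLp.toLp 2 ((dquot k (dquot k u) t).fst, (amean k (amean k u) t).snd)
    - amean k (amean k f) t ∈ Vᗮ

theorem IsWaveSolution.norm_energyState_sub_le [CompleteSpace M] [CompleteSpace S]
    {ζ : ℕ → ℝ → WithLp 2 (M × S)} {uₖ : ℝ → WithLp 2 (M × S)}
    (h : IsWaveSolution V (ζ 0) (ζ 0) u u' u'') (hₖ : IsTrapezoidalSolution k V (ζ 0) (ζ 0) uₖ)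
    (hζ : ∀ j < 5, IsCausalPrimitive (ζ j) (ζ (j + 1))) (hk : 0 < k) (ht : 0 ≤ t) :
    ‖energyState k (fun τ => u τ - uₖ τ) t‖
      ≤ 2 * ((∫ τ in 0..t, ‖ζ 3 τ‖) + 2 * ∫ τ in 0..t, ‖ζ 5 τ‖) * k ^ 2 * t := by
  set B := (∫ τ in 0..t, ‖ζ 3 τ‖) + 2 * ∫ τ in 0..t, ‖ζ 5 τ‖
  set R : ℝ → M := fun t => (dquot k (dquot k u) t).fst - amean k (amean k u'') t
  have hZ := (hζ 0 (by norm_num)).causal.isCausalPrimitive_aInt (hζ 0 (by norm_num)).continuous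
  have hintegral_nonneg (j : ℕ) : 0 ≤ ∫ τ in 0..t, ‖ζ j τ‖ :=
    intervalIntegral.integral_nonneg ht fun τ _ => norm_nonneg _
  have hB (r : ℝ) (hr : 0 < r) (τ : ℝ) (hτ : τ ≤ t) : ‖dquot r (dquot r u'') τ‖ ≤ B := by
    rcases le_total τ 0 with hτ0 | hτ0
    · rw [(h.causal_acceleration.dquot hr.le).dquot hr.le τ hτ0, norm_zero]
      linarith [hintegral_nonneg 3, hintegral_nonneg 5]
    · refine (h.norm_dquot_dquot_acceleration_le hZ hζ hr hτ0).trans (add_le_add ?_ ?_)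
      · exact (hζ 2 (by norm_num)).integral_norm_mono hτ
      · exact mul_le_mul_of_nonneg_left ((hζ 4 (by norm_num)).integral_norm_mono hτ) zero_le_two
  refine norm_energyState_le_mul_sq_mul (R := R) (V := V) hk (h.causal.sub hₖ.causal) (fun t => ?_)
    (fun t => ?_) (fun τ hτ => ?_) ht
  · simpa using V.sub_mem (h.sub_mem t) (hₖ.sub_mem t)
  · have hmem := Vᗮ.sub_mem (amean_mem (k := k) (amean_mem (k := k) h.residual_mem) t)
      (hₖ.residual_mem t)
    simp only [amean_sub, dquot_sub, R, sub_sub_sub_cancel_right, sub_sub_sub_cancel_left,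
      WithLp.sub_fst] at hmem ⊢
    exact hmem
  · exact norm_dquot_dquot_sub_amean_amean_le_mul_min_sq h.causal_fst h.hasDerivAt_fst
      h.hasDerivAt_velocity hτ.1 hk fun r hr σ hσ => hB r hr σ (hσ.trans hτ.2)

end DiscreteEnergy

section EnergyLift

section Projection

variable {H : Type*} [NormedAddCommGroup H] [InnerProductSpace ℝ H] (V : Submodule ℝ H)
  [V.HasOrthogonalProjection]

/-- The energy-minimising lift of `q` under the load `f`: the only `z` with `z - q ∈ V` and
`z - f ∈ Vᗮ`. -/
def energyLift (q f : H) : H := Vᗮ.starProjection q + V.starProjection f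

theorem energyLift_sub_left_mem (q f : H) : energyLift V q f - q ∈ V := by
  have h : energyLift V q f - q = V.starProjection f - V.starProjection q := by
    rw [energyLift, V.starProjection_orthogonal_val]
    abel
  exact h ▸ V.sub_mem (V.starProjection_apply_mem f) (V.starProjection_apply_mem q)

theorem energyLift_sub_right_mem_orthogonal (q f : H) : energyLift V q f - f ∈ Vᗮ := by
  have h : energyLift V q f - f = Vᗮ.starProjection q - Vᗮ.starProjection f := by
    rw [energyLift, V.starProjection_orthogonal_val f]
    abel
  exact h ▸ Vᗮ.sub_mem (Vᗮ.starProjection_apply_mem q) (Vᗮ.starProjection_apply_mem f)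

theorem norm_energyLift_le (q f : H) : ‖energyLift V q f‖ ≤ ‖q‖ + ‖f‖ :=
  (norm_add_le _ _).trans (add_le_add (Vᗮ.norm_starProjection_apply_le q)
    (V.norm_starProjection_apply_le f))

variable {V} {q q' f f' : ℝ → H} {t : ℝ}

protected theorem IsCausalPrimitive.energyLift [CompleteSpace H] (hq : IsCausalPrimitive q q')
    (hf : IsCausalPrimitive f f') :
    IsCausalPrimitive (fun t => energyLift V (q t) (f t)) fun t => energyLift V (q' t) (f' t) :=
  (hq.map Vᗮ.starProjection).add (hf.map V.starProjection)

end Projection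

variable {M S : Type*} [NormedAddCommGroup M] [InnerProductSpace ℝ M]
  [NormedAddCommGroup S] [InnerProductSpace ℝ S] {V : Submodule ℝ (WithLp 2 (M × S))}
  [V.HasOrthogonalProjection] {q f u : ℝ → WithLp 2 (M × S)} {u' u'' : ℝ → M} {k t : ℝ}

protected theorem IsWaveSolution.energyLift (h : IsWaveSolution V q f u u' u'') :
    IsWaveSolution V (fun t => energyLift V (q t) (f t)) (fun t => energyLift V (q t) (f t))
      u u' u'' where
  __ := h
  sub_mem t := by
    simpa using V.sub_mem (h.sub_mem t) (energyLift_sub_left_mem V (q t) (f t))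
  residual_mem t := by
    simpa using Vᗮ.sub_mem (h.residual_mem t) (energyLift_sub_right_mem_orthogonal V (q t) (f t))

protected theorem IsTrapezoidalSolution.energyLift (h : IsTrapezoidalSolution k V q f u) :
    IsTrapezoidalSolution k V (fun t => energyLift V (q t) (f t))
      (fun t => energyLift V (q t) (f t)) u where
  __ := h
  sub_mem t := by
    simpa using V.sub_mem (h.sub_mem t) (energyLift_sub_left_mem V (q t) (f t))
  residual_mem t := by
    have hload := amean_mem (k := k) (amean_mem (k := k) fun t =>
      energyLift_sub_right_mem_orthogonal V (q t) (f t)) t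
    simp only [amean_sub] at hload
    simpa using Vᗮ.sub_mem (h.residual_mem t) hload

variable {Y Y' : Type*} [NormedAddCommGroup Y] [NormedSpace ℝ Y] [CompleteSpace Y]
  [NormedAddCommGroup Y'] [NormedSpace ℝ Y'] [CompleteSpace Y'] {β₀ β₀' : ℝ → Y} {β₁ β₁' : ℝ → Y'}

theorem IsCausalPrimitive.integral_norm_energyLift_le {H : Type*} [NormedAddCommGroup H]
    [InnerProductSpace ℝ H] [CompleteSpace H] {V : Submodule ℝ H} [V.HasOrthogonalProjection]
    (h₀ : IsCausalPrimitive β₀ β₀') (h₁ : IsCausalPrimitive β₁ β₁') (R : Y →L[ℝ] H) (r : Y' →L[ℝ] H)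
    (ht : 0 ≤ t) :
    ∫ τ in 0..t, ‖energyLift V (R (β₀' τ)) (r (β₁' τ))‖
      ≤ (‖R‖ + ‖r‖) * ((∫ τ in 0..t, ‖β₀' τ‖) + ∫ τ in 0..t, ‖β₁' τ‖) := by
  have hint₀ : IntervalIntegrable (fun τ => ‖β₀' τ‖) volume 0 t := h₀.norm.intervalIntegrable 0 t
  have hint₁ : IntervalIntegrable (fun τ => ‖β₁' τ‖) volume 0 t := h₁.norm.intervalIntegrable 0 t
  rw [← intervalIntegral.integral_add hint₀ hint₁, ← intervalIntegral.integral_const_mul]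
  refine intervalIntegral.integral_mono_on ht
    (((h₀.map R).energyLift (h₁.map r)).norm.intervalIntegrable 0 t)
    ((hint₀.add hint₁).const_mul _) fun τ _ => ?_
  calc ‖energyLift V (R (β₀' τ)) (r (β₁' τ))‖ ≤ ‖R‖ * ‖β₀' τ‖ + ‖r‖ * ‖β₁' τ‖ :=
        (norm_energyLift_le V _ _).trans (add_le_add (R.le_opNorm _) (r.le_opNorm _))
    _ ≤ (‖R‖ + ‖r‖) * (‖β₀' τ‖ + ‖β₁' τ‖) := by
        have h₀₁ := mul_nonneg (norm_nonneg R) (norm_nonneg (β₁' τ))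
        have h₁₀ := mul_nonneg (norm_nonneg r) (norm_nonneg (β₀' τ))
        linarith

theorem IsWaveSolution.norm_energyState_sub_le_Hfun [CompleteSpace M] [CompleteSpace S] {m n : ℕ}
    {uₖ : ℝ → WithLp 2 (M × S)} (R : Y →L[ℝ] WithLp 2 (M × S)) (r : Y' →L[ℝ] WithLp 2 (M × S))
    (h₀ : WP (m + 5) β₀) (h₁ : WP (n + 5) β₁)
    (h : IsWaveSolution V (fun t => R (β₀ t)) (fun t => r (β₁ t)) u u' u'')
    (hₖ : IsTrapezoidalSolution k V (fun t => R (β₀ t)) (fun t => r (β₁ t)) uₖ)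
    (hk : 0 < k) (ht : 0 ≤ t) :
    ‖energyState k (fun τ => u τ - uₖ τ) t‖ ≤ 4 * (‖R‖ + ‖r‖) * k ^ 2 * t *
      (Hfun 2 (iteratedDeriv 3 β₀) t + Hfun 2 (iteratedDeriv 3 β₁) t) := by
  set ζ : ℕ → ℝ → WithLp 2 (M × S) := fun j t =>
    energyLift V (R (iteratedDeriv j β₀ t)) (r (iteratedDeriv j β₁ t))
  have hchain₀ (j : ℕ) (hj : j < 5) := h₀.isCausalPrimitive (j := j) (by omega)
  have hchain₁ (j : ℕ) (hj : j < 5) := h₁.isCausalPrimitive (j := j) (by omega)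
  have hζ (j : ℕ) (hj : j < 5) : IsCausalPrimitive (ζ j) (ζ (j + 1)) :=
    ((hchain₀ j hj).map R).energyLift ((hchain₁ j hj).map r)
  have hζ_le (j : ℕ) (hj : j < 5) := (hchain₀ j hj).integral_norm_energyLift_le (V := V)
    (hchain₁ j hj) R r ht
  have hdata : (∫ τ in 0..t, ‖ζ 3 τ‖) + 2 * ∫ τ in 0..t, ‖ζ 5 τ‖
      ≤ 2 * (‖R‖ + ‖r‖) * (Hfun 2 (iteratedDeriv 3 β₀) t + Hfun 2 (iteratedDeriv 3 β₁) t) := by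
    have hζ_nonneg : 0 ≤ ∫ τ in 0..t, ‖ζ 3 τ‖ :=
      intervalIntegral.integral_nonneg ht fun τ _ => norm_nonneg _
    have hH := mul_le_mul_of_nonneg_left
      (add_le_add (integral_norm_add_integral_norm_le_Hfun 3 β₀ ht)
        (integral_norm_add_integral_norm_le_Hfun 3 β₁ ht))
      (add_nonneg (norm_nonneg R) (norm_nonneg r))
    linarith [hζ_le 2 (by norm_num), hζ_le 4 (by norm_num)]
  calc ‖energyState k (fun τ => u τ - uₖ τ) t‖
      ≤ 2 * ((∫ τ in 0..t, ‖ζ 3 τ‖) + 2 * ∫ τ in 0..t, ‖ζ 5 τ‖) * k ^ 2 * t :=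
        h.energyLift.norm_energyState_sub_le (ζ := ζ) hₖ.energyLift hζ hk ht
    _ ≤ 2 * (2 * (‖R‖ + ‖r‖) * (Hfun 2 (iteratedDeriv 3 β₀) t + Hfun 2 (iteratedDeriv 3 β₁) t))
          * k ^ 2 * t := by gcongr
    _ = _ := by ring

end EnergyLift

section ContinuousInverses

variable {E F H : Type*} [NormedAddCommGroup E] [NormedSpace ℝ E] [NormedAddCommGroup F]
  [NormedSpace ℝ F] [NormedAddCommGroup H] [InnerProductSpace ℝ H] [CompleteSpace H]

theorem hasLeftInverse_of_forall_norm_le [CompleteSpace E] (T : E →L[ℝ] H) (K : ℝ)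
    (hT : ∀ x, ‖x‖ ≤ K * ‖T x‖) : T.HasLeftInverse := by
  have hanti : AntilipschitzWith K.toNNReal T := T.antilipschitz_of_bound fun x =>
    (hT x).trans (mul_le_mul_of_nonneg_right (Real.le_coe_toNNReal K) (norm_nonneg _))
  have hclosed : IsClosed (T.range : Set H) := hanti.isClosed_range T.uniformContinuous
  have : CompleteSpace T.range := hclosed.completeSpace_coe
  exact .of_injective_of_isClosed_range_of_closedComplement_range hanti.injective hclosed
    ⟨T.range.orthogonalProjectionOnto, T.range.orthogonalProjectionOnto_mem_subspace_eq_self⟩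

theorem hasRightInverse_of_surjective [CompleteSpace F] (T : H →L[ℝ] F)
    (hT : Function.Surjective T) : T.HasRightInverse := by
  have : CompleteSpace T.ker := T.isClosed_ker.completeSpace_coe
  let e := T.equivProdOfSurjectiveOfIsCompl T.ker.orthogonalProjectionOnto
    (LinearMap.range_eq_top.2 hT) (LinearMap.range_eq_top.2 fun y => ⟨y, by simp⟩)
    (T.ker.ker_orthogonalProjectionOnto ▸ T.ker.isCompl_orthogonal)
  refine ⟨e.symm.toContinuousLinearMap.comp (.inl ℝ F T.ker), fun x => ?_⟩
  exact congrArg Prod.fst (e.apply_symm_apply (x, 0))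

theorem exists_forall_inner_eq (B : F →L[ℝ] H →L[ℝ] ℝ) :
    ∃ r : F →L[ℝ] H, ∀ b x, ⟪r b, x⟫ = B b x :=
  ⟨(InnerProductSpace.toDual ℝ H).symm.toContinuousLinearEquiv.toContinuousLinearMap.comp B,
    fun _ _ => InnerProductSpace.toDual_symm_apply⟩

end ContinuousInverses

section Transmission

variable {L2Ω L2Ωv L2s L2sv Hp Hm H1Ω H1s Hdiv : Type*}
  [NormedAddCommGroup L2Ω] [InnerProductSpace ℝ L2Ω]
  [NormedAddCommGroup L2Ωv] [InnerProductSpace ℝ L2Ωv]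
  [NormedAddCommGroup L2s] [InnerProductSpace ℝ L2s]
  [NormedAddCommGroup L2sv] [InnerProductSpace ℝ L2sv]
  [NormedAddCommGroup Hp] [InnerProductSpace ℝ Hp]
  [NormedAddCommGroup Hm] [InnerProductSpace ℝ Hm]
  [NormedAddCommGroup H1Ω] [NormedSpace ℝ H1Ω]
  [NormedAddCommGroup H1s] [NormedSpace ℝ H1s]
  [NormedAddCommGroup Hdiv] [NormedSpace ℝ Hdiv]
  (ι : H1Ω →L[ℝ] L2Ω) (grad : H1Ω →L[ℝ] L2Ωv) (γ : H1Ω →L[ℝ] Hp)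
  (ιs : H1s →L[ℝ] L2s) (grads : H1s →L[ℝ] L2sv) (γm γp : H1s →L[ℝ] Hp)
  (dpair : Hm →L[ℝ] Hp →L[ℝ] ℝ) (cinv : L2Ω →L[ℝ] L2Ω) (khalf : L2Ωv →L[ℝ] L2Ωv)
  (Uh : Submodule ℝ H1Ω) (Xh : Submodule ℝ Hm) (Yh : Submodule ℝ Hp)

/-- The map `(x, y) ↦ (A x, y)` into the Hilbert sum, which puts the material coefficient `A` of the
interior domain into the norm. -/
def leftWeight {E F : Type*} [NormedAddCommGroup E] [InnerProductSpace ℝ E] [NormedAddCommGroup F]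
    [InnerProductSpace ℝ F] (A : E →L[ℝ] E) : E × F →L[ℝ] WithLp 2 (E × F) :=
  (WithLp.prodContinuousLinearEquiv 2 ℝ E F).symm.toContinuousLinearMap.comp
    (A.prodMap (.id ℝ F))

theorem hasDerivAt_leftWeight {E F : Type*} [NormedAddCommGroup E] [InnerProductSpace ℝ E]
    [NormedAddCommGroup F] [InnerProductSpace ℝ F] (A : E →L[ℝ] E) {x : ℝ → E} {y : ℝ → F} {x' : E}
    {y' : F} {t : ℝ} (hx : HasDerivAt x x' t) (hy : HasDerivAt y y' t) :
    HasDerivAt (fun t => leftWeight A (x t, y t)) (leftWeight A (x', y')) t :=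
  (leftWeight (F := F) A).hasFDerivAt.comp_hasDerivAt t (hx.prodMk hy)

/-- The weighted displacement `(c⁻¹u, u⋆)` together with the weighted strain `(κ^{1/2}∇u, ∇u⋆)`. -/
def energyMap :
    H1Ω × H1s →L[ℝ] WithLp 2 (WithLp 2 (L2Ω × L2s) × WithLp 2 (L2Ωv × L2sv)) :=
  (WithLp.prodContinuousLinearEquiv 2 ℝ _ _).symm.toContinuousLinearMap.comp
    (((leftWeight cinv).comp (ι.prodMap ιs)).prod ((leftWeight khalf).comp (grad.prodMap grads)))

/-- The test space of the transmission problem: the pairs `(w, w⋆)` with `w ∈ U_h`,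
`⟦γw⋆⟧ ∈ Y_h` and `γw - γ⁺w⋆ ∈ X_h°`. -/
def testSpace : Submodule ℝ (H1Ω × H1s) where
  carrier := {w | w.1 ∈ Uh ∧ γm w.2 - γp w.2 ∈ Yh ∧ ∀ μ ∈ Xh, dpair μ (γ w.1 - γp w.2) = 0}
  zero_mem' := by simp
  add_mem' {w w'} hw hw' := by
    refine ⟨Uh.add_mem hw.1 hw'.1, ?_, fun μ hμ => ?_⟩
    · simpa [add_sub_add_comm] using Yh.add_mem hw.2.1 hw'.2.1
    · rw [Prod.fst_add, Prod.snd_add, map_add, map_add, add_sub_add_comm, map_add, hw.2.2 μ hμ,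
        hw'.2.2 μ hμ, add_zero]
  smul_mem' a w hw := by
    refine ⟨Uh.smul_mem a hw.1, ?_, fun μ hμ => ?_⟩
    · simpa [smul_sub] using Yh.smul_mem a hw.2.1
    · rw [Prod.smul_fst, Prod.smul_snd, map_smul, map_smul, ← smul_sub, map_smul, hw.2.2 μ hμ,
        smul_zero]

/-- The closure of the energy states of the test space. -/
def energySpace : Submodule ℝ (WithLp 2 (WithLp 2 (L2Ω × L2s) × WithLp 2 (L2Ωv × L2sv))) :=
  ((testSpace γ γm γp dpair Uh Xh Yh).map
    (energyMap ι grad ιs grads cinv khalf).toLinearMap).topologicalClosure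

instance [CompleteSpace L2Ω] [CompleteSpace L2s] [CompleteSpace L2Ωv] [CompleteSpace L2sv] :
    (energySpace ι grad γ ιs grads γm γp dpair cinv khalf Uh Xh Yh).HasOrthogonalProjection :=
  have : CompleteSpace (energySpace ι grad γ ιs grads γm γp dpair cinv khalf Uh Xh Yh) :=
    (Submodule.isClosed_topologicalClosure _).completeSpace_coe
  inferInstance

variable {ι grad γ ιs grads γm γp dpair cinv khalf Uh Xh Yh}

theorem energyMap_mem_energySpace {w : H1Ω × H1s} (hw : w ∈ testSpace γ γm γp dpair Uh Xh Yh) :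
    energyMap ι grad ιs grads cinv khalf w ∈
      energySpace ι grad γ ιs grads γm γp dpair cinv khalf Uh Xh Yh :=
  Submodule.le_topologicalClosure _ (Submodule.mem_map_of_mem hw)

theorem mem_orthogonal_energySpace
    {x : WithLp 2 (WithLp 2 (L2Ω × L2s) × WithLp 2 (L2Ωv × L2sv))}
    (hx : ∀ w ∈ testSpace γ γm γp dpair Uh Xh Yh,
      ⟪x, energyMap ι grad ιs grads cinv khalf w⟫ = 0) :
    x ∈ (energySpace ι grad γ ιs grads γm γp dpair cinv khalf Uh Xh Yh)ᗮ := by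
  rw [energySpace, Submodule.orthogonal_closure, Submodule.mem_orthogonal']
  rintro _ ⟨w, hw, rfl⟩
  exact hx w hw

variable {ιdiv : Hdiv →L[ℝ] L2sv} {divs : Hdiv →L[ℝ] L2s} {γνm γνp : Hdiv →L[ℝ] Hm}
  {cinv2 : L2Ω →L[ℝ] L2Ω} {kap : L2Ωv →L[ℝ] L2Ωv}

/-- Green's formula turns the tested interior equation and the flux transmission conditions into a
single variational equation. -/
theorem inner_energyMap_eq_of_transmission
    (hGreen : ∀ (v : Hdiv) (w : H1s),
      ⟪divs v, ιs w⟫ + ⟪ιdiv v, grads w⟫ = dpair (γνm v) (γm w) - dpair (γνp v) (γp w))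
    (hcinv : ∀ x y : L2Ω, ⟪cinv2 x, y⟫ = ⟪cinv x, cinv y⟫)
    (hκhalf : ∀ x y : L2Ωv, ⟪kap x, y⟫ = ⟪khalf x, khalf y⟫)
    {a : L2Ω} {v : Hdiv} {p : H1Ω × H1s} {b : Hm}
    (hflux : ιdiv v = grads p.2)
    (heq : ∀ w ∈ Uh, ⟪cinv2 a, ι w⟫ + ⟪kap (grad p.1), grad w⟫ + dpair (γνm v - γνp v) (γ w)
      = dpair b (γ w))
    (hjump : γνm v - γνp v ∈ Xh) (hpolar : ∀ ψ ∈ Yh, dpair (γνm v) ψ = 0)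
    {w : H1Ω × H1s} (hw : w ∈ testSpace γ γm γp dpair Uh Xh Yh) :
    ⟪WithLp.toLp 2 (leftWeight cinv (a, divs v), (energyMap ι grad ιs grads cinv khalf p).snd),
      energyMap ι grad ιs grads cinv khalf w⟫ = dpair b (γ w.1) := by
  have hinner : ⟪WithLp.toLp 2 (leftWeight cinv (a, divs v),
        (energyMap ι grad ιs grads cinv khalf p).snd), energyMap ι grad ιs grads cinv khalf w⟫
      = (⟪cinv a, cinv (ι w.1)⟫ + ⟪divs v, ιs w.2⟫)
        + (⟪khalf (grad p.1), khalf (grad w.1)⟫ + ⟪grads p.2, grads w.2⟫) := rfl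
  have hXh := hw.2.2 _ hjump
  have hYh := hpolar _ hw.2.1
  have hUh := heq w.1 hw.1
  have hgreen := hGreen v w.2
  rw [hinner, ← hcinv, ← hκhalf, ← hflux]
  simp only [map_sub, sub_apply] at hXh hYh hUh
  linarith

variable {R : Hp →L[ℝ] WithLp 2 (WithLp 2 (L2Ω × L2s) × WithLp 2 (L2Ωv × L2sv))}
  {r : Hm →L[ℝ] WithLp 2 (WithLp 2 (L2Ω × L2s) × WithLp 2 (L2Ωv × L2sv))}

theorem energyMap_sub_mem_energySpace
    (hR : ∀ a, ∃ w, (γm w = -a ∧ γp w = -a) ∧ R a = energyMap ι grad ιs grads cinv khalf (0, w))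
    {p : H1Ω × H1s} {a : Hp} (hUh : p.1 ∈ Uh) (hYh : γm p.2 - γp p.2 ∈ Yh)
    (hXh : ∀ μ ∈ Xh, dpair μ (γ p.1 - γp p.2 - a) = 0) :
    energyMap ι grad ιs grads cinv khalf p - R a ∈
      energySpace ι grad γ ιs grads γm γp dpair cinv khalf Uh Xh Yh := by
  obtain ⟨w, ⟨hwm, hwp⟩, hRa⟩ := hR a
  rw [hRa, ← map_sub]
  refine energyMap_mem_energySpace ⟨by simpa using hUh, by simpa [hwm, hwp] using hYh,
    fun μ hμ => ?_⟩
  have hgap : γ (p - (0, w)).1 - γp (p - (0, w)).2 = γ p.1 - γp p.2 - a := by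
    simp only [Prod.fst_sub, Prod.snd_sub, sub_zero, map_sub, hwp]
    abel
  rw [hgap, hXh μ hμ]

theorem Solves210.isWaveSolution
    (hGreen : ∀ (v : Hdiv) (w : H1s),
      ⟪divs v, ιs w⟫ + ⟪ιdiv v, grads w⟫ = dpair (γνm v) (γm w) - dpair (γνp v) (γp w))
    (hcinv : ∀ x y : L2Ω, ⟪cinv2 x, y⟫ = ⟪cinv x, cinv y⟫)
    (hκhalf : ∀ x y : L2Ωv, ⟪kap x, y⟫ = ⟪khalf x, khalf y⟫)
    (hR : ∀ a, ∃ w, (γm w = -a ∧ γp w = -a) ∧ R a = energyMap ι grad ιs grads cinv khalf (0, w))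
    (hr : ∀ b w, ⟪r b, energyMap ι grad ιs grads cinv khalf w⟫ = dpair b (γ w.1))
    {β0 : ℝ → Hp} {β1 : ℝ → Hm} {uh : ℝ → H1Ω} {us : ℝ → H1s} {wst : ℝ → Hdiv}
    (h : Solves210 ι grad γ ιs grads γm γp ιdiv divs γνm γνp dpair cinv2 kap Uh Xh Yh β0 β1
      uh us wst) :
    IsWaveSolution (M := WithLp 2 (L2Ω × L2s)) (S := WithLp 2 (L2Ωv × L2sv))
      (energySpace ι grad γ ιs grads γm γp dpair cinv khalf Uh Xh Yh)
      (fun t => R (β0 t)) (fun t => r (β1 t))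
      (fun t => energyMap ι grad ιs grads cinv khalf (uh t, us t))
      (fun t => leftWeight cinv (deriv (fun τ => ι (uh τ)) t, deriv (fun τ => ιs (us τ)) t))
      (fun t => leftWeight cinv (iteratedDeriv 2 (fun τ => ι (uh τ)) t, divs (wst t))) := by
  obtain ⟨hUh, huh, hus, -, hC2, hC2s, hcont, hconts, hflux, heq, hwave, hYh, hjump, hpolar, hXh⟩ :=
    h
  have hcausal : Causal fun t => (uh t, us t) := fun t ht => Prod.ext (huh t ht) (hus t ht)
  have hderiv (t : ℝ) := hasDerivAt_iteratedDeriv hC2 zero_lt_two t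
  have hderivs (t : ℝ) := hasDerivAt_iteratedDeriv hC2s zero_lt_two t
  have hderiv₂ (t : ℝ) := hasDerivAt_iteratedDeriv hC2 one_lt_two t
  have hderivs₂ (t : ℝ) := hasDerivAt_iteratedDeriv hC2s one_lt_two t
  simp only [iteratedDeriv_zero, zero_add, iteratedDeriv_one, one_add_one_eq_two, hwave]
    at hderiv hderivs hderiv₂ hderivs₂
  exact
    { causal := hcausal.map (energyMap ι grad ιs grads cinv khalf)
      continuous := (energyMap ι grad ιs grads cinv khalf).continuous.comp
        (hcont.prodMk hconts)
      hasDerivAt_fst := fun t =>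
        hasDerivAt_leftWeight cinv (hderiv t) (hderivs t)
      hasDerivAt_velocity := fun t =>
        hasDerivAt_leftWeight cinv (hderiv₂ t) (hderivs₂ t)
      sub_mem := fun t => energyMap_sub_mem_energySpace hR (hUh t) (hYh t) (hXh t)
      residual_mem := fun t => mem_orthogonal_energySpace fun w hw => by
        rw [inner_sub_left, hr, inner_energyMap_eq_of_transmission hGreen hcinv hκhalf (hflux t)
          (heq t) (hjump t) (hpolar t) hw, sub_self] }

theorem Solves43.isTrapezoidalSolution {k : ℝ}
    (hGreen : ∀ (v : Hdiv) (w : H1s),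
      ⟪divs v, ιs w⟫ + ⟪ιdiv v, grads w⟫ = dpair (γνm v) (γm w) - dpair (γνp v) (γp w))
    (hcinv : ∀ x y : L2Ω, ⟪cinv2 x, y⟫ = ⟪cinv x, cinv y⟫)
    (hκhalf : ∀ x y : L2Ωv, ⟪kap x, y⟫ = ⟪khalf x, khalf y⟫)
    (hR : ∀ a, ∃ w, (γm w = -a ∧ γp w = -a) ∧ R a = energyMap ι grad ιs grads cinv khalf (0, w))
    (hr : ∀ b w, ⟪r b, energyMap ι grad ιs grads cinv khalf w⟫ = dpair b (γ w.1))
    {β0 : ℝ → Hp} {β1 : ℝ → Hm} {ukh : ℝ → H1Ω} {uks : ℝ → H1s} {wkst : ℝ → Hdiv}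
    (h : Solves43 ι grad γ ιs grads γm γp ιdiv divs γνm γνp dpair cinv2 kap Uh Xh Yh k β0 β1
      ukh uks wkst) :
    IsTrapezoidalSolution (M := WithLp 2 (L2Ω × L2s)) (S := WithLp 2 (L2Ωv × L2sv)) k
      (energySpace ι grad γ ιs grads γm γp dpair cinv khalf Uh Xh Yh)
      (fun t => R (β0 t)) (fun t => r (β1 t))
      (fun t => energyMap ι grad ιs grads cinv khalf (ukh t, uks t)) := by
  obtain ⟨hUh, huh, hus, -, hflux, heq, hwave, hYh, hjump, hpolar, hXh⟩ := h
  have hcausal : Causal fun t => (ukh t, uks t) := fun t ht => Prod.ext (huh t ht) (hus t ht)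
  refine ⟨hcausal.map (energyMap ι grad ιs grads cinv khalf),
    fun t => energyMap_sub_mem_energySpace hR (hUh t) (hYh t) (hXh t),
    fun t => mem_orthogonal_energySpace fun w hw => ?_⟩
  set p : ℝ → H1Ω × H1s := fun τ => (ukh τ, uks τ)
  set v := amean k (amean k wkst) t
  have hflux_mean : ιdiv v = grads (amean k (amean k p) t).2 := by
    have hmean := congrArg (fun g => amean k (amean k g) t) (funext hflux)
    simp only [amean_map] at hmean
    exact hmean
  have hstate : WithLp.toLp 2
      ((dquot k (dquot k fun τ => energyMap ι grad ιs grads cinv khalf (p τ)) t).fst,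
        (amean k (amean k fun τ => energyMap ι grad ιs grads cinv khalf (p τ)) t).snd)
      = WithLp.toLp 2 (leftWeight cinv (dquot k (dquot k fun τ => ι (ukh τ)) t, divs v),
        (energyMap ι grad ιs grads cinv khalf (amean k (amean k p) t)).snd) := by
    have hdiv : divs v = dquot k (dquot k fun τ => ιs (uks τ)) t := by
      simp only [hwave, amean_map, v]
    rw [hdiv]
    simp only [dquot_map, amean_map]
    rfl
  have hjump_map : (fun τ => γνm (wkst τ) - γνp (wkst τ)) = fun τ => (γνm - γνp) (wkst τ) := rfl
  rw [inner_sub_left, hstate]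
  simp only [amean_map]
  rw [hr, sub_eq_zero]
  refine inner_energyMap_eq_of_transmission hGreen hcinv hκhalf hflux_mean (fun w hw => ?_) ?_ ?_ hw
  · have htested := heq t w hw
    simp only [hjump_map, amean_map] at htested
    exact htested
  · have hmean := amean_mem (k := k) (amean_mem (k := k) hjump) t
    simp only [hjump_map, amean_map] at hmean
    exact hmean
  · exact fun ψ hψ => amean_mem (amean_mem (V := (dpair.flip ψ ∘L γνm).ker) (hpolar · ψ hψ)) t

theorem norm_le_inv_sqrt_mul_norm {E : Type*} [NormedAddCommGroup E] [InnerProductSpace ℝ E]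
    {A A₂ : E →L[ℝ] E} {c : ℝ} (hA : ∀ x y, ⟪A₂ x, y⟫ = ⟪A x, A y⟫) (hc : 0 < c)
    (hpos : ∀ x, c * ‖x‖ ^ 2 ≤ ⟪A₂ x, x⟫) (x : E) : ‖x‖ ≤ (√c)⁻¹ * ‖A x‖ := by
  rw [le_inv_mul_iff₀ (Real.sqrt_pos.2 hc)]
  refine le_of_sq_le_sq ?_ (norm_nonneg _)
  rw [mul_pow, Real.sq_sqrt hc.le, ← real_inner_self_eq_norm_sq (A x), ← hA]
  exact hpos x

theorem norm_fst_le_mul_norm_leftWeight {E F : Type*} [NormedAddCommGroup E]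
    [InnerProductSpace ℝ E] [NormedAddCommGroup F] [InnerProductSpace ℝ F] {A : E →L[ℝ] E} {K : ℝ}
    (hK : 0 ≤ K) (hA : ∀ x, ‖x‖ ≤ K * ‖A x‖) (x : E) (y : F) :
    ‖x‖ ≤ K * ‖leftWeight A (x, y)‖ :=
  (hA x).trans (mul_le_mul_of_nonneg_left (WithLp.norm_fst_le _ (leftWeight A (x, y))) hK)

theorem norm_snd_le_norm_leftWeight {E F : Type*} [NormedAddCommGroup E] [InnerProductSpace ℝ E]
    [NormedAddCommGroup F] [InnerProductSpace ℝ F] (A : E →L[ℝ] E) (x : E) (y : F) :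
    ‖y‖ ≤ ‖leftWeight A (x, y)‖ :=
  WithLp.norm_snd_le _ (leftWeight A (x, y))

section Bounds

variable {K₁ K₂ : ℝ}

theorem norm_le_mul_norm_energyMap
    (hH1Ωnorm : ∀ u : H1Ω, ‖u‖ ^ 2 = ‖ι u‖ ^ 2 + ‖grad u‖ ^ 2)
    (hH1snorm : ∀ u : H1s, ‖u‖ ^ 2 = ‖ιs u‖ ^ 2 + ‖grads u‖ ^ 2)
    (hK₁ : 0 ≤ K₁) (hK₂ : 0 ≤ K₂) (hcinv : ∀ x, ‖x‖ ≤ K₁ * ‖cinv x‖)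
    (hkhalf : ∀ x, ‖x‖ ≤ K₂ * ‖khalf x‖) (p : H1Ω × H1s) :
    ‖p‖ ≤ (K₁ + K₂ + 2) * ‖energyMap ι grad ιs grads cinv khalf p‖ := by
  have hadd {a b c : ℝ} (hb : 0 ≤ b) (hc : 0 ≤ c) (h : a ^ 2 = b ^ 2 + c ^ 2) : a ≤ b + c :=
    le_of_sq_le_sq (by nlinarith [mul_nonneg hb hc]) (add_nonneg hb hc)
  set N := ‖energyMap ι grad ιs grads cinv khalf p‖
  have hfst : ‖leftWeight cinv (ι p.1, ιs p.2)‖ ≤ N :=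
    WithLp.norm_fst_le _ (energyMap ι grad ιs grads cinv khalf p)
  have hsnd : ‖leftWeight khalf (grad p.1, grads p.2)‖ ≤ N :=
    WithLp.norm_snd_le _ (energyMap ι grad ιs grads cinv khalf p)
  have hN : 0 ≤ N := norm_nonneg _
  refine max_le ?_ ?_
  · calc ‖p.1‖ ≤ ‖ι p.1‖ + ‖grad p.1‖ :=
          hadd (norm_nonneg _) (norm_nonneg _) (hH1Ωnorm p.1)
      _ ≤ K₁ * N + K₂ * N := by
          gcongr
          · exact (norm_fst_le_mul_norm_leftWeight hK₁ hcinv _ (ιs p.2)).trans (by gcongr)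
          · exact (norm_fst_le_mul_norm_leftWeight hK₂ hkhalf _ (grads p.2)).trans (by gcongr)
      _ ≤ (K₁ + K₂ + 2) * N := by linarith
  · calc ‖p.2‖ ≤ ‖ιs p.2‖ + ‖grads p.2‖ :=
          hadd (norm_nonneg _) (norm_nonneg _) (hH1snorm p.2)
      _ ≤ N + N := by
          gcongr
          · exact (norm_snd_le_norm_leftWeight cinv (ι p.1) _).trans hfst
          · exact (norm_snd_le_norm_leftWeight khalf (grad p.1) _).trans hsnd
      _ ≤ (K₁ + K₂ + 2) * N := by linarith [mul_nonneg hK₁ hN, mul_nonneg hK₂ hN]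

theorem sum_norm_le_mul_norm_energyState (hK₁ : 0 ≤ K₁) (hK₂ : 0 ≤ K₂)
    (hcinv : ∀ x, ‖x‖ ≤ K₁ * ‖cinv x‖) (hkhalf : ∀ x, ‖x‖ ≤ K₂ * ‖khalf x‖) {k t : ℝ}
    {x : ℝ → H1Ω} {y : ℝ → H1s} :
    ‖dquot k (fun τ => ι (x τ)) t‖ + ‖kap (grad (amean k x t))‖ + ‖dquot k (fun τ => ιs (y τ)) t‖
        + ‖grads (amean k y t)‖
      ≤ (K₁ + ‖kap‖ * K₂ + 2)
        * ‖energyState k (fun τ => energyMap ι grad ιs grads cinv khalf (x τ, y τ)) t‖ := by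
  set e := energyState k (fun τ => energyMap ι grad ιs grads cinv khalf (x τ, y τ)) t with he
  have hfst : leftWeight cinv (dquot k (fun τ => ι (x τ)) t, dquot k (fun τ => ιs (y τ)) t)
      = e.fst := by
    rw [he, energyState, dquot_map, dquot_map, dquot_map]
    rfl
  have hsnd : leftWeight khalf (grad (amean k x t), grads (amean k y t)) = e.snd := by
    rw [he, energyState, amean_map]
    rfl
  have hfst_le : ‖e.fst‖ ≤ ‖e‖ := WithLp.norm_fst_le _ e
  have hsnd_le : ‖e.snd‖ ≤ ‖e‖ := WithLp.norm_snd_le _ e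
  have hdisp := norm_fst_le_mul_norm_leftWeight hK₁ hcinv (dquot k (fun τ => ι (x τ)) t)
    (dquot k (fun τ => ιs (y τ)) t)
  have hdisps := norm_snd_le_norm_leftWeight cinv (dquot k (fun τ => ι (x τ)) t)
    (dquot k (fun τ => ιs (y τ)) t)
  have hgrad := norm_fst_le_mul_norm_leftWeight hK₂ hkhalf (grad (amean k x t))
    (grads (amean k y t))
  have hgrads := norm_snd_le_norm_leftWeight khalf (grad (amean k x t)) (grads (amean k y t))
  rw [hfst] at hdisp hdisps
  rw [hsnd] at hgrad hgrads
  have hflux : ‖kap (grad (amean k x t))‖ ≤ ‖kap‖ * (K₂ * ‖e‖) :=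
    (kap.le_opNorm _).trans (by gcongr; exact hgrad.trans (by gcongr))
  linarith [mul_le_mul_of_nonneg_left hfst_le hK₁]

end Bounds

section Lifts

variable [CompleteSpace L2Ω] [CompleteSpace L2Ωv] [CompleteSpace L2s] [CompleteSpace L2sv]

theorem exists_traceLift [CompleteSpace Hp]
    (hT : (energyMap ι grad ιs grads cinv khalf).HasLeftInverse)
    (htrace_surj : ∀ a b : Hp, ∃ w : H1s, γm w = a ∧ γp w = b) :
    ∃ R : Hp →L[ℝ] WithLp 2 (WithLp 2 (L2Ω × L2s) × WithLp 2 (L2Ωv × L2sv)),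
      ∀ a, ∃ w, (γm w = -a ∧ γp w = -a) ∧ R a = energyMap ι grad ιs grads cinv khalf (0, w) := by
  have hsurj : Function.Surjective
      (((γm.prod γp).comp (.snd ℝ H1Ω H1s)).comp hT.leftInverse) := fun ⟨a, b⟩ => by
    obtain ⟨w, hwm, hwp⟩ := htrace_surj a b
    exact ⟨energyMap ι grad ιs grads cinv khalf (0, w), by
      simp [hT.leftInverse_leftInverse (0, w), hwm, hwp]⟩
  have hinv : (γm.prod γp).HasRightInverse :=
    (hasRightInverse_of_surjective _ hsurj).of_comp.of_comp
  refine ⟨(energyMap ι grad ιs grads cinv khalf).comp ((ContinuousLinearMap.inr ℝ H1Ω H1s).comp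
    (hinv.rightInverse.comp (-(ContinuousLinearMap.id ℝ Hp).prod (.id ℝ Hp)))),
    fun a => ⟨hinv.rightInverse (-a, -a), ?_, rfl⟩⟩
  exact Prod.ext_iff.1 (hinv.rightInverse_rightInverse (-a, -a))

theorem exists_loadLift (γ : H1Ω →L[ℝ] Hp) (dpair : Hm →L[ℝ] Hp →L[ℝ] ℝ)
    (hT : (energyMap ι grad ιs grads cinv khalf).HasLeftInverse) :
    ∃ r : Hm →L[ℝ] WithLp 2 (WithLp 2 (L2Ω × L2s) × WithLp 2 (L2Ωv × L2sv)),
      ∀ b w, ⟪r b, energyMap ι grad ιs grads cinv khalf w⟫ = dpair b (γ w.1) := by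
  obtain ⟨r, hr⟩ := exists_forall_inner_eq (dpair.bilinearComp (.id ℝ Hm)
    ((γ.comp (.fst ℝ H1Ω H1s)).comp hT.leftInverse))
  refine ⟨r, fun b w => (hr _ _).trans ?_⟩
  simp [hT.leftInverse_leftInverse w]

end Lifts

end Transmission

/- The data have separate orders because `WP 6` is not contained in `WP 5`: integrability of the
highest derivative is required on all of `ℝ`. -/
theorem fully_discrete_energy_estimate_general
    {L2Ω L2Ωv L2s L2sv Hp Hm H1Ω H1s Hdiv : Type*}
    [NormedAddCommGroup L2Ω] [InnerProductSpace ℝ L2Ω] [CompleteSpace L2Ω]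
    [NormedAddCommGroup L2Ωv] [InnerProductSpace ℝ L2Ωv] [CompleteSpace L2Ωv]
    [NormedAddCommGroup L2s] [InnerProductSpace ℝ L2s] [CompleteSpace L2s]
    [NormedAddCommGroup L2sv] [InnerProductSpace ℝ L2sv] [CompleteSpace L2sv]
    [NormedAddCommGroup Hp] [InnerProductSpace ℝ Hp] [CompleteSpace Hp]
    [NormedAddCommGroup Hm] [InnerProductSpace ℝ Hm] [CompleteSpace Hm]
    [NormedAddCommGroup H1Ω] [NormedSpace ℝ H1Ω] [CompleteSpace H1Ω]
    [NormedAddCommGroup H1s] [NormedSpace ℝ H1s] [CompleteSpace H1s]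
    [NormedAddCommGroup Hdiv] [NormedSpace ℝ Hdiv]
    (ι : H1Ω →L[ℝ] L2Ω) (grad : H1Ω →L[ℝ] L2Ωv) (γ : H1Ω →L[ℝ] Hp)
    (ιs : H1s →L[ℝ] L2s) (grads : H1s →L[ℝ] L2sv) (γm γp : H1s →L[ℝ] Hp)
    (ιdiv : Hdiv →L[ℝ] L2sv) (divs : Hdiv →L[ℝ] L2s) (γνm γνp : Hdiv →L[ℝ] Hm)
    (dpair : Hm →L[ℝ] Hp →L[ℝ] ℝ)
    (cinv cinv2 : L2Ω →L[ℝ] L2Ω) (kap khalf : L2Ωv →L[ℝ] L2Ωv)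
    (hGreen : ∀ (v : Hdiv) (w : H1s),
      ⟪divs v, ιs w⟫ + ⟪ιdiv v, grads w⟫
        = dpair (γνm v) (γm w) - dpair (γνp v) (γp w))
    (htrace_surj : ∀ a b : Hp, ∃ w : H1s, γm w = a ∧ γp w = b)
    (hH1Ωnorm : ∀ u : H1Ω, ‖u‖ ^ 2 = ‖ι u‖ ^ 2 + ‖grad u‖ ^ 2)
    (hH1snorm : ∀ u : H1s, ‖u‖ ^ 2 = ‖ιs u‖ ^ 2 + ‖grads u‖ ^ 2)
    (hcinv : ∀ x y : L2Ω, ⟪cinv2 x, y⟫ = ⟪cinv x, cinv y⟫)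
    (hκhalf : ∀ x y : L2Ωv, ⟪kap x, y⟫ = ⟪khalf x, khalf y⟫)
    (c0 κ0 : ℝ) (hc0 : 0 < c0) (hκ0 : 0 < κ0)
    (hc2pos : ∀ x : L2Ω, c0 * ‖x‖ ^ 2 ≤ ⟪cinv2 x, x⟫)
    (hκpos : ∀ x : L2Ωv, κ0 * ‖x‖ ^ 2 ≤ ⟪kap x, x⟫) :
    ∃ C : ℝ, 0 < C ∧
      ∀ (Uh : Submodule ℝ H1Ω) (Xh : Submodule ℝ Hm) (Yh : Submodule ℝ Hp),
        ∀ k : ℝ, 0 < k →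
        ∀ (m n : ℕ) (β0 : ℝ → Hp) (β1 : ℝ → Hm), WP (m + 5) β0 → WP (n + 5) β1 →
        ∀ (uh : ℝ → H1Ω) (us : ℝ → H1s) (wst : ℝ → Hdiv),
          Solves210 ι grad γ ιs grads γm γp ιdiv divs γνm γνp dpair cinv2 kap
            Uh Xh Yh β0 β1 uh us wst →
        ∀ (ukh : ℝ → H1Ω) (uks : ℝ → H1s) (wkst : ℝ → Hdiv),
          Solves43 ι grad γ ιs grads γm γp ιdiv divs γνm γνp dpair cinv2 kap
            Uh Xh Yh k β0 β1 ukh uks wkst →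
        ∀ t : ℝ, 0 ≤ t →
          ‖dquot k (fun τ => ι (uh τ) - ι (ukh τ)) t‖
            + ‖kap (grad (amean k (fun τ => uh τ - ukh τ) t))‖
            + ‖dquot k (fun τ => ιs (us τ) - ιs (uks τ)) t‖
            + ‖grads (amean k (fun τ => us τ - uks τ) t)‖
          ≤ C * k ^ 2 * t * (Hfun 2 (iteratedDeriv 3 β0) t + Hfun 2 (iteratedDeriv 3 β1) t) := by
  have hcinv_le := norm_le_inv_sqrt_mul_norm hcinv hc0 hc2pos
  have hkhalf_le := norm_le_inv_sqrt_mul_norm hκhalf hκ0 hκpos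
  have hT : (energyMap ι grad ιs grads cinv khalf).HasLeftInverse :=
    hasLeftInverse_of_forall_norm_le _ _ (norm_le_mul_norm_energyMap hH1Ωnorm hH1snorm
      (by positivity) (by positivity) hcinv_le hkhalf_le)
  obtain ⟨R, hR⟩ := exists_traceLift hT htrace_surj
  obtain ⟨r, hr⟩ := exists_loadLift γ dpair hT
  set K := (√c0)⁻¹ + ‖kap‖ * (√κ0)⁻¹ + 2
  refine ⟨K * (4 * (‖R‖ + ‖r‖)) + 1, by positivity, fun Uh Xh Yh k hk m n β0 β1 hβ0 hβ1 uh us wst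
    hsemi ukh uks wkst hfull t ht => ?_⟩
  have hsol := hsemi.isWaveSolution hGreen hcinv hκhalf hR hr
  have hsolₖ := hfull.isTrapezoidalSolution hGreen hcinv hκhalf hR hr
  have hstate := hsol.norm_energyState_sub_le_Hfun R r hβ0 hβ1 hsolₖ hk ht
  have hsum := sum_norm_le_mul_norm_energyState (ι := ι) (grad := grad) (ιs := ιs) (grads := grads)
    (kap := kap) (by positivity) (by positivity) hcinv_le hkhalf_le (k := k) (t := t)
    (x := fun τ => uh τ - ukh τ) (y := fun τ => us τ - uks τ)
  set B := Hfun 2 (iteratedDeriv 3 β0) t + Hfun 2 (iteratedDeriv 3 β1) t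
  have hB : 0 ≤ B := add_nonneg (Hfun_nonneg _ _ ht) (Hfun_nonneg _ _ ht)
  simp only [map_sub, ← Prod.mk_sub_mk] at hsum
  calc _ ≤ K * (4 * (‖R‖ + ‖r‖) * k ^ 2 * t * B) := hsum.trans (by gcongr)
    _ ≤ (K * (4 * (‖R‖ + ‖r‖)) + 1) * k ^ 2 * t * B := by
        have : 0 ≤ k ^ 2 * t * B := by positivity
        linarith

/-- Fully discrete energy-norm estimate (Theorem 4.2, estimate (4.5)) for trapezoidal-rule time
discretization of the semidiscrete problem (2.10). -/
theorem fully_discrete_energy_estimate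
    {L2Ω L2Ωv L2s L2sv Hp Hm H1Ω H1s Hdiv : Type*}
    [NormedAddCommGroup L2Ω] [InnerProductSpace ℝ L2Ω] [CompleteSpace L2Ω]
    [NormedAddCommGroup L2Ωv] [InnerProductSpace ℝ L2Ωv] [CompleteSpace L2Ωv]
    [NormedAddCommGroup L2s] [InnerProductSpace ℝ L2s] [CompleteSpace L2s]
    [NormedAddCommGroup L2sv] [InnerProductSpace ℝ L2sv] [CompleteSpace L2sv]
    [NormedAddCommGroup Hp] [InnerProductSpace ℝ Hp] [CompleteSpace Hp]
    [NormedAddCommGroup Hm] [InnerProductSpace ℝ Hm] [CompleteSpace Hm]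
    [NormedAddCommGroup H1Ω] [NormedSpace ℝ H1Ω] [CompleteSpace H1Ω]
    [NormedAddCommGroup H1s] [NormedSpace ℝ H1s] [CompleteSpace H1s]
    [NormedAddCommGroup Hdiv] [NormedSpace ℝ Hdiv] [CompleteSpace Hdiv]
    (ι : H1Ω →L[ℝ] L2Ω) (grad : H1Ω →L[ℝ] L2Ωv) (γ : H1Ω →L[ℝ] Hp)
    (ιs : H1s →L[ℝ] L2s) (grads : H1s →L[ℝ] L2sv) (γm γp : H1s →L[ℝ] Hp)
    (ιdiv : Hdiv →L[ℝ] L2sv) (divs : Hdiv →L[ℝ] L2s) (γνm γνp : Hdiv →L[ℝ] Hm)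
    (dpair : Hm →L[ℝ] Hp →L[ℝ] ℝ)
    (cinv cinv2 : L2Ω →L[ℝ] L2Ω) (kap khalf : L2Ωv →L[ℝ] L2Ωv)
    (hGreen : ∀ (v : Hdiv) (w : H1s),
      ⟪divs v, ιs w⟫ + ⟪ιdiv v, grads w⟫
        = dpair (γνm v) (γm w) - dpair (γνp v) (γp w))
    (htrace_surj : ∀ a b : Hp, ∃ w : H1s, γm w = a ∧ γp w = b)
    (hH1Ωnorm : ∀ u : H1Ω, ‖u‖ ^ 2 = ‖ι u‖ ^ 2 + ‖grad u‖ ^ 2)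
    (hH1snorm : ∀ u : H1s, ‖u‖ ^ 2 = ‖ιs u‖ ^ 2 + ‖grads u‖ ^ 2)
    (hHdivnorm : ∀ v : Hdiv, ‖v‖ ^ 2 = ‖ιdiv v‖ ^ 2 + ‖divs v‖ ^ 2)
    (hcinv : ∀ x y : L2Ω, ⟪cinv2 x, y⟫ = ⟪cinv x, cinv y⟫)
    (hκhalf : ∀ x y : L2Ωv, ⟪kap x, y⟫ = ⟪khalf x, khalf y⟫)
    (c0 κ0 : ℝ) (hc0 : 0 < c0) (hκ0 : 0 < κ0)
    (hc2pos : ∀ x : L2Ω, c0 * ‖x‖ ^ 2 ≤ ⟪cinv2 x, x⟫)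
    (hκpos : ∀ x : L2Ωv, κ0 * ‖x‖ ^ 2 ≤ ⟪kap x, x⟫) :
    ∃ C : ℝ, 0 < C ∧
      ∀ (Uh : Submodule ℝ H1Ω) (Xh : Submodule ℝ Hm) (Yh : Submodule ℝ Hp),
        FiniteDimensional ℝ Uh → FiniteDimensional ℝ Xh → FiniteDimensional ℝ Yh →
        ∀ k : ℝ, 0 < k →
        ∀ (β0 : ℝ → Hp) (β1 : ℝ → Hm), WP 6 β0 → WP 5 β1 →
        ∀ (uh : ℝ → H1Ω) (us : ℝ → H1s) (wst : ℝ → Hdiv),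
          Solves210 ι grad γ ιs grads γm γp ιdiv divs γνm γνp dpair cinv2 kap
            Uh Xh Yh β0 β1 uh us wst →
        ∀ (ukh : ℝ → H1Ω) (uks : ℝ → H1s) (wkst : ℝ → Hdiv),
          Solves43 ι grad γ ιs grads γm γp ιdiv divs γνm γνp dpair cinv2 kap
            Uh Xh Yh k β0 β1 ukh uks wkst →
        ∀ t : ℝ, 0 ≤ t →
          ‖dquot k (fun τ => ι (uh τ) - ι (ukh τ)) t‖
            + ‖kap (grad (amean k (fun τ => uh τ - ukh τ) t))‖
            + ‖dquot k (fun τ => ιs (us τ) - ιs (uks τ)) t‖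
            + ‖grads (amean k (fun τ => us τ - uks τ) t)‖
          ≤ C * k ^ 2 * t * (Hfun 3 (iteratedDeriv 3 β0) t + Hfun 2 (iteratedDeriv 3 β1) t) := by
  obtain ⟨C, hC, hbound⟩ := fully_discrete_energy_estimate_general ι grad γ ιs grads γm γp ιdiv divs
    γνm γνp dpair cinv cinv2 kap khalf hGreen htrace_surj hH1Ωnorm hH1snorm hcinv hκhalf c0 κ0 hc0
    hκ0 hc2pos hκpos
  exact ⟨C, hC, fun Uh Xh Yh _ _ _ k hk β0 β1 hβ0 hβ1 uh us wst hsemi ukh uks wkst hfull t ht =>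
    (hbound Uh Xh Yh k hk 1 0 β0 β1 hβ0 hβ1 uh us wst hsemi ukh uks wkst hfull t ht).trans
      (by gcongr; exact Hfun_mono (by norm_num) _ ht)⟩
end
end
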